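/- arXiv:1801.09169 — 2 statements merged into one kernel-verified Lean document; each statement's English description precedes it below -/
import Mathlib

section
/- Let Λ = KQ/I be a finite-dimensional algebra over an algebraically closed field with J² = 0, and let d be a dimension vector. For d-dimensional semisimple sequences S = (S_0, S_1) and S̃ = (S̃_0, S̃_1), the inclusion Rep S̃ ⊆ closure(Rep S) holds if and only if S_0 ⊆ S̃_0 and S*_0 ⊆ S̃*_0, where S*_0 and S̃*_0 denote the generic socles of the modules in Rep S and in Rep S̃, respectively, and ⊆ means componentwise inequality of dimension vectors of semisimple modules. In particular, the irreducible components of Rep_d(Λ) are precisely the closures of those Rep S for which the pair (S_0, S*_0) is minimal in the image of the map x ↦ (Top M_x, soc M_x) on Rep_d(Λ), ordered by componentwise inclusion. -/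
open Finset

/-! # Varieties of representations of a quiver with relations: basic setup -/

/-- The Zariski topology on the affine space `ι → K`: it is generated by the basic open
sets `D(p) = {x | p(x) ≠ 0}`, where `p` ranges over multivariate polynomials. -/
def zariskiTopology (ι K : Type) [CommSemiring K] : TopologicalSpace (ι → K) :=
  TopologicalSpace.generateFrom
    {U | ∃ p : MvPolynomial ι K, U = {x | MvPolynomial.eval x p ≠ 0}}

/-- A finite quiver `Q`: vertices `Fin n`, arrows `Fin numArrows` with source and
target maps. -/
structure QuiverData where
  n : ℕ
  numArrows : ℕ
  src : Fin numArrows → Fin n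
  tgt : Fin numArrows → Fin n

namespace QuiverData

variable (Q : QuiverData) (d : Fin Q.n → ℕ) (K : Type) [Field K]

/-- Index of the coordinates of the affine space of `d`-dimensional representations:
for each arrow `a` a matrix entry index in `Fin (d (tgt a)) × Fin (d (src a))`. -/
abbrev Coords := Σ a : Fin Q.numArrows, Fin (d (Q.tgt a)) × Fin (d (Q.src a))

/-- The affine space of `d`-dimensional representations of `Q`:
a point `x` assigns to each arrow `a` a `d (tgt a) × d (src a)` matrix over `K`. -/
abbrev RepSpace := Coords Q d → K

/-- `RepSpace` carries the Zariski topology. -/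
noncomputable instance instRepTop : TopologicalSpace (RepSpace Q d K) :=
  zariskiTopology (Coords Q d) K

/-- The underlying `K`-vector space `⊕ᵢ K^{dᵢ}` of any `d`-dimensional representation. -/
abbrev Carrier := (Σ i : Fin Q.n, Fin (d i)) → K

/-- The projection onto the component of the `i`-th vertex (action of the primitive
idempotent `eᵢ`). -/
def proj (i : Fin Q.n) : Carrier Q d K →ₗ[K] Carrier Q d K where
  toFun m := fun jv => if jv.1 = i then m jv else 0
  map_add' u v := by
    funext jv; by_cases h : jv.1 = i <;> simp [h]
  map_smul' c u := by
    funext jv; by_cases h : jv.1 = i <;> simp [h]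

/-- The action of the arrow `a` on the carrier space of the representation `x`. -/
noncomputable def arrowMap (x : RepSpace Q d K) (a : Fin Q.numArrows) :
    Carrier Q d K →ₗ[K] Carrier Q d K where
  toFun m := fun jv =>
    if h : jv.1 = Q.tgt a then
      ∑ w : Fin (d (Q.src a)), x ⟨a, (Fin.cast (congrArg d h) jv.2, w)⟩ * m ⟨Q.src a, w⟩
    else 0
  map_add' u v := by
    funext jv
    by_cases h : jv.1 = Q.tgt a <;> simp [h, mul_add, Finset.sum_add_distrib]
  map_smul' c u := by
    funext jv
    by_cases h : jv.1 = Q.tgt a <;>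
      simp [h, Finset.mul_sum, mul_comm, mul_left_comm, mul_assoc]

/-- The action of a word `w = [a_k, …, a_1]` of arrows on the representation `x`
(the arrow `a_1` acts first; non-composable words act as `0`). -/
noncomputable def wordMap (x : RepSpace Q d K) (w : List (Fin Q.numArrows)) :
    Module.End K (Carrier Q d K) :=
  (w.map fun a => (arrowMap Q d K x a : Module.End K (Carrier Q d K))).prod

/-- The submodule `J^l · M_x` of the module `M_x`: the sum of the images of all words of
arrows of length `l` (for an admissible ideal, the radical acts through the arrows). -/
noncomputable def radPow (x : RepSpace Q d K) (l : ℕ) : Submodule K (Carrier Q d K) :=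
  ⨆ w : {w : List (Fin Q.numArrows) // w.length = l},
    LinearMap.range (wordMap Q d K x w.1)

/-- The socle series of `M_x`: `socPow x l = soc_l(M_x)`. -/
noncomputable def socPow (x : RepSpace Q d K) : ℕ → Submodule K (Carrier Q d K)
  | 0 => ⨅ a, LinearMap.ker (arrowMap Q d K x a)
  | (l+1) => ⨅ a, (socPow x l).comap (arrowMap Q d K x a)

/-- The dimension, at the vertex `i`, of a (vertex-graded) subspace `N`. -/
noncomputable def vdim (N : Submodule K (Carrier Q d K)) (i : Fin Q.n) : ℕ :=
  Module.finrank K (N.map (proj Q d K i))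

/-- The radical layering `S(M_x) = (M/JM, JM/J²M, …, J^L M/J^{L+1} M)` of the module `M_x`,
recorded through the dimension vectors of its semisimple layers. -/
noncomputable def radLayering (L : ℕ) (x : RepSpace Q d K) :
    Fin (L+1) → Fin Q.n → ℕ :=
  fun l i => vdim Q d K (radPow Q d K x l) i - vdim Q d K (radPow Q d K x (l+1)) i

/-- The socle layering `S*(M_x) = (soc₀M, soc₁M/soc₀M, …)` of the module `M_x`, recorded
through the dimension vectors of its semisimple layers. -/
noncomputable def socLayering (L : ℕ) (x : RepSpace Q d K) :
    Fin (L+1) → Fin Q.n → ℕ :=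
  fun l i => vdim Q d K (socPow Q d K x l) i -
    (if (l : ℕ) = 0 then 0 else vdim Q d K (socPow Q d K x ((l : ℕ) - 1)) i)

end QuiverData

/-- The dominance order on semisimple sequences (recorded as sequences of dimension
vectors): `dominates S S'` means `S ≤ S'`, i.e. `⊕_{j≤l} S_j ⊆ ⊕_{j≤l} S'_j` for all `l`. -/
def dominates {n L : ℕ} (S S' : Fin (L+1) → Fin n → ℕ) : Prop :=
  ∀ (l : Fin (L+1)) (i : Fin n),
    ∑ j ∈ Finset.univ.filter (fun j => j ≤ l), S j i ≤
      ∑ j ∈ Finset.univ.filter (fun j => j ≤ l), S' j i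

/-- A semisimple sequence has dimension vector `d` if its layers' dimension vectors sum
to `d`. -/
def hasDimVec {n L : ℕ} (S : Fin (L+1) → Fin n → ℕ) (d : Fin n → ℕ) : Prop :=
  ∀ i, ∑ l, S l i = d i

namespace QuiverData

variable (Q : QuiverData) (d : Fin Q.n → ℕ) (K : Type) [Field K]

/-- Evaluation of a formal noncommutative polynomial in the vertices (`Sum.inl`) and
arrows (`Sum.inr`) of `Q` on the representation `x`; an element of the path algebra `KQ`
is represented by such a polynomial. -/
noncomputable def evalRel (x : RepSpace Q d K) :
    FreeAlgebra K (Fin Q.n ⊕ Fin Q.numArrows) →ₐ[K] Module.End K (Carrier Q d K) :=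
  FreeAlgebra.lift K
    (Sum.elim (fun i => (proj Q d K i : Module.End K (Carrier Q d K)))
      (fun a => (arrowMap Q d K x a : Module.End K (Carrier Q d K))))

/-- The affine variety `Rep_d(Λ)` for `Λ = KQ/I`, where the ideal `I` is generated by the
set `R` of relations: the set of points of `RepSpace` annihilating every relation. -/
def RepVar (R : Set (FreeAlgebra K (Fin Q.n ⊕ Fin Q.numArrows))) :
    Set (RepSpace Q d K) :=
  {x | ∀ r ∈ R, evalRel Q d K x r = 0}

/-- The affine variety `Rep_d(Λ)` for the truncated path algebra
`Λ = KQ/⟨all paths of length L+1⟩`. -/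
def TruncRepVar (L : ℕ) : Set (RepSpace Q d K) :=
  {x | ∀ w : List (Fin Q.numArrows), w.length = L + 1 → wordMap Q d K x w = 0}

/-- A submodule of `M_x`, i.e. a subspace stable under the arrows and the vertex
idempotents. -/
def Stable (x : RepSpace Q d K) (N : Submodule K (Carrier Q d K)) : Prop :=
  (∀ a, N.map (arrowMap Q d K x a) ≤ N) ∧ ∀ i, N.map (proj Q d K i) ≤ N

/-- A submodule `N` of `M_x` is indecomposable (as a module). -/
def IndecompSub (x : RepSpace Q d K) (N : Submodule K (Carrier Q d K)) : Prop :=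
  N ≠ ⊥ ∧ ∀ N₁ N₂ : Submodule K (Carrier Q d K),
    Stable Q d K x N₁ → Stable Q d K x N₂ → N₁ ≤ N → N₂ ≤ N →
    N₁ ⊔ N₂ = N → N₁ ⊓ N₂ = ⊥ → N₁ = ⊥ ∨ N₂ = ⊥

/-- The module `M_x` is indecomposable. -/
def IndecompRep (x : RepSpace Q d K) : Prop :=
  IndecompSub Q d K x ⊤

/-- The module `M_x` is uniserial: its submodules form a chain. -/
def UniserialRep (x : RepSpace Q d K) : Prop :=
  ∀ N₁ N₂ : Submodule K (Carrier Q d K),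
    Stable Q d K x N₁ → Stable Q d K x N₂ → N₁ ≤ N₂ ∨ N₂ ≤ N₁

/-- `M_x` decomposes as a direct sum of `s` indecomposable submodules whose dimension
vectors are `D 0, …, D (s-1)`. -/
def DecompWith (x : RepSpace Q d K) (s : ℕ) (D : Fin s → Fin Q.n → ℕ) : Prop :=
  ∃ N : Fin s → Submodule K (Carrier Q d K),
    (∀ r, Stable Q d K x (N r)) ∧
    (∀ r, Disjoint (N r) (⨆ t, ⨆ (_ : t ≠ r), N t)) ∧
    (⨆ r, N r) = ⊤ ∧
    (∀ r, IndecompSub Q d K x (N r)) ∧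
    ∀ r i, vdim Q d K (N r) i = D r i

/-- A homomorphism of representations `M_x → M_y` (for possibly different dimension
vectors): a linear map commuting with the arrow actions and the vertex projections. -/
def RepHom (dx dy : Fin Q.n → ℕ) (x : RepSpace Q dx K) (y : RepSpace Q dy K)
    (φ : Carrier Q dx K →ₗ[K] Carrier Q dy K) : Prop :=
  (∀ a, φ ∘ₗ arrowMap Q dx K x a = arrowMap Q dy K y a ∘ₗ φ) ∧
  ∀ i, φ ∘ₗ proj Q dx K i = proj Q dy K i ∘ₗ φ

/-- The submodule `N` of `M_x` is isomorphic, as a representation, to `M_y`. -/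
def SubrepIso (dy : Fin Q.n → ℕ) (x : RepSpace Q d K)
    (N : Submodule K (Carrier Q d K)) (y : RepSpace Q dy K) : Prop :=
  ∃ φ : Carrier Q d K →ₗ[K] Carrier Q dy K,
    N ⊓ LinearMap.ker φ = ⊥ ∧ N.map φ = ⊤ ∧
    (∀ a, ∀ m ∈ N, φ (arrowMap Q d K x a m) = arrowMap Q dy K y a (φ m)) ∧
    (∀ i, ∀ m ∈ N, φ (proj Q d K i m) = proj Q dy K i (φ m))

/-- The representations `M_x` and `M_y` are isomorphic; the isomorphism classes are
exactly the orbits of the `GL(d)`-action. -/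
def IsoRep (x y : RepSpace Q d K) : Prop :=
  ∃ φ : Carrier Q d K ≃ₗ[K] Carrier Q d K,
    (∀ a m, φ (arrowMap Q d K x a m) = arrowMap Q d K y a (φ m)) ∧
    ∀ i m, φ (proj Q d K i m) = proj Q d K i (φ m)

/-- The `GL(d)`-orbit of the point `x`, i.e. the set of points encoding modules
isomorphic to `M_x`. -/
def orbitSet (x : RepSpace Q d K) : Set (RepSpace Q d K) :=
  {y | IsoRep Q d K x y}

/-- Given a family `P` of varieties `Rep_dv(Λ)` (one for every dimension vector `dv`),
`Ext¹_Λ(M_x, M_y) = 0`: every extension `0 → M_y → E → M_x → 0` of `Λ`-modules splits. -/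
def Ext1Zero (P : ∀ dv : Fin Q.n → ℕ, Set (RepSpace Q dv K))
    (dx dy : Fin Q.n → ℕ) (x : RepSpace Q dx K) (y : RepSpace Q dy K) : Prop :=
  ∀ z ∈ P (fun i => dx i + dy i),
    ∀ (ι : Carrier Q dy K →ₗ[K] Carrier Q (fun i => dx i + dy i) K)
      (π : Carrier Q (fun i => dx i + dy i) K →ₗ[K] Carrier Q dx K),
      RepHom Q K dy (fun i => dx i + dy i) y z ι →
      RepHom Q K (fun i => dx i + dy i) dx z x π →
      Function.Injective ι → Function.Surjective π →
      LinearMap.ker π = LinearMap.range ι →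
      ∃ σ : Carrier Q dx K →ₗ[K] Carrier Q (fun i => dx i + dy i) K,
        RepHom Q K dx (fun i => dx i + dy i) x z σ ∧ π ∘ₗ σ = LinearMap.id

/-- The direct sum `C₁ ⊕ ⋯ ⊕ C_s` of subvarieties `C_r ⊆ Rep_{D r}(Λ)`: the set of
points `x ∈ Rep_d(Λ)` whose module decomposes as `M_x ≅ ⊕_r M^{(r)}` with `M^{(r)}`
encoded by a point of `C_r`. -/
def DirectSumSet (s : ℕ) (D : Fin s → Fin Q.n → ℕ)
    (Cs : ∀ r : Fin s, Set (RepSpace Q (D r) K)) : Set (RepSpace Q d K) :=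
  {x | ∃ N : Fin s → Submodule K (Carrier Q d K),
    (∀ r, Stable Q d K x (N r)) ∧
    (∀ r, Disjoint (N r) (⨆ t, ⨆ (_ : t ≠ r), N t)) ∧
    (⨆ r, N r) = ⊤ ∧
    ∀ r, ∃ y ∈ Cs r, SubrepIso Q d K (D r) x (N r) y}

/-- The endomorphism space `End_Λ(M_x)` of the module `M_x`. -/
def endSpace (x : RepSpace Q d K) :
    Submodule K (Carrier Q d K →ₗ[K] Carrier Q d K) where
  carrier := {φ | RepHom Q K d d x x φ}
  add_mem' := by
    intro φ ψ hφ hψ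
    exact ⟨fun a => by rw [LinearMap.add_comp, LinearMap.comp_add, hφ.1 a, hψ.1 a],
      fun i => by rw [LinearMap.add_comp, LinearMap.comp_add, hφ.2 i, hψ.2 i]⟩
  zero_mem' := by
    exact ⟨fun a => by simp, fun i => by simp⟩
  smul_mem' := by
    intro c φ hφ
    exact ⟨fun a => by rw [LinearMap.smul_comp, LinearMap.comp_smul, hφ.1 a],
      fun i => by rw [LinearMap.smul_comp, LinearMap.comp_smul, hφ.2 i]⟩

/-- A word of arrows is a (composable) path when read in function-composition order. -/
def IsPathWord (w : List (Fin Q.numArrows)) : Prop :=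
  List.Chain' (fun a b => Q.src a = Q.tgt b) w

/-- The quiver `Q` has no oriented cycles. -/
def Acyclic : Prop :=
  ∀ (a : Fin Q.numArrows) (w : List (Fin Q.numArrows)),
    IsPathWord Q (a :: w) →
      Q.tgt a ≠ Q.src ((a :: w).getLast (List.cons_ne_nil a w))

/-- A filtration `M_x = F 0 ⊇ F 1 ⊇ ⋯ ⊇ F (L+1) = 0` by submodules which is governed by
the semisimple sequence `S`: each layer `F l / F (l+1)` is semisimple, isomorphic to `S l`. -/
def Governed (L : ℕ) (x : RepSpace Q d K) (S : Fin (L+1) → Fin Q.n → ℕ)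
    (F : Fin (L+2) → Submodule K (Carrier Q d K)) : Prop :=
  F 0 = ⊤ ∧ F (Fin.last (L+1)) = ⊥ ∧
  (∀ l : Fin (L+1), F l.succ ≤ F l.castSucc) ∧
  (∀ (l : Fin (L+2)) (i : Fin Q.n), (F l).map (proj Q d K i) ≤ F l) ∧
  (∀ (l : Fin (L+1)) (a : Fin Q.numArrows),
      (F l.castSucc).map (arrowMap Q d K x a) ≤ F l.succ) ∧
  ∀ (l : Fin (L+1)) (i : Fin Q.n),
      vdim Q d K (F l.castSucc) i = S l i + vdim Q d K (F l.succ) i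

/-- `Filt S`: the set of points whose module has a filtration governed by `S`. -/
def FiltSet (L : ℕ) (S : Fin (L+1) → Fin Q.n → ℕ) : Set (RepSpace Q d K) :=
  {x | ∃ F, Governed Q d K L x S F}

/-- `Γ(M_x)`: the number of semisimple sequences which are realizable (i.e. occur as the
radical layering of a module in the variety `P`) and which govern some filtration of `M_x`. -/
noncomputable def gammaCount (L : ℕ) (P : Set (RepSpace Q d K))
    (x : RepSpace Q d K) : ℕ :=
  Set.ncard {S : Fin (L+1) → Fin Q.n → ℕ |
    (∃ y ∈ P, radLayering Q d K L y = S) ∧ ∃ F, Governed Q d K L x S F}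

/-- `Sstar` is the generic (= minimal, attained) socle layering of the modules in `W`. -/
def GenSoc (L : ℕ) (W : Set (RepSpace Q d K))
    (Sstar : Fin (L+1) → Fin Q.n → ℕ) : Prop :=
  (∀ x ∈ W, dominates Sstar (socLayering Q d K L x)) ∧
  ∃ x ∈ W, socLayering Q d K L x = Sstar

end QuiverData

namespace QuiverData

variable (Q : QuiverData)

/-- The `i`-th entry of the row vector `e·A` (over `ℤ`), where `A` is the adjacency
matrix of `Q`: the sum of `e (src a)` over all arrows `a` ending at `i`. -/
def inflowZ (e : Fin Q.n → ℤ) (i : Fin Q.n) : ℤ :=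
  ∑ a ∈ Finset.univ.filter (fun a => Q.tgt a = i), e (Q.src a)

/-- The `i`-th entry of the row vector `e·B` (over `ℤ`), where `B` is the transpose of
the adjacency matrix of `Q`. -/
def outflowZ (e : Fin Q.n → ℤ) (i : Fin Q.n) : ℤ :=
  ∑ a ∈ Finset.univ.filter (fun a => Q.src a = i), e (Q.tgt a)

/-- Partial sums `t⁽⁰⁾ + ⋯ + t⁽ˡ⁾` of the recursion
`t⁽⁰⁾ = sup{0, d − d·A}`, `t⁽ˡ⁺¹⁾ = sup{0, (d − ∑_{k≤l} t⁽ᵏ⁾) − (d − ∑_{k≤l} t⁽ᵏ⁾)·A}`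
(computed componentwise). -/
def cumLayer (dz : Fin Q.n → ℤ) : ℕ → Fin Q.n → ℤ
  | 0 => fun i => max 0 (dz i - inflowZ Q dz i)
  | (l+1) => fun i =>
      cumLayer dz l i +
        max 0 ((dz i - cumLayer dz l i) -
          inflowZ Q (fun j => dz j - cumLayer dz l j) i)

/-- The positive part `∑ᵢ eᵢ fᵢ` of the Euler form of `Q`. -/
def eulerHomPart (e f : Fin Q.n → ℕ) : ℕ := ∑ i, e i * f i

/-- The negative part `∑_{α} e_{src α} f_{tgt α}` of the Euler form of `Q`, so that
`⟨e, f⟩ = eulerHomPart e f − eulerExtPart e f`. -/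
def eulerExtPart (e f : Fin Q.n → ℕ) : ℕ :=
  ∑ a, e (Q.src a) * f (Q.tgt a)

end QuiverData

/-- The quiver with a single vertex and `r` loops. -/
def QuiverData.loopQuiver (r : ℕ) : QuiverData :=
  ⟨1, r, fun _ => 0, fun _ => 0⟩

namespace QuiverData

variable (Q : QuiverData) (d : Fin Q.n → ℕ) (K : Type) [Field K]

/-- The variety `Rep_d(Λ)` for `Λ = KQ/⟨Rels⟩`, regarded as a topological space with the
(subspace) Zariski topology. -/
abbrev GenV (Rels : Set (FreeAlgebra K (Fin Q.n ⊕ Fin Q.numArrows))) :=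
  {y : RepSpace Q d K // y ∈ RepVar Q d K Rels}

/-- The variety `Rep_d(Λ)` for the truncated path algebra
`Λ = KQ/⟨paths of length L+1⟩`, regarded as a topological space. -/
abbrev TruncV (L : ℕ) := {y : RepSpace Q d K // y ∈ TruncRepVar Q d K L}

end QuiverData

/-- The dimension vector of the socle of the module `M_x` (CONTEXT for Statement 12). -/
noncomputable def socDim (Q : QuiverData) (d : Fin Q.n → ℕ) (K : Type) [Field K]
    (x : QuiverData.RepSpace Q d K) : Fin Q.n → ℕ :=
  fun i => QuiverData.vdim Q d K (QuiverData.socPow Q d K x 0) i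

/-- The dimension vector of the top `M_x/JM_x` of the module `M_x` (for `J² = 0` this is
the 0-th entry of the radical layering). -/
noncomputable def topDim (Q : QuiverData) (d : Fin Q.n → ℕ) (K : Type) [Field K]
    (x : QuiverData.RepSpace Q d K) : Fin Q.n → ℕ :=
  fun i => QuiverData.radLayering Q d K 1 x 0 i

/-- `U0` is the generic socle (componentwise minimal socle dimension vector, attained)
of the modules in `W`. -/
noncomputable def IsGenericSocle (Q : QuiverData) (d : Fin Q.n → ℕ) (K : Type) [Field K]
    (W : Set (QuiverData.RepSpace Q d K)) (U0 : Fin Q.n → ℕ) : Prop :=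
  (∀ x ∈ W, U0 ≤ socDim Q d K x) ∧ ∃ x ∈ W, socDim Q d K x = U0

/-! ## Linear algebra -/

theorem exists_nilp_move {K V : Type*} [Field K] [AddCommGroup V] [Module K V]
    [FiniteDimensional K V] (R R' : Submodule K V)
    (h : Module.finrank K R = Module.finrank K R') :
    ∃ N : V →ₗ[K] V, (∀ v, N (N v) = 0) ∧ (∀ v ∈ R, v + N v ∈ R') ∧
      (∀ v ∈ R', v - N v ∈ R) := by
  -- complements of the intersection
  obtain ⟨A, hA1, hA2⟩ : ∃ A : Submodule K V, (R ⊓ R') ⊓ A = ⊥ ∧ (R ⊓ R') ⊔ A = R := by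
    obtain ⟨A, hA⟩ := exists_isCompl (R ⊓ R')
    refine ⟨A ⊓ R, ?_, ?_⟩
    · rw [← inf_assoc, hA.inf_eq_bot, bot_inf_eq]
    · rw [← sup_inf_assoc_of_le A (inf_le_left : R ⊓ R' ≤ R), hA.sup_eq_top, top_inf_eq]
  obtain ⟨A', hA'1, hA'2⟩ : ∃ A : Submodule K V, (R ⊓ R') ⊓ A = ⊥ ∧ (R ⊓ R') ⊔ A = R' := by
    obtain ⟨A, hA⟩ := exists_isCompl (R ⊓ R')
    refine ⟨A ⊓ R', ?_, ?_⟩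
    · rw [← inf_assoc, hA.inf_eq_bot, bot_inf_eq]
    · rw [← sup_inf_assoc_of_le A (inf_le_right : R ⊓ R' ≤ R'), hA.sup_eq_top, top_inf_eq]
  have hAR : A ≤ R := hA2 ▸ le_sup_right
  have hAR' : A' ≤ R' := hA'2 ▸ le_sup_right
  have hfr : Module.finrank K A = Module.finrank K A' := by
    have h1 := Submodule.finrank_sup_add_finrank_inf_eq (R ⊓ R') A
    have h2 := Submodule.finrank_sup_add_finrank_inf_eq (R ⊓ R') A'
    rw [hA1, hA2] at h1
    rw [hA'1, hA'2] at h2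
    simp only [finrank_bot] at h1 h2
    omega
  let e : A ≃ₗ[K] A' := LinearEquiv.ofFinrankEq _ _ hfr
  have proj_ex : ∀ (B C : Submodule K V), B ⊓ C = ⊥ → ∃ p : V →ₗ[K] B,
      (∀ b : B, p b = b) ∧ ∀ c ∈ C, p c = 0 := by
    intro B C hBC
    have hinj : LinearMap.ker (C.mkQ ∘ₗ B.subtype) = ⊥ := by
      rw [LinearMap.ker_eq_bot']
      intro b hb
      have : (b : V) ∈ C := by simpa using hb
      have : (b : V) ∈ B ⊓ C := ⟨b.2, this⟩
      rw [hBC] at this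
      simpa using this
    obtain ⟨g, hg⟩ := LinearMap.exists_leftInverse_of_injective _ hinj
    refine ⟨g ∘ₗ C.mkQ, fun b => ?_, fun c hc => ?_⟩
    · exact LinearMap.congr_fun hg b
    · have : C.mkQ c = 0 := by simpa using hc
      rw [LinearMap.comp_apply, this, map_zero]
  have d1 : A ⊓ R' = ⊥ := by
    rw [eq_bot_iff, ← hA1]
    exact fun v hv => ⟨⟨hAR hv.1, hv.2⟩, hv.1⟩
  have d2 : A' ⊓ R = ⊥ := by
    rw [eq_bot_iff, ← hA'1]
    exact fun v hv => ⟨⟨hv.2, hAR' hv.1⟩, hv.1⟩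
  obtain ⟨p1, hp1, hp1'⟩ := proj_ex A R' d1
  obtain ⟨p2, hp2, hp2'⟩ := proj_ex A' R d2
  let q : V →ₗ[K] A := p1 + e.symm.toLinearMap ∘ₗ p2
  have qA : ∀ a : A, q a = a := fun a => by
    simp [q, hp1, hp2' _ (hAR a.2)]
  have qA' : ∀ a : A', q a = e.symm a := fun a => by
    simp [q, hp2, hp1' _ (hAR' a.2)]
  have qD : ∀ v ∈ R ⊓ R', q v = 0 := fun v hv => by
    simp [q, hp1' _ hv.2, hp2' _ hv.1]
  let N : V →ₗ[K] V := (A'.subtype ∘ₗ e.toLinearMap - A.subtype) ∘ₗ q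
  have hN : ∀ v, N v = (e (q v) : V) - (q v : V) := fun v => by simp [N]
  refine ⟨N, fun v => ?_, fun v hv => ?_, fun v hv => ?_⟩
  · rw [hN (N v), hN v, map_sub, qA, qA']
    simp
  · rw [← hA2] at hv
    obtain ⟨y, hy, z, hz, rfl⟩ := Submodule.mem_sup.1 hv
    have := qA ⟨z, hz⟩
    simp only at this
    rw [hN, map_add, qD y hy, this, zero_add]
    have : y + z + ((e ⟨z, hz⟩ : V) - z) = y + (e ⟨z, hz⟩ : V) := by abel
    rw [this]
    exact add_mem hy.2 (hAR' (e ⟨z, hz⟩).2)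
  · rw [← hA'2] at hv
    obtain ⟨y, hy, z, hz, rfl⟩ := Submodule.mem_sup.1 hv
    have := qA' ⟨z, hz⟩
    simp only at this
    rw [hN, map_add, qD y hy, this, zero_add, LinearEquiv.apply_symm_apply]
    have : y + z - (z - (e.symm ⟨z, hz⟩ : V)) = y + (e.symm ⟨z, hz⟩ : V) := by abel
    rw [this]
    exact add_mem hy.1 (hAR (e.symm ⟨z, hz⟩).2)

theorem exists_between_finrank {K V : Type*} [Field K] [AddCommGroup V] [Module K V]
    [FiniteDimensional K V] (A B : Submodule K V) (hAB : A ≤ B) (k : ℕ)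
    (h1 : Module.finrank K A ≤ k) (h2 : k ≤ Module.finrank K B) :
    ∃ R : Submodule K V, A ≤ R ∧ R ≤ B ∧ Module.finrank K R = k := by
  induction k, h1 using Nat.le_induction with
  | base => exact ⟨A, le_rfl, hAB, rfl⟩
  | succ k hk ih =>
    obtain ⟨R, hR1, hR2, hR3⟩ := ih (by omega)
    have hlt : R < B := lt_of_le_of_ne hR2 (by rintro rfl; omega)
    obtain ⟨v, hvB, hvR⟩ := SetLike.exists_of_lt hlt
    have hle : R ⊔ (K ∙ v) ≤ B := sup_le hR2 (by simpa using hvB)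
    refine ⟨R ⊔ (K ∙ v), hR1.trans le_sup_left, hle, ?_⟩
    have hv0 : v ≠ 0 := by rintro rfl; exact hvR R.zero_mem
    have hinf : R ⊓ (K ∙ v) = ⊥ := by
      rw [eq_bot_iff]
      rintro w ⟨hw1, hw2⟩
      obtain ⟨c, rfl⟩ := Submodule.mem_span_singleton.1 hw2
      by_cases hc : c = 0
      · simp [hc]
      · exact absurd ((R.smul_mem_iff hc).1 hw1) hvR
    have := Submodule.finrank_sup_add_finrank_inf_eq R (K ∙ v)
    rw [hinf, finrank_bot, finrank_span_singleton hv0] at this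
    omega

theorem exists_id_factor {K E F : Type*} [Field K] [AddCommGroup E] [Module K E]
    [AddCommGroup F] [Module K F] [FiniteDimensional K F]
    (T : E →ₗ[K] F) (k : ℕ) (h : k ≤ Module.finrank K (LinearMap.range T)) :
    ∃ (φ : F →ₗ[K] (Fin k → K)) (ψ : (Fin k → K) →ₗ[K] E), φ ∘ₗ T ∘ₗ ψ = LinearMap.id := by
  obtain ⟨v, hv⟩ := exists_linearIndependent_of_le_finrank h
  choose u hu using fun j => (v j).2
  have hli : LinearIndependent K (fun j => T (u j)) := by
    have := hv.map' (LinearMap.range T).subtype (Submodule.ker_subtype _)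
    have e : (LinearMap.range T).subtype ∘ v = fun j => T (u j) := by
      funext j
      simp [hu]
    exact e ▸ this
  let ψ : (Fin k → K) →ₗ[K] E := Fintype.linearCombination K u
  have hinj : LinearMap.ker (T ∘ₗ ψ) = ⊥ := by
    rw [LinearMap.ker_eq_bot']
    intro c hc
    have : ∑ j, c j • T (u j) = 0 := by
      simpa [ψ, Fintype.linearCombination_apply] using hc
    funext j
    exact Fintype.linearIndependent_iff.1 hli c this j
  obtain ⟨φ, hφ⟩ := LinearMap.exists_leftInverse_of_injective _ hinj
  exact ⟨φ, ψ, hφ⟩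

/-! ## Zariski topology -/

theorem zariski_basis {ι K : Type} [Field K] {U : Set (ι → K)}
    (hU : @IsOpen _ (zariskiTopology ι K) U) {x : ι → K} (hx : x ∈ U) :
    ∃ p : MvPolynomial ι K, MvPolynomial.eval x p ≠ 0 ∧
      ∀ y, MvPolynomial.eval y p ≠ 0 → y ∈ U := by
  induction hU with
  | basic s hs =>
    obtain ⟨p, rfl⟩ := hs
    exact ⟨p, hx, fun y hy => hy⟩
  | univ => exact ⟨1, by simp, fun y _ => trivial⟩
  | inter s t _ _ ihs iht =>
    obtain ⟨p, hp, hp'⟩ := ihs hx.1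
    obtain ⟨q, hq, hq'⟩ := iht hx.2
    refine ⟨p * q, by simp [hp, hq], fun y hy => ?_⟩
    rw [map_mul] at hy
    exact ⟨hp' y (left_ne_zero_of_mul hy), hq' y (right_ne_zero_of_mul hy)⟩
  | sUnion S _ ih =>
    obtain ⟨s, hs, hxs⟩ := hx
    obtain ⟨p, hp, hp'⟩ := ih s hs hxs
    exact ⟨p, hp, fun y hy => ⟨s, hs, hp' y hy⟩⟩

/-- Along a polynomial curve, an open set that is met is met cofinitely often. -/
theorem curve_cofinite {ι K : Type} [Field K] {U : Set (ι → K)}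
    (hU : @IsOpen _ (zariskiTopology ι K) U) (γ : ι → Polynomial K) (t₀ : K)
    (h : (fun c => (γ c).eval t₀) ∈ U) :
    {t : K | (fun c => (γ c).eval t) ∉ U}.Finite := by
  obtain ⟨p, hp, hp'⟩ := zariski_basis hU h
  let f : Polynomial K := MvPolynomial.aeval γ p
  have hf : ∀ t, f.eval t = MvPolynomial.eval (fun c => (γ c).eval t) p := by
    intro t
    have : (Polynomial.evalRingHom t) (MvPolynomial.aeval γ p)
        = MvPolynomial.eval (fun c => (γ c).eval t) p := by
      rw [MvPolynomial.aeval_def, MvPolynomial.hom_eval₂, MvPolynomial.eval,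
        MvPolynomial.coe_eval₂Hom]
      congr 1
      ext; simp
    exact this
  have hf0 : f ≠ 0 := by
    intro h0
    apply hp
    rw [← hf, h0, Polynomial.eval_zero]
  refine (Polynomial.finite_setOfPred_isRoot hf0).subset ?_
  intro t ht
  by_contra hr
  exact ht (hp' _ (by rw [← hf]; exact hr))

theorem isOpen_rank_ge {ι K E F : Type} [Field K] [Fintype ι] [AddCommGroup E] [Module K E]
    [AddCommGroup F] [Module K F] [FiniteDimensional K F]
    (T : (ι → K) →ₗ[K] (E →ₗ[K] F)) (k : ℕ) :
    @IsOpen _ (zariskiTopology ι K) {x | k ≤ Module.finrank K (LinearMap.range (T x))} := by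
  classical
  let _ := zariskiTopology ι K
  rw [isOpen_iff_forall_mem_open]
  intro x₀ hx₀
  obtain ⟨φ, ψ, h⟩ := exists_id_factor (T x₀) k hx₀
  let M : Matrix (Fin k) (Fin k) (MvPolynomial ι K) := fun a b =>
    ∑ c : ι, MvPolynomial.C (φ (T (Pi.single c 1) (ψ (Pi.single b 1))) a) * MvPolynomial.X c
  have hM : ∀ x, MvPolynomial.eval x M.det = LinearMap.det (φ ∘ₗ T x ∘ₗ ψ) := by
    intro x
    rw [← LinearMap.det_toMatrix', RingHom.map_det]
    congr 1
    ext a b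
    have hx : x = ∑ c, x c • (Pi.single c 1 : ι → K) := by
      funext j; simp [Finset.sum_apply, Pi.single_apply]
    rw [LinearMap.toMatrix'_apply]
    conv_rhs => rw [hx]
    rw [RingHom.mapMatrix_apply, Matrix.map_apply]
    simp [M, mul_comm, Finset.sum_apply]
  refine ⟨{x | MvPolynomial.eval x M.det ≠ 0}, ?_, ?_, ?_⟩
  · intro x hx
    simp only [Set.mem_ofPred_eq, hM] at hx ⊢
    have hbij : LinearMap.range (φ ∘ₗ T x ∘ₗ ψ) = ⊤ :=
      LinearMap.range_eq_top.2 (LinearMap.equivOfDetNeZero _ hx).surjective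
    have h1 : Module.finrank K (LinearMap.range (φ ∘ₗ T x ∘ₗ ψ)) = k := by
      rw [hbij]; simp
    have h2 : LinearMap.range (φ ∘ₗ T x ∘ₗ ψ) ≤ (LinearMap.range (T x)).map φ := by
      rintro _ ⟨v, rfl⟩
      exact ⟨T x (ψ v), ⟨_, rfl⟩, rfl⟩
    calc k = _ := h1.symm
      _ ≤ _ := Submodule.finrank_mono h2
      _ ≤ _ := Submodule.finrank_map_le _ _
  · exact TopologicalSpace.isOpen_generateFrom_of_mem ⟨_, rfl⟩
  · simp only [Set.mem_ofPred_eq, hM, h]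
    simp

namespace QuiverData

section Basics

variable (Q : QuiverData) (d : Fin Q.n → ℕ) (K : Type) [Field K]

/-- Component at the vertex `i`. -/
def pr (i : Fin Q.n) : Carrier Q d K →ₗ[K] (Fin (d i) → K) where
  toFun m := fun v => m ⟨i, v⟩
  map_add' _ _ := rfl
  map_smul' _ _ := rfl

/-- Inclusion of the component at the vertex `i`. -/
def inc (i : Fin Q.n) : (Fin (d i) → K) →ₗ[K] Carrier Q d K where
  toFun v := fun jv => if h : jv.1 = i then v (Fin.cast (congrArg d h) jv.2) else 0
  map_add' u v := by
    funext jv; by_cases h : jv.1 = i <;> simp [h]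
  map_smul' c u := by
    funext jv; by_cases h : jv.1 = i <;> simp [h]

theorem pr_apply (i : Fin Q.n) (m : Carrier Q d K) (v : Fin (d i)) :
    pr Q d K i m v = m ⟨i, v⟩ := rfl

theorem ext_pr {m m' : Carrier Q d K} (h : ∀ i, pr Q d K i m = pr Q d K i m') : m = m' := by
  funext ⟨i, v⟩
  exact congrFun (h i) v

theorem pr_inc (i : Fin Q.n) (v : Fin (d i) → K) : pr Q d K i (inc Q d K i v) = v := by
  funext w
  simp [pr, inc]

theorem inc_pr (i : Fin Q.n) (m : Carrier Q d K) :
    inc Q d K i (pr Q d K i m) = proj Q d K i m := by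
  funext ⟨j, v⟩
  by_cases h : j = i
  · subst h; simp [pr, inc, proj]
  · simp [inc, proj, h]

theorem inc_injective (i : Fin Q.n) : Function.Injective (inc Q d K i) :=
  Function.LeftInverse.injective (pr_inc Q d K i)

theorem vdim_eq (N : Submodule K (Carrier Q d K)) (i : Fin Q.n) :
    vdim Q d K N i = Module.finrank K (N.map (pr Q d K i)) := by
  have : proj Q d K i = inc Q d K i ∘ₗ pr Q d K i := by
    refine LinearMap.ext fun m => ?_
    rw [LinearMap.comp_apply, inc_pr]
  unfold vdim
  rw [this, Submodule.map_comp]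
  exact LinearEquiv.finrank_eq
    (Submodule.equivMapOfInjective _ (inc_injective Q d K i) _).symm

theorem pr_proj_ne {i j : Fin Q.n} (h : j ≠ i) (m : Carrier Q d K) :
    pr Q d K j (proj Q d K i m) = 0 := by
  funext v; simp [pr, proj, h]

theorem pr_proj_self (i : Fin Q.n) (m : Carrier Q d K) :
    pr Q d K i (proj Q d K i m) = pr Q d K i m := by
  funext v; simp [pr, proj]

theorem arrowMap_congr (x : RepSpace Q d K) (a : Fin Q.numArrows) {m m' : Carrier Q d K}
    (h : pr Q d K (Q.src a) m = pr Q d K (Q.src a) m') :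
    arrowMap Q d K x a m = arrowMap Q d K x a m' := by
  funext jv
  have h' : ∀ w, m ⟨Q.src a, w⟩ = m' ⟨Q.src a, w⟩ := fun w => congrFun h w
  simp [arrowMap, h']

theorem arrowMap_comp_proj (x : RepSpace Q d K) (a : Fin Q.numArrows) (m : Carrier Q d K) :
    arrowMap Q d K x a (proj Q d K (Q.src a) m) = arrowMap Q d K x a m :=
  arrowMap_congr Q d K x a (pr_proj_self Q d K _ m)

theorem arrowMap_comp_proj_ne (x : RepSpace Q d K) (a : Fin Q.numArrows) {i : Fin Q.n}
    (h : Q.src a ≠ i) (m : Carrier Q d K) :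
    arrowMap Q d K x a (proj Q d K i m) = 0 := by
  rw [arrowMap_congr Q d K x a (m' := 0), map_zero]
  rw [pr_proj_ne Q d K h, map_zero]

theorem proj_comp_arrowMap (x : RepSpace Q d K) (a : Fin Q.numArrows) (m : Carrier Q d K) :
    proj Q d K (Q.tgt a) (arrowMap Q d K x a m) = arrowMap Q d K x a m := by
  funext jv
  by_cases h : jv.1 = Q.tgt a <;> simp [proj, arrowMap, h]

theorem proj_comp_arrowMap_ne (x : RepSpace Q d K) (a : Fin Q.numArrows) {i : Fin Q.n}
    (h : Q.tgt a ≠ i) (m : Carrier Q d K) :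
    proj Q d K i (arrowMap Q d K x a m) = 0 := by
  funext jv
  by_cases h' : jv.1 = i
  · have : jv.1 ≠ Q.tgt a := fun h'' => h (h''.symm.trans h')
    simp [proj, arrowMap, this]
  · simp [proj, h']

/-- The point of the representation space given by a family of endomorphisms. -/
def toRep : (Fin Q.numArrows → Module.End K (Carrier Q d K)) →ₗ[K] RepSpace Q d K where
  toFun F := fun c => F c.1 (Pi.single ⟨Q.src c.1, c.2.2⟩ 1) ⟨Q.tgt c.1, c.2.1⟩
  map_add' _ _ := rfl
  map_smul' _ _ := rfl

theorem arrowMap_toRep (F : Fin Q.numArrows → Module.End K (Carrier Q d K))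
    (a : Fin Q.numArrows)
    (h1 : (proj Q d K (Q.tgt a) : Module.End K (Carrier Q d K)) * F a = F a)
    (h2 : F a * (proj Q d K (Q.src a) : Module.End K (Carrier Q d K)) = F a) :
    arrowMap Q d K (toRep Q d K F) a = F a := by
  apply LinearMap.pi_ext'
  rintro ⟨j, w⟩
  ext1
  simp only [LinearMap.comp_apply, LinearMap.single_apply]
  funext ⟨i, v⟩
  by_cases hj : j = Q.src a
  · subst hj
    by_cases hi : i = Q.tgt a
    · subst hi
      simp only [arrowMap, toRep, LinearMap.coe_mk, AddHom.coe_mk, dite_true]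
      rw [Finset.sum_eq_single w]
      · simp
      · intro b _ hb
        rw [Pi.single_eq_of_ne (by simpa using hb), mul_zero]
      · simp
    · rw [← h1]
      simp [arrowMap, proj, hi]
  · have : proj Q d K (Q.src a) (Pi.single ⟨j, w⟩ 1) = 0 := by
      funext ⟨k, u⟩
      by_cases hk : k = Q.src a
      · have : (⟨k, u⟩ : Σ i : Fin Q.n, Fin (d i)) ≠ ⟨j, w⟩ := by
          intro h
          exact hj (hk ▸ (congrArg Sigma.fst h).symm)
        simp [proj, Pi.single_eq_of_ne this]
      · simp [proj, hk]
    rw [← arrowMap_comp_proj, ← h2, Module.End.mul_apply, this]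
    simp

theorem toRep_arrowMap (x : RepSpace Q d K) :
    toRep Q d K (fun a => arrowMap Q d K x a) = x := by
  funext ⟨a, v, w⟩
  simp only [arrowMap, toRep, LinearMap.coe_mk, AddHom.coe_mk, dite_true]
  rw [Finset.sum_eq_single w]
  · simp
  · intro b _ hb
    rw [Pi.single_eq_of_ne (by simpa using hb), mul_zero]
  · simp

theorem arrowMap_add (x y : RepSpace Q d K) (a : Fin Q.numArrows) :
    arrowMap Q d K (x + y) a = arrowMap Q d K x a + arrowMap Q d K y a := by
  refine LinearMap.ext fun m => ?_
  funext jv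
  by_cases h : jv.1 = Q.tgt a <;> simp [arrowMap, h, add_mul, Finset.sum_add_distrib]

theorem arrowMap_smul (c : K) (x : RepSpace Q d K) (a : Fin Q.numArrows) :
    arrowMap Q d K (c • x) a = c • arrowMap Q d K x a := by
  refine LinearMap.ext fun m => ?_
  funext jv
  by_cases h : jv.1 = Q.tgt a <;> simp [arrowMap, h, mul_assoc, Finset.mul_sum]

theorem sum_proj : (∑ i, (proj Q d K i : Module.End K (Carrier Q d K))) = 1 := by
  refine LinearMap.ext fun m => ?_
  funext jv
  simp [LinearMap.sum_apply, Finset.sum_apply, proj]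

theorem proj_mul_self (i : Fin Q.n) :
    (proj Q d K i : Module.End K (Carrier Q d K)) * proj Q d K i = proj Q d K i := by
  refine LinearMap.ext fun m => ?_
  funext jv
  by_cases h : jv.1 = i <;> simp [proj, h]

theorem proj_mul_ne {i j : Fin Q.n} (hij : i ≠ j) :
    (proj Q d K i : Module.End K (Carrier Q d K)) * proj Q d K j = 0 := by
  refine LinearMap.ext fun m => ?_
  funext jv
  by_cases h : jv.1 = i
  · have : jv.1 ≠ j := fun h' => hij (h.symm.trans h')
    simp [proj, this]
  · simp [proj, h]

/-! ### Radical and socle -/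

theorem radPow_zero (x : RepSpace Q d K) : radPow Q d K x 0 = ⊤ := by
  rw [eq_top_iff]
  refine le_trans ?_ (le_iSup _ (⟨[], rfl⟩ : {w : List (Fin Q.numArrows) // w.length = 0}))
  simp [wordMap, Module.End.one_eq_id]

theorem radPow_one (x : RepSpace Q d K) :
    radPow Q d K x 1 = ⨆ a, LinearMap.range (arrowMap Q d K x a) := by
  apply le_antisymm
  · refine iSup_le ?_
    rintro ⟨w, hw⟩
    obtain ⟨a, rfl⟩ := List.length_eq_one_iff.1 hw
    simp only [wordMap, List.map_cons, List.map_nil, List.prod_cons, List.prod_nil, mul_one]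
    exact le_iSup (fun a => LinearMap.range (arrowMap Q d K x a)) a
  · refine iSup_le fun a => ?_
    refine le_trans ?_ (le_iSup _ (⟨[a], rfl⟩ : {w : List (Fin Q.numArrows) // w.length = 1}))
    simp [wordMap]

/-- All products of two arrows vanish. -/
def SqZero (x : RepSpace Q d K) : Prop :=
  ∀ a b, (arrowMap Q d K x a) ∘ₗ (arrowMap Q d K x b) = 0

theorem radPow_two (x : RepSpace Q d K) (hx : SqZero Q d K x) :
    radPow Q d K x 2 = ⊥ := by
  rw [eq_bot_iff]
  refine iSup_le ?_
  rintro ⟨w, hw⟩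
  obtain ⟨a, b, rfl⟩ := List.length_eq_two.1 hw
  simp only [wordMap, List.map_cons, List.map_nil, List.prod_cons, List.prod_nil, mul_one]
  have : (arrowMap Q d K x a : Module.End K (Carrier Q d K)) * arrowMap Q d K x b = 0 := hx a b
  rw [this]
  simp

/-- Dimension vector of the radical. -/
noncomputable def rd (x : RepSpace Q d K) (i : Fin Q.n) : ℕ := vdim Q d K (radPow Q d K x 1) i

theorem vdim_le (N : Submodule K (Carrier Q d K)) (i : Fin Q.n) : vdim Q d K N i ≤ d i := by
  rw [vdim_eq]
  exact (Submodule.finrank_le _).trans (by simp)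

theorem vdim_top (i : Fin Q.n) : vdim Q d K ⊤ i = d i := by
  rw [vdim_eq, Submodule.map_top,
    LinearMap.range_eq_top.2 (Function.RightInverse.surjective (pr_inc Q d K i))]
  simp

theorem rd_le (x : RepSpace Q d K) (i : Fin Q.n) : rd Q d K x i ≤ d i := vdim_le Q d K _ i

theorem radLayering_zero (x : RepSpace Q d K) (i : Fin Q.n) :
    radLayering Q d K 1 x 0 i = d i - rd Q d K x i := by
  simp [radLayering, rd, radPow_zero, vdim_top]

theorem radLayering_one (x : RepSpace Q d K) (hx : SqZero Q d K x) (i : Fin Q.n) :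
    radLayering Q d K 1 x 1 i = rd Q d K x i := by
  have h : vdim Q d K ⊥ i = 0 := by rw [vdim_eq]; simp
  simp [radLayering, rd, radPow_two Q d K x hx, h]

theorem radLayering_eq_iff (x y : RepSpace Q d K) (hx : SqZero Q d K x) (hy : SqZero Q d K y) :
    radLayering Q d K 1 x = radLayering Q d K 1 y ↔ rd Q d K x = rd Q d K y := by
  constructor
  · intro h
    funext i
    rw [← radLayering_one Q d K x hx, ← radLayering_one Q d K y hy, h]
  · intro h
    funext l i
    fin_cases l
    · exact (radLayering_zero Q d K x i).trans
        ((by rw [h] : _ = _).trans (radLayering_zero Q d K y i).symm)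
    · exact (radLayering_one Q d K x hx i).trans
        ((by rw [h] : _ = _).trans (radLayering_one Q d K y hy i).symm)

theorem hasDimVec_radLayering (x : RepSpace Q d K) (hx : SqZero Q d K x) :
    hasDimVec (radLayering Q d K 1 x) d := by
  intro i
  have h1 := radLayering_zero Q d K x i
  have h2 := radLayering_one Q d K x hx i
  have h3 := rd_le Q d K x i
  rw [Fin.sum_univ_two, h1, h2]
  omega

theorem mem_radPow_one (x : RepSpace Q d K) (a : Fin Q.numArrows) (m : Carrier Q d K) :
    arrowMap Q d K x a m ∈ radPow Q d K x 1 := by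
  rw [radPow_one]
  exact Submodule.mem_iSup_of_mem a ⟨m, rfl⟩

theorem mem_soc_iff (x : RepSpace Q d K) (m : Carrier Q d K) :
    m ∈ socPow Q d K x 0 ↔ ∀ a, arrowMap Q d K x a m = 0 := by
  simp [socPow]

theorem rad_le_soc (x : RepSpace Q d K) (hx : SqZero Q d K x) :
    radPow Q d K x 1 ≤ socPow Q d K x 0 := by
  rw [radPow_one]
  refine iSup_le fun b => ?_
  rintro _ ⟨m, rfl⟩
  rw [mem_soc_iff]
  exact fun a => LinearMap.congr_fun (hx a b) m

theorem arrowMap_eq_zero_of_soc (x : RepSpace Q d K) (m : Carrier Q d K)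
    (h : ∀ i, pr Q d K i m ∈ (socPow Q d K x 0).map (pr Q d K i)) (a : Fin Q.numArrows) :
    arrowMap Q d K x a m = 0 := by
  obtain ⟨m', hm', he⟩ := h (Q.src a)
  rw [arrowMap_congr Q d K x a he.symm]
  exact (mem_soc_iff Q d K x m').1 hm' a

theorem rd_le_of (x : RepSpace Q d K) (W : ∀ i, Submodule K (Fin (d i) → K))
    (h : ∀ a m i, pr Q d K i (arrowMap Q d K x a m) ∈ W i) (i : Fin Q.n) :
    rd Q d K x i ≤ Module.finrank K (W i) := by
  unfold rd
  rw [vdim_eq]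
  apply Submodule.finrank_mono
  rw [Submodule.map_le_iff_le_comap, radPow_one]
  refine iSup_le fun a => ?_
  rintro _ ⟨m, rfl⟩
  exact h a m i

/-- The map whose range is the radical at `i`, depending linearly on the point. -/
noncomputable def radT (i : Fin Q.n) :
    RepSpace Q d K →ₗ[K] ((Fin Q.numArrows → Carrier Q d K) →ₗ[K] (Fin (d i) → K)) where
  toFun x := pr Q d K i ∘ₗ ∑ a, arrowMap Q d K x a ∘ₗ LinearMap.proj a
  map_add' x y := by
    simp [arrowMap_add, LinearMap.add_comp, Finset.sum_add_distrib, LinearMap.comp_add]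
  map_smul' c x := by
    simp [arrowMap_smul, LinearMap.smul_comp, ← Finset.smul_sum, LinearMap.comp_smul]

theorem rd_eq (x : RepSpace Q d K) (i : Fin Q.n) :
    rd Q d K x i = Module.finrank K (LinearMap.range (radT Q d K i x)) := by
  unfold rd
  rw [vdim_eq]
  have : radPow Q d K x 1 =
      LinearMap.range (∑ a, arrowMap Q d K x a ∘ₗ
        (LinearMap.proj a : (Fin Q.numArrows → Carrier Q d K) →ₗ[K] _)) := by
    apply le_antisymm
    · rw [radPow_one]
      refine iSup_le fun a => ?_
      rintro _ ⟨m, rfl⟩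
      refine ⟨Pi.single a m, ?_⟩
      rw [LinearMap.sum_apply, Finset.sum_eq_single a]
      · simp
      · intro b _ hb
        simp [hb]
      · simp
    · rintro _ ⟨m, rfl⟩
      rw [LinearMap.sum_apply]
      exact Submodule.sum_mem _ fun a _ => mem_radPow_one Q d K x a _
  rw [this, ← LinearMap.range_comp]
  rfl

/-- The map whose kernel is the socle at `i`, depending linearly on the point. -/
noncomputable def socT (i : Fin Q.n) :
    RepSpace Q d K →ₗ[K] ((Fin (d i) → K) →ₗ[K] (Fin Q.numArrows → Carrier Q d K)) where
  toFun x := LinearMap.pi fun a => arrowMap Q d K x a ∘ₗ inc Q d K i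
  map_add' x y := by
    refine LinearMap.ext fun v => ?_
    funext a
    simp [arrowMap_add]
  map_smul' c x := by
    refine LinearMap.ext fun v => ?_
    funext a
    simp [arrowMap_smul]

theorem sc_eq (x : RepSpace Q d K) (i : Fin Q.n) :
    Module.finrank K (LinearMap.range (socT Q d K i x)) + socDim Q d K x i = d i := by
  unfold socDim
  rw [vdim_eq]
  have : (socPow Q d K x 0).map (pr Q d K i) = LinearMap.ker (socT Q d K i x) := by
    ext v
    rw [LinearMap.mem_ker]
    constructor
    · rintro ⟨m, hm, rfl⟩
      funext a
      change arrowMap Q d K x a (inc Q d K i (pr Q d K i m)) = 0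
      rw [inc_pr]
      by_cases h : Q.src a = i
      · rw [← h, arrowMap_comp_proj]
        exact (mem_soc_iff Q d K x m).1 hm a
      · exact arrowMap_comp_proj_ne Q d K x a h m
    · intro h
      refine ⟨inc Q d K i v, ?_, pr_inc Q d K i v⟩
      exact (mem_soc_iff Q d K x _).2 fun a => congrFun h a
  rw [this, LinearMap.finrank_range_add_finrank_ker]
  simp

theorem isOpen_rd_ge (k : ℕ) (i : Fin Q.n) : IsOpen {x : RepSpace Q d K | k ≤ rd Q d K x i} := by
  have := isOpen_rank_ge (radT Q d K i) k
  simp only [← rd_eq] at this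
  exact this

theorem isOpen_sc_le (k : ℕ) (i : Fin Q.n) :
    IsOpen {x : RepSpace Q d K | socDim Q d K x i ≤ k} := by
  have := isOpen_rank_ge (socT Q d K i) (d i - k)
  have e : {x : RepSpace Q d K | socDim Q d K x i ≤ k} =
      {x | d i - k ≤ Module.finrank K (LinearMap.range (socT Q d K i x))} := by
    ext x
    have h := sc_eq Q d K x i
    simp only [Set.mem_ofPred_eq]
    constructor <;> intro <;> omega
  rw [e]
  exact this

end Basics

end QuiverData

namespace QuiverData

section Path

variable (Q : QuiverData) (d : Fin Q.n → ℕ) (K : Type) [Field K]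

/-- On points with vanishing products of arrows every relation acts as a combination of
vertices and arrows, with coefficients independent of the point. -/
theorem evalRel_sqZero (r : FreeAlgebra K (Fin Q.n ⊕ Fin Q.numArrows)) :
    ∃ (c : Fin Q.n → K) (l : Fin Q.numArrows → K), ∀ x : RepSpace Q d K, SqZero Q d K x →
      evalRel Q d K x r =
        (∑ i, c i • (proj Q d K i : Module.End K (Carrier Q d K))) +
          ∑ a, l a • (arrowMap Q d K x a : Module.End K (Carrier Q d K)) := by
  classical
  induction r using FreeAlgebra.induction with
  | grade0 k =>
    refine ⟨fun _ => k, 0, fun x _ => ?_⟩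
    rw [AlgHom.commutes, ← Finset.smul_sum, sum_proj]
    simp [Algebra.algebraMap_eq_smul_one]
  | grade1 g =>
    rcases g with i | a
    · refine ⟨Pi.single i 1, 0, fun x _ => ?_⟩
      rw [Finset.sum_eq_single i]
      · simp [evalRel]
      · intro b _ hb; simp [hb]
      · simp
    · refine ⟨0, Pi.single a 1, fun x _ => ?_⟩
      rw [Finset.sum_eq_single (s := Finset.univ) (f := fun b =>
        (Pi.single a 1 : Fin Q.numArrows → K) b • (arrowMap Q d K x b : Module.End K _)) a]
      · simp [evalRel]
      · intro b _ hb; simp [hb]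
      · simp
  | mul r s hr hs =>
    obtain ⟨c, l, h⟩ := hr
    obtain ⟨c', l', h'⟩ := hs
    refine ⟨fun i => c i * c' i, fun a => c (Q.tgt a) * l' a + l a * c' (Q.src a),
      fun x hx => ?_⟩
    rw [map_mul, h x hx, h' x hx, add_mul, mul_add, mul_add]
    have e1 : (∑ i, c i • (proj Q d K i : Module.End K (Carrier Q d K))) *
        (∑ i, c' i • (proj Q d K i : Module.End K (Carrier Q d K))) =
        ∑ i, (c i * c' i) • (proj Q d K i : Module.End K (Carrier Q d K)) := by
      rw [Finset.sum_mul_sum]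
      refine Finset.sum_congr rfl fun i _ => ?_
      rw [Finset.sum_eq_single i]
      · rw [smul_mul_smul_comm, proj_mul_self]
      · intro b _ hb
        rw [smul_mul_smul_comm, proj_mul_ne Q d K hb.symm, smul_zero]
      · simp
    have e2 : (∑ i, c i • (proj Q d K i : Module.End K (Carrier Q d K))) *
        (∑ a, l' a • (arrowMap Q d K x a : Module.End K (Carrier Q d K))) =
        ∑ a, (c (Q.tgt a) * l' a) • (arrowMap Q d K x a : Module.End K (Carrier Q d K)) := by
      rw [Finset.sum_mul_sum, Finset.sum_comm]
      refine Finset.sum_congr rfl fun a _ => ?_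
      rw [Finset.sum_eq_single (Q.tgt a)]
      · rw [smul_mul_smul_comm]
        congr 1
        exact LinearMap.ext fun m => proj_comp_arrowMap Q d K x a m
      · intro b _ hb
        rw [smul_mul_smul_comm]
        have : (proj Q d K b : Module.End K (Carrier Q d K)) * arrowMap Q d K x a = 0 :=
          LinearMap.ext fun m => proj_comp_arrowMap_ne Q d K x a hb.symm m
        rw [this, smul_zero]
      · simp
    have e3 : (∑ a, l a • (arrowMap Q d K x a : Module.End K (Carrier Q d K))) *
        (∑ i, c' i • (proj Q d K i : Module.End K (Carrier Q d K))) =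
        ∑ a, (l a * c' (Q.src a)) • (arrowMap Q d K x a : Module.End K (Carrier Q d K)) := by
      rw [Finset.sum_mul_sum]
      refine Finset.sum_congr rfl fun a _ => ?_
      rw [Finset.sum_eq_single (Q.src a)]
      · rw [smul_mul_smul_comm]
        congr 1
        exact LinearMap.ext fun m => arrowMap_comp_proj Q d K x a m
      · intro b _ hb
        rw [smul_mul_smul_comm]
        have : (arrowMap Q d K x a : Module.End K (Carrier Q d K)) * proj Q d K b = 0 :=
          LinearMap.ext fun m => arrowMap_comp_proj_ne Q d K x a hb.symm m
        rw [this, smul_zero]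
      · simp
    have e4 : (∑ a, l a • (arrowMap Q d K x a : Module.End K (Carrier Q d K))) *
        (∑ a, l' a • (arrowMap Q d K x a : Module.End K (Carrier Q d K))) = 0 := by
      rw [Finset.sum_mul_sum]
      refine Finset.sum_eq_zero fun a _ => Finset.sum_eq_zero fun b _ => ?_
      rw [smul_mul_smul_comm]
      have : (arrowMap Q d K x a : Module.End K (Carrier Q d K)) * arrowMap Q d K x b = 0 :=
        hx a b
      rw [this, smul_zero]
    rw [e1, e2, e3, e4]
    simp only [add_smul, Finset.sum_add_distrib, add_zero, add_assoc]
  | add r s hr hs =>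
    obtain ⟨c, l, h⟩ := hr
    obtain ⟨c', l', h'⟩ := hs
    refine ⟨c + c', l + l', fun x hx => ?_⟩
    rw [map_add, h x hx, h' x hx]
    simp only [Pi.add_apply, add_smul, Finset.sum_add_distrib]
    abel

/-- Block diagonal endomorphism. -/
def blk (N : ∀ i, (Fin (d i) → K) →ₗ[K] (Fin (d i) → K)) : Module.End K (Carrier Q d K) where
  toFun m := fun jv => N jv.1 (pr Q d K jv.1 m) jv.2
  map_add' u v := by funext jv; simp
  map_smul' c u := by funext jv; simp

theorem pr_blk (N : ∀ i, (Fin (d i) → K) →ₗ[K] (Fin (d i) → K)) (i : Fin Q.n)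
    (m : Carrier Q d K) : pr Q d K i (blk Q d K N m) = N i (pr Q d K i m) := rfl

theorem blk_comm (N : ∀ i, (Fin (d i) → K) →ₗ[K] (Fin (d i) → K)) (i : Fin Q.n) :
    blk Q d K N * (proj Q d K i : Module.End K (Carrier Q d K)) = proj Q d K i * blk Q d K N := by
  refine LinearMap.ext fun m => ext_pr Q d K fun j => ?_
  rw [Module.End.mul_apply, Module.End.mul_apply, pr_blk]
  by_cases h : j = i
  · subst h
    rw [pr_proj_self, pr_proj_self, pr_blk]
  · rw [pr_proj_ne Q d K h, pr_proj_ne Q d K h, map_zero]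

theorem exists_path (Rels : Set (FreeAlgebra K (Fin Q.n ⊕ Fin Q.numArrows)))
    (x y : RepSpace Q d K) (hx : x ∈ RepVar Q d K Rels) (hy : y ∈ RepVar Q d K Rels)
    (hxx : SqZero Q d K x) (hyy : SqZero Q d K y)
    (h1 : ∀ i, rd Q d K x i ≤ rd Q d K y i) (h2 : ∀ i, rd Q d K y i ≤ socDim Q d K x i) :
    ∃ γ : Coords Q d → Polynomial K,
      (fun c => (γ c).eval 0) = x ∧ (fun c => (γ c).eval 1) = y ∧
      ∀ t : K, (fun c => (γ c).eval t) ∈ RepVar Q d K Rels ∧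
        ∀ i, rd Q d K (fun c => (γ c).eval t) i ≤ rd Q d K y i := by
  -- intermediate graded subspace
  have hR : ∀ i, ∃ R : Submodule K (Fin (d i) → K),
      (radPow Q d K x 1).map (pr Q d K i) ≤ R ∧ R ≤ (socPow Q d K x 0).map (pr Q d K i) ∧
      Module.finrank K R = rd Q d K y i := by
    intro i
    apply exists_between_finrank
    · exact Submodule.map_mono (rad_le_soc Q d K x hxx)
    · rw [← vdim_eq]; exact h1 i
    · rw [← vdim_eq]; exact h2 i
  choose R hR1 hR2 hR3 using hR
  have hN : ∀ i, ∃ N : (Fin (d i) → K) →ₗ[K] (Fin (d i) → K), (∀ v, N (N v) = 0) ∧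
      (∀ v ∈ R i, v + N v ∈ (radPow Q d K y 1).map (pr Q d K i)) ∧
      (∀ v ∈ (radPow Q d K y 1).map (pr Q d K i), v - N v ∈ R i) := by
    intro i
    apply exists_nilp_move
    rw [hR3, ← vdim_eq]
    rfl
  choose N0 hN1 hN2 hN3 using hN
  obtain ⟨N, hNdef⟩ : ∃ N, N = blk Q d K N0 := ⟨_, rfl⟩
  have hNN : N * N = 0 := by
    subst hNdef
    refine LinearMap.ext fun m => ext_pr Q d K fun j => ?_
    rw [Module.End.mul_apply, pr_blk, pr_blk, hN1]
    simp
  have hNP : ∀ i, N * (proj Q d K i : Module.End K (Carrier Q d K)) = proj Q d K i * N := by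
    subst hNdef
    exact blk_comm Q d K N0
  let X : Fin Q.numArrows → Module.End K (Carrier Q d K) := fun a => arrowMap Q d K x a
  let Y : Fin Q.numArrows → Module.End K (Carrier Q d K) := fun a => arrowMap Q d K y a
  let D : Fin Q.numArrows → Module.End K (Carrier Q d K) :=
    fun a => (1 - N) * Y a * (1 + N) - X a
  let W : K → Fin Q.numArrows → Module.End K (Carrier Q d K) := fun t a => X a + t • D a
  let Z : K → Fin Q.numArrows → Module.End K (Carrier Q d K) := fun t a =>
    (1 + t • N) * W t a * (1 - t • N)
  -- behaviour of W
  let InR : Carrier Q d K → Prop := fun m => ∀ i, pr Q d K i m ∈ R i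
  have inR_add : ∀ {m m'}, InR m → InR m' → InR (m + m') := fun h h' i => by
    rw [map_add]; exact add_mem (h i) (h' i)
  have inR_smul : ∀ {m} (t : K), InR m → InR (t • m) := fun t h i => by
    rw [map_smul]; exact (R i).smul_mem t (h i)
  have inR_neg : ∀ {m}, InR m → InR (-m) := fun h i => by
    rw [map_neg]; exact neg_mem (h i)
  have X_in : ∀ a m, InR (X a m) := fun a m i =>
    hR1 i ⟨_, mem_radPow_one Q d K x a m, rfl⟩
  have X_ker : ∀ a m, InR m → X a m = 0 := fun a m h =>
    arrowMap_eq_zero_of_soc Q d K x m (fun i => hR2 i (h i)) a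
  have Y_in : ∀ a m, InR (Y a m - N (Y a m)) := fun a m i => by
    rw [map_sub, hNdef, pr_blk]
    exact hN3 i _ ⟨_, mem_radPow_one Q d K y a m, rfl⟩
  have Y_ker : ∀ a m, InR m → Y a (m + N m) = 0 := fun a m h => by
    refine arrowMap_eq_zero_of_soc Q d K y _ (fun i => ?_) a
    rw [map_add, hNdef, pr_blk]
    exact Submodule.map_mono (rad_le_soc Q d K y hyy) (hN2 i _ (h i))
  have D_apply : ∀ a m, D a m = (Y a (m + N m) - N (Y a (m + N m))) - X a m := fun a m => by
    simp [D, sub_mul, mul_add, Module.End.mul_apply]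
    abel
  have W_in : ∀ t a m, InR (W t a m) := fun t a m => by
    have : W t a m = X a m + t • D a m := rfl
    rw [this, D_apply, sub_eq_add_neg]
    exact inR_add (X_in a m) (inR_smul t (inR_add (Y_in a _) (inR_neg (X_in a m))))
  have W_ker : ∀ t a m, InR m → W t a m = 0 := fun t a m h => by
    have : W t a m = X a m + t • D a m := rfl
    rw [this, D_apply, X_ker a m h, Y_ker a m h]
    simp
  have WW : ∀ t a b, W t a * W t b = 0 := fun t a b =>
    LinearMap.ext fun m => W_ker t a _ (W_in t b m)
  have unip : ∀ t : K, (1 - t • N) * (1 + t • N) = 1 := fun t => by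
    simp [sub_mul, mul_add, hNN]
  have unip' : ∀ t : K, (1 + t • N) * (1 - t • N) = 1 := fun t => by
    simp [add_mul, mul_sub, hNN]
  have u1 : (1 - N) * (1 + N) = 1 := by simpa using unip 1
  have u1' : (1 + N) * (1 - N) = 1 := by simpa using unip' 1
  have ZZ : ∀ t a b, Z t a * Z t b = 0 := fun t a b => by
    have : Z t a * Z t b = (1 + t • N) * W t a * ((1 - t • N) * (1 + t • N)) * W t b *
        (1 - t • N) := by simp only [Z, mul_assoc]
    rw [this, unip, mul_one, mul_assoc (1 + t • N), WW, mul_zero, zero_mul]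
  -- arrow shape
  have comL : ∀ (i) (t : K), (1 + t • N) * (proj Q d K i : Module.End K (Carrier Q d K))
      = proj Q d K i * (1 + t • N) := fun i t => by
    simp [add_mul, mul_add, hNP]
  have comR : ∀ (i) (t : K), (1 - t • N) * (proj Q d K i : Module.End K (Carrier Q d K))
      = proj Q d K i * (1 - t • N) := fun i t => by
    simp [sub_mul, mul_sub, hNP]
  have comL1 : ∀ i, (1 + N) * (proj Q d K i : Module.End K (Carrier Q d K))
      = proj Q d K i * (1 + N) := fun i => by simpa using comL i 1
  have comR1 : ∀ i, (1 - N) * (proj Q d K i : Module.End K (Carrier Q d K))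
      = proj Q d K i * (1 - N) := fun i => by simpa using comR i 1
  have PX : ∀ a, (proj Q d K (Q.tgt a) : Module.End K (Carrier Q d K)) * X a = X a := fun a =>
    LinearMap.ext fun m => proj_comp_arrowMap Q d K x a m
  have XP : ∀ a, X a * (proj Q d K (Q.src a) : Module.End K (Carrier Q d K)) = X a := fun a =>
    LinearMap.ext fun m => arrowMap_comp_proj Q d K x a m
  have PY : ∀ a, (proj Q d K (Q.tgt a) : Module.End K (Carrier Q d K)) * Y a = Y a := fun a =>
    LinearMap.ext fun m => proj_comp_arrowMap Q d K y a m
  have YP : ∀ a, Y a * (proj Q d K (Q.src a) : Module.End K (Carrier Q d K)) = Y a := fun a =>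
    LinearMap.ext fun m => arrowMap_comp_proj Q d K y a m
  have PD : ∀ a, (proj Q d K (Q.tgt a) : Module.End K (Carrier Q d K)) * D a = D a := fun a => by
    simp only [D]
    rw [mul_sub, PX, ← mul_assoc, ← mul_assoc, ← comR1, mul_assoc (1 - N), PY]
  have DP : ∀ a, D a * (proj Q d K (Q.src a) : Module.End K (Carrier Q d K)) = D a := fun a => by
    simp only [D]
    rw [sub_mul, XP, mul_assoc, comL1, ← mul_assoc, mul_assoc (1 - N), YP]
  have PW : ∀ t a, (proj Q d K (Q.tgt a) : Module.End K (Carrier Q d K)) * W t a = W t a :=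
    fun t a => by
      simp only [W]
      rw [mul_add, PX, mul_smul_comm, PD]
  have WP : ∀ t a, W t a * (proj Q d K (Q.src a) : Module.End K (Carrier Q d K)) = W t a :=
    fun t a => by
      simp only [W]
      rw [add_mul, XP, smul_mul_assoc, DP]
  have PZ : ∀ t a, (proj Q d K (Q.tgt a) : Module.End K (Carrier Q d K)) * Z t a = Z t a :=
    fun t a => by
      simp only [Z]
      rw [← mul_assoc, ← mul_assoc, ← comL, mul_assoc (1 + t • N), PW]
  have ZP : ∀ t a, Z t a * (proj Q d K (Q.src a) : Module.End K (Carrier Q d K)) = Z t a :=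
    fun t a => by
      simp only [Z]
      rw [mul_assoc, comR, ← mul_assoc, mul_assoc (1 + t • N), WP]
  have arrZ : ∀ t a, arrowMap Q d K (toRep Q d K (Z t)) a = Z t a := fun t a =>
    arrowMap_toRep Q d K (Z t) a (PZ t a) (ZP t a)
  -- the polynomial curve
  let F1 : Fin Q.numArrows → Module.End K (Carrier Q d K) := fun a => N * X a + D a - X a * N
  let F2 : Fin Q.numArrows → Module.End K (Carrier Q d K) :=
    fun a => N * D a - N * X a * N - D a * N
  let F3 : Fin Q.numArrows → Module.End K (Carrier Q d K) := fun a => - (N * D a * N)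
  have Zexp : ∀ t, Z t = X + t • F1 + t ^ 2 • F2 + t ^ 3 • F3 := by
    intro t
    funext a
    simp only [Z, W, F1, F2, F3, Pi.add_apply, Pi.smul_apply, mul_add, add_mul, mul_sub,
      smul_mul_assoc, mul_smul_comm, one_mul, mul_one, smul_add, smul_sub, smul_smul, smul_neg]
    module
  let γ : Coords Q d → Polynomial K := fun c =>
    Polynomial.C (toRep Q d K X c) + Polynomial.C (toRep Q d K F1 c) * Polynomial.X +
    Polynomial.C (toRep Q d K F2 c) * Polynomial.X ^ 2 +
    Polynomial.C (toRep Q d K F3 c) * Polynomial.X ^ 3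
  have hγ : ∀ t, (fun c => (γ c).eval t) = toRep Q d K (Z t) := by
    intro t
    rw [Zexp t, map_add, map_add, map_add, map_smul, map_smul, map_smul]
    funext c
    simp only [γ, Polynomial.eval_add, Polynomial.eval_mul, Polynomial.eval_C,
      Polynomial.eval_pow, Polynomial.eval_X, Pi.add_apply, Pi.smul_apply, smul_eq_mul]
    ring
  refine ⟨γ, ?_, ?_, fun t => ?_⟩
  · rw [hγ]
    have : Z 0 = X := by funext a; simp [Z, W]
    rw [this]
    exact toRep_arrowMap Q d K x
  · rw [hγ]
    have : Z 1 = Y := by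
      funext a
      simp only [Z, W, D, one_smul, add_sub_cancel]
      calc (1 + N) * ((1 - N) * Y a * (1 + N)) * (1 - N)
          = ((1 + N) * (1 - N)) * Y a * ((1 + N) * (1 - N)) := by simp only [mul_assoc]
        _ = Y a := by rw [u1', one_mul, mul_one]
    rw [this]
    exact toRep_arrowMap Q d K y
  · rw [hγ]
    have hsq : SqZero Q d K (toRep Q d K (Z t)) := fun a b => by
      rw [arrZ, arrZ]; exact ZZ t a b
    constructor
    · intro r hr
      obtain ⟨c, l, h⟩ := evalRel_sqZero Q d K r
      have hX := (h x hxx).symm.trans (hx r hr)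
      have hY := (h y hyy).symm.trans (hy r hr)
      rw [h _ hsq]
      simp only [arrZ]
      obtain ⟨E, hE⟩ : ∃ E : Module.End K (Carrier Q d K),
          E = ∑ i, c i • (proj Q d K i : Module.End K (Carrier Q d K)) :=
        ⟨_, rfl⟩
      have hEN : N * E = E * N := by
        rw [hE, Finset.mul_sum, Finset.sum_mul]
        refine Finset.sum_congr rfl fun i _ => ?_
        rw [mul_smul_comm, smul_mul_assoc, hNP]
      have hEN' : N * -E = -E * N :=
        (mul_neg N E).trans ((congrArg Neg.neg hEN).trans (neg_mul E N).symm)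
      rw [← hE] at hX hY ⊢
      have hX' : ∑ a, l a • X a = -E := (neg_eq_of_add_eq_zero_right hX).symm
      have hY' : ∑ a, l a • Y a = -E := (neg_eq_of_add_eq_zero_right hY).symm
      have hD : ∑ a, l a • D a = 0 := by
        have : ∑ a, l a • D a = (1 - N) * (∑ a, l a • Y a) * (1 + N) - ∑ a, l a • X a := by
          rw [Finset.mul_sum, Finset.sum_mul, ← Finset.sum_sub_distrib]
          refine Finset.sum_congr rfl fun a _ => ?_
          simp only [D, smul_sub, mul_smul_comm, smul_mul_assoc]
        rw [this, hX', hY']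
        have : (1 - N) * -E = -E * (1 - N) := by
          rw [sub_mul, mul_sub, one_mul, mul_one, hEN']
        rw [this, mul_assoc, u1, mul_one, sub_self]
      have hZ : ∑ a, l a • Z t a = (1 + t • N) * (∑ a, l a • X a + t • ∑ a, l a • D a) *
          (1 - t • N) := by
        rw [Finset.smul_sum, ← Finset.sum_add_distrib, Finset.mul_sum, Finset.sum_mul]
        refine Finset.sum_congr rfl fun a _ => ?_
        rw [smul_comm t, ← smul_add, mul_smul_comm, smul_mul_assoc]
      rw [hZ, hD, hX', smul_zero, add_zero]
      have : (1 + t • N) * -E = -E * (1 + t • N) := by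
        rw [add_mul, mul_add, one_mul, mul_one, smul_mul_assoc, mul_smul_comm, hEN']
      rw [this, mul_assoc, unip', mul_one, add_neg_cancel]
    · intro i
      have := rd_le_of Q d K (toRep Q d K (Z t))
        (fun i => (R i).map (LinearMap.id + t • N0 i)) (fun a m i => by
          rw [arrZ]
          refine ⟨pr Q d K i (W t a ((1 - t • N) m)), W_in t a _ i, ?_⟩
          simp only [Z, hNdef, Module.End.mul_apply, LinearMap.add_apply, map_add,
            LinearMap.smul_apply, map_smul, pr_blk, Module.End.one_apply, LinearMap.id_apply]) i
      exact this.trans ((Submodule.finrank_map_le _ _).trans (hR3 i).le)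

end Path

end QuiverData

namespace QuiverData

section Top

variable (Q : QuiverData) (d : Fin Q.n → ℕ) (K : Type) [Field K]

theorem rd_le_sc (x : RepSpace Q d K) (hx : SqZero Q d K x) (i : Fin Q.n) :
    rd Q d K x i ≤ socDim Q d K x i :=  by
  unfold rd socDim
  rw [vdim_eq, vdim_eq]
  exact Submodule.finrank_mono (Submodule.map_mono (rad_le_soc Q d K x hx))

variable (Rels : Set (FreeAlgebra K (Fin Q.n ⊕ Fin Q.numArrows)))

theorem exists_common [Infinite K] (hJ2 : ∀ x ∈ RepVar Q d K Rels, SqZero Q d K x)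
    (x y : RepSpace Q d K) (hx : x ∈ RepVar Q d K Rels) (hy : y ∈ RepVar Q d K Rels)
    (h1 : ∀ i, rd Q d K x i ≤ rd Q d K y i) (h2 : ∀ i, rd Q d K y i ≤ socDim Q d K x i)
    (U U' : Set (RepSpace Q d K)) (hU : IsOpen U) (hU' : IsOpen U') (hxU : x ∈ U)
    (hyU : y ∈ U') :
    ∃ z ∈ RepVar Q d K Rels, radLayering Q d K 1 z = radLayering Q d K 1 y ∧ z ∈ U ∧ z ∈ U' := by
  obtain ⟨γ, h0, h1', hγ⟩ := exists_path Q d K Rels x y hx hy (hJ2 x hx) (hJ2 y hy) h1 h2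
  have hO : IsOpen (⋂ i, {z : RepSpace Q d K | rd Q d K y i ≤ rd Q d K z i}) :=
    isOpen_iInter_of_finite fun i => isOpen_rd_ge Q d K _ i
  have f1 := curve_cofinite hU γ 0 (h0 ▸ hxU)
  have f2 := curve_cofinite hU' γ 1 (h1' ▸ hyU)
  have hyO : y ∈ ⋂ i, {z : RepSpace Q d K | rd Q d K y i ≤ rd Q d K z i} :=
    Set.mem_iInter.2 fun i => le_refl (rd Q d K y i)
  have f3 := curve_cofinite hO γ 1 (by rw [h1']; exact hyO)
  obtain ⟨t, ht⟩ := ((f1.union f2).union f3).exists_notMem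
  simp only [Set.mem_union, not_or, Set.mem_ofPred_eq, not_not] at ht
  obtain ⟨⟨t1, t2⟩, t3⟩ := ht
  refine ⟨_, (hγ t).1, ?_, t1, t2⟩
  rw [radLayering_eq_iff Q d K _ y (hJ2 _ (hγ t).1) (hJ2 y hy)]
  funext i
  exact le_antisymm ((hγ t).2 i) (Set.mem_iInter.1 t3 i)

/-- The stratum of modules with radical layering `S`. -/
def RS (S : Fin 2 → Fin Q.n → ℕ) : Set (GenV Q d K Rels) :=
  {x : GenV Q d K Rels | radLayering Q d K 1 x.1 = S}

theorem mem_closure_RS [Infinite K] (hJ2 : ∀ x ∈ RepVar Q d K Rels, SqZero Q d K x)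
    (x y : GenV Q d K Rels)
    (h1 : ∀ i, rd Q d K x.1 i ≤ rd Q d K y.1 i) (h2 : ∀ i, rd Q d K y.1 i ≤ socDim Q d K x.1 i) :
    x ∈ closure (RS Q d K Rels (radLayering Q d K 1 y.1)) := by
  rw [mem_closure_iff]
  intro o ho hxo
  obtain ⟨U, hU, rfl⟩ := isOpen_induced_iff.1 ho
  obtain ⟨z, hz, hzS, hzU, -⟩ := exists_common Q d K Rels hJ2 x.1 y.1 x.2 y.2 h1 h2 U Set.univ
    hU isOpen_univ hxo trivial
  exact ⟨⟨z, hz⟩, hzU, hzS⟩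

theorem RS_preirreducible [Infinite K] (hJ2 : ∀ x ∈ RepVar Q d K Rels, SqZero Q d K x)
    (S : Fin 2 → Fin Q.n → ℕ) : IsPreirreducible (RS Q d K Rels S) := by
  rintro u v hu hv ⟨x, hxS, hxu⟩ ⟨y, hyS, hyv⟩
  obtain ⟨U, hU, rfl⟩ := isOpen_induced_iff.1 hu
  obtain ⟨V, hV, rfl⟩ := isOpen_induced_iff.1 hv
  have hrd : rd Q d K x.1 = rd Q d K y.1 :=
    (radLayering_eq_iff Q d K _ _ (hJ2 _ x.2) (hJ2 _ y.2)).1 (Eq.trans hxS (Eq.symm hyS))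
  obtain ⟨z, hz, hzS, hzU, hzV⟩ := exists_common Q d K Rels hJ2 x.1 y.1 x.2 y.2
    (fun i => (congrFun hrd i).le)
    (fun i => (congrFun hrd i).symm.le.trans (rd_le_sc Q d K x.1 (hJ2 _ x.2) i)) U V
    hU hV hxu hyv
  exact ⟨⟨z, hz⟩, Eq.trans hzS hyS, hzU, hzV⟩

theorem exists_genericSocle [Infinite K] (hJ2 : ∀ x ∈ RepVar Q d K Rels, SqZero Q d K x)
    (x : GenV Q d K Rels) : ∃ U0, IsGenericSocle Q d K
        {y | y ∈ RepVar Q d K Rels ∧ radLayering Q d K 1 y = radLayering Q d K 1 x.1} U0 := by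
  obtain ⟨y, hy, hmin⟩ := exists_minimal_of_wellFoundedLT
    (fun u : Fin Q.n → ℕ => ∃ y ∈ RepVar Q d K Rels,
      radLayering Q d K 1 y = radLayering Q d K 1 x.1 ∧ socDim Q d K y = u)
    ⟨_, x.1, x.2, rfl, rfl⟩
  obtain ⟨y, hyV, hyS, rfl⟩ := hy
  refine ⟨_, ?_, y, ⟨hyV, hyS⟩, rfl⟩
  rintro w ⟨hwV, hwS⟩
  have op : ∀ u : RepSpace Q d K,
      IsOpen (⋂ i, {z : RepSpace Q d K | socDim Q d K z i ≤ socDim Q d K u i}) := fun u =>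
    isOpen_iInter_of_finite fun i => isOpen_sc_le Q d K _ i
  have hrd : rd Q d K y = rd Q d K w :=
    (radLayering_eq_iff Q d K _ _ (hJ2 _ hyV) (hJ2 _ hwV)).1 (hyS.trans hwS.symm)
  obtain ⟨z, hz, hzS, hzU, hzV⟩ := exists_common Q d K Rels hJ2 y w hyV hwV
    (fun i => (congrFun hrd i).le)
    (fun i => (congrFun hrd i).symm.le.trans (rd_le_sc Q d K y (hJ2 _ hyV) i)) _ _ (op y) (op w)
    (Set.mem_iInter.2 fun i => le_refl (socDim Q d K y i))
    (Set.mem_iInter.2 fun i => le_refl (socDim Q d K w i))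
  have hzy : socDim Q d K z ≤ socDim Q d K y := fun i => Set.mem_iInter.1 hzU i
  have hzw : socDim Q d K z ≤ socDim Q d K w := fun i => Set.mem_iInter.1 hzV i
  exact (hmin ⟨z, hz, hzS.trans hwS, rfl⟩ hzy).trans hzw

/-- Necessity: on the closure of a stratum the radical can only shrink. -/
theorem closure_rd_le (hJ2 : ∀ x ∈ RepVar Q d K Rels, SqZero Q d K x)
    (x y : GenV Q d K Rels)
    (h : x ∈ closure (RS Q d K Rels (radLayering Q d K 1 y.1))) (i : Fin Q.n) :
    rd Q d K x.1 i ≤ rd Q d K y.1 i := by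
  by_contra hlt
  have ho : IsOpen {z : GenV Q d K Rels | rd Q d K y.1 i + 1 ≤ rd Q d K z.1 i} :=
    (isOpen_rd_ge Q d K _ i).preimage continuous_subtype_val
  obtain ⟨z, hz1, hz2⟩ := mem_closure_iff.1 h _ ho (by
    simp only [Set.mem_ofPred_eq]; omega)
  have := (radLayering_eq_iff Q d K _ _ (hJ2 _ z.2) (hJ2 _ y.2)).1 hz2
  simp only [Set.mem_ofPred_eq, this] at hz1
  omega

theorem closure_le_sc (x : GenV Q d K Rels) (S : Fin 2 → Fin Q.n → ℕ) (U0 : Fin Q.n → ℕ)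
    (hU : ∀ y ∈ {y | y ∈ RepVar Q d K Rels ∧ radLayering Q d K 1 y = S}, U0 ≤ socDim Q d K y)
    (h : x ∈ closure (RS Q d K Rels S)) :
    U0 ≤ socDim Q d K x.1 := by
  intro i
  by_contra hlt
  have ho : IsOpen {z : GenV Q d K Rels | socDim Q d K z.1 i ≤ socDim Q d K x.1 i} :=
    (isOpen_sc_le Q d K _ i).preimage continuous_subtype_val
  obtain ⟨z, hz1, hz2⟩ := mem_closure_iff.1 h _ ho (le_refl (socDim Q d K x.1 i))
  have h3 : U0 i ≤ socDim Q d K z.1 i := hU z.1 ⟨z.2, hz2⟩ i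
  have h4 : socDim Q d K z.1 i ≤ socDim Q d K x.1 i := hz1
  exact hlt (h3.trans h4)

theorem zero_le_iff (x y : RepSpace Q d K) :
    radLayering Q d K 1 x 0 ≤ radLayering Q d K 1 y 0 ↔ ∀ i, rd Q d K y i ≤ rd Q d K x i := by
  refine forall_congr' fun i => ?_
  have e1 := radLayering_zero Q d K x i
  have e2 := radLayering_zero Q d K y i
  have h1 := rd_le Q d K x i
  have h2 := rd_le Q d K y i
  change radLayering Q d K 1 x 0 i ≤ radLayering Q d K 1 y 0 i ↔ rd Q d K y i ≤ rd Q d K x i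
  rw [e1, e2]
  constructor <;> intro h <;> omega

theorem part_one [Infinite K] (hJ2 : ∀ x ∈ RepVar Q d K Rels, SqZero Q d K x)
    (S Stilde : Fin 2 → Fin Q.n → ℕ) (U0 U0' : Fin Q.n → ℕ)
    (hS : IsGenericSocle Q d K {x | x ∈ RepVar Q d K Rels ∧ radLayering Q d K 1 x = S} U0)
    (hS' : IsGenericSocle Q d K
      {x | x ∈ RepVar Q d K Rels ∧ radLayering Q d K 1 x = Stilde} U0') :
    RS Q d K Rels Stilde ⊆ closure (RS Q d K Rels S) ↔ (S 0 ≤ Stilde 0 ∧ U0 ≤ U0') := by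
  obtain ⟨hmin, y, ⟨hyV, rfl⟩, rfl⟩ := hS
  obtain ⟨hmin', y', ⟨hyV', rfl⟩, rfl⟩ := hS'
  constructor
  · intro h
    have hm : (⟨y', hyV'⟩ : GenV Q d K Rels) ∈ RS Q d K Rels (radLayering Q d K 1 y') := rfl
    exact ⟨(zero_le_iff Q d K y y').2
        (closure_rd_le Q d K Rels hJ2 ⟨y', hyV'⟩ ⟨y, hyV⟩ (h hm)),
      closure_le_sc Q d K Rels ⟨y', hyV'⟩ _ _ hmin (h hm)⟩
  · rintro ⟨h0, hU⟩ x hx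
    have hx' : rd Q d K x.1 = rd Q d K y' :=
      (radLayering_eq_iff Q d K _ _ (hJ2 _ x.2) (hJ2 _ hyV')).1 hx
    refine mem_closure_RS Q d K Rels hJ2 x ⟨y, hyV⟩ (fun i => ?_) (fun i => ?_)
    · rw [hx']
      exact (zero_le_iff Q d K y y').1 h0 i
    · exact (rd_le_sc Q d K y (hJ2 _ hyV) i).trans ((hU i).trans (hmin' x.1 ⟨x.2, hx⟩ i))

theorem component_eq [Infinite K] (hJ2 : ∀ x ∈ RepVar Q d K Rels, SqZero Q d K x)
    (C : Set (GenV Q d K Rels)) (hC : C ∈ irreducibleComponents (GenV Q d K Rels)) :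
    ∃ y : GenV Q d K Rels, C = closure (RS Q d K Rels (radLayering Q d K 1 y.1)) := by
  have hirr : ∀ y : GenV Q d K Rels,
      IsIrreducible (closure (RS Q d K Rels (radLayering Q d K 1 y.1))) := fun y =>
    IsIrreducible.closure ⟨⟨y, rfl⟩, RS_preirreducible Q d K Rels hJ2 _⟩
  have hfin : (Set.range fun y : GenV Q d K Rels => radLayering Q d K 1 y.1).Finite := by
    refine (Set.finite_Icc (0 : Fin 2 → Fin Q.n → ℕ) (fun _ => d)).subset ?_
    rintro _ ⟨y, rfl⟩
    refine ⟨fun _ _ => Nat.zero_le _, fun l i => ?_⟩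
    exact (Nat.sub_le _ _).trans (vdim_le Q d K _ i)
  have hfin2 : (Set.range fun y : GenV Q d K Rels =>
      closure (RS Q d K Rels (radLayering Q d K 1 y.1))).Finite := by
    have : (Set.range fun y : GenV Q d K Rels =>
      closure (RS Q d K Rels (radLayering Q d K 1 y.1))) = (fun S => closure (RS Q d K Rels S)) ''
        (Set.range fun y : GenV Q d K Rels => radLayering Q d K 1 y.1) := by
      rw [← Set.range_comp]; rfl
    rw [this]
    exact hfin.image _
  obtain ⟨z, hz, hCz⟩ := (isIrreducible_iff_sUnion_isClosed.1 hC.1) hfin2.toFinset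
    (by
      intro z hz
      obtain ⟨y, rfl⟩ := hfin2.mem_toFinset.1 hz
      exact isClosed_closure)
    (by
      intro x _
      exact ⟨_, Finset.mem_coe.2 (hfin2.mem_toFinset.2 ⟨x, rfl⟩), subset_closure rfl⟩)
  obtain ⟨y, rfl⟩ := hfin2.mem_toFinset.1 hz
  exact ⟨y, le_antisymm hCz (hC.2 (hirr y) hCz)⟩

theorem part_two [Infinite K] (hJ2 : ∀ x ∈ RepVar Q d K Rels, SqZero Q d K x)
    (C : Set (GenV Q d K Rels)) :
      C ∈ irreducibleComponents (GenV Q d K Rels) ↔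
      ∃ (S : Fin 2 → Fin Q.n → ℕ) (U0 : Fin Q.n → ℕ), hasDimVec S d ∧
        IsGenericSocle Q d K
          {x | x ∈ RepVar Q d K Rels ∧ radLayering Q d K 1 x = S} U0 ∧
        (∀ x ∈ RepVar Q d K Rels, topDim Q d K x ≤ S 0 → socDim Q d K x ≤ U0 →
          (topDim Q d K x = S 0 ∧ socDim Q d K x = U0)) ∧
        C = closure (RS Q d K Rels S) := by
  have hirr : ∀ y : GenV Q d K Rels,
      IsIrreducible (closure (RS Q d K Rels (radLayering Q d K 1 y.1))) := fun y =>
    IsIrreducible.closure ⟨⟨y, rfl⟩, RS_preirreducible Q d K Rels hJ2 _⟩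
  constructor
  · intro hC
    obtain ⟨y, rfl⟩ := component_eq Q d K Rels hJ2 C hC
    obtain ⟨U0, hU0⟩ := exists_genericSocle Q d K Rels hJ2 y
    refine ⟨_, U0, hasDimVec_radLayering Q d K y.1 (hJ2 _ y.2), hU0, ?_, rfl⟩
    intro x hx ht hs
    obtain ⟨Ut, hUt⟩ := exists_genericSocle Q d K Rels hJ2 ⟨x, hx⟩
    have hle : Ut ≤ socDim Q d K x := hUt.1 x ⟨hx, rfl⟩
    have hsub := (part_one Q d K Rels hJ2 _ _ _ _ hUt hU0).2 ⟨ht, hle.trans hs⟩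
    have hback := hC.2 (hirr ⟨x, hx⟩) (closure_minimal hsub isClosed_closure)
    have h2 := (part_one Q d K Rels hJ2 _ _ _ _ hU0 hUt).1 (subset_closure.trans hback)
    exact ⟨le_antisymm ht h2.1, le_antisymm hs (h2.2.trans hle)⟩
  · rintro ⟨S, U0, hdim, hU0, hmin, rfl⟩
    obtain ⟨y, ⟨hyV, rfl⟩, hyU⟩ := hU0.2
    obtain ⟨C', hC', hsub, -⟩ : ∃ C' : Set (GenV Q d K Rels),
        C' ∈ irreducibleComponents (GenV Q d K Rels) ∧
        closure (RS Q d K Rels (radLayering Q d K 1 y)) ⊆ C' ∧ True := by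
      obtain ⟨t, ht1, ht2, ht3⟩ := exists_preirreducible _ (hirr ⟨y, hyV⟩).2
      refine ⟨t, ⟨⟨(hirr ⟨y, hyV⟩).1.mono ht2, ht1⟩, fun u hu htu => ?_⟩, ht2, trivial⟩
      exact (ht3 u hu.2 htu).le
    obtain ⟨y', rfl⟩ := component_eq Q d K Rels hJ2 C' hC'
    obtain ⟨U', hU'⟩ := exists_genericSocle Q d K Rels hJ2 y'
    have h := (part_one Q d K Rels hJ2 _ _ _ _ hU' hU0).1 (subset_closure.trans hsub)
    obtain ⟨x, ⟨hxV, hxS⟩, hxU⟩ := hU'.2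
    have htop : topDim Q d K x = radLayering Q d K 1 y'.1 0 := by
      rw [← hxS]; rfl
    have hm := hmin x hxV (htop ▸ h.1) (hxU ▸ h.2)
    have he : radLayering Q d K 1 y = radLayering Q d K 1 y'.1 := by
      rw [radLayering_eq_iff Q d K _ _ (hJ2 _ hyV) (hJ2 _ y'.2)]
      have h0 := htop.symm.trans hm.1
      funext i
      exact le_antisymm ((zero_le_iff Q d K y'.1 y).1 h0.le i)
        ((zero_le_iff Q d K y y'.1).1 h0.ge i)
    rw [he]
    exact hC'

end Top

end QuiverData

open QuiverData in
/-- Let `Λ = KQ/I` with `J² = 0`. For `d`-dimensional semisimple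
sequences `S`, `S̃` (pairs), with generic socles `U0`, `Ũ0` of `Rep S`, `Rep S̃`:
`Rep S̃ ⊆ closure (Rep S)` iff `S_0 ⊆ S̃_0` and `S*_0 ⊆ S̃*_0`. In particular, the
irreducible components of `Rep_d(Λ)` are exactly the closures of those `Rep S` for which
the pair `(S_0, S*_0)` is minimal in the image of `x ↦ (Top M_x, soc M_x)` with respect
to componentwise inclusion. -/
theorem statement_12 (K : Type) [Field K] [IsAlgClosed K]
    (Q : QuiverData) (d : Fin Q.n → ℕ)
    (Rels : Set (FreeAlgebra K (Fin Q.n ⊕ Fin Q.numArrows)))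
    (hJ2 : ∀ x ∈ RepVar Q d K Rels, ∀ a b,
      (arrowMap Q d K x a) ∘ₗ (arrowMap Q d K x b) = 0) :
    (∀ (S Stilde : Fin 2 → Fin Q.n → ℕ), hasDimVec S d → hasDimVec Stilde d →
      ∀ (U0 U0' : Fin Q.n → ℕ),
      IsGenericSocle Q d K
        {x | x ∈ RepVar Q d K Rels ∧ radLayering Q d K 1 x = S} U0 →
      IsGenericSocle Q d K
        {x | x ∈ RepVar Q d K Rels ∧ radLayering Q d K 1 x = Stilde} U0' →
      ({x : GenV Q d K Rels | radLayering Q d K 1 x.1 = Stilde} ⊆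
          closure {x : GenV Q d K Rels | radLayering Q d K 1 x.1 = S}
        ↔ (S 0 ≤ Stilde 0 ∧ U0 ≤ U0'))) ∧
    ∀ C : Set (GenV Q d K Rels),
      C ∈ irreducibleComponents (GenV Q d K Rels) ↔
      ∃ (S : Fin 2 → Fin Q.n → ℕ) (U0 : Fin Q.n → ℕ), hasDimVec S d ∧
        IsGenericSocle Q d K
          {x | x ∈ RepVar Q d K Rels ∧ radLayering Q d K 1 x = S} U0 ∧
        (∀ x ∈ RepVar Q d K Rels, topDim Q d K x ≤ S 0 → socDim Q d K x ≤ U0 →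
          (topDim Q d K x = S 0 ∧ socDim Q d K x = U0)) ∧
        C = closure {x : GenV Q d K Rels | radLayering Q d K 1 x.1 = S} := by
  have : Infinite K := IsAlgClosed.instInfinite
  exact ⟨fun S St _ _ U0 U0' h h' => part_one Q d K Rels hJ2 S St U0 U0' h h',
    fun C => part_two Q d K Rels hJ2 C⟩
end

section
/- Let Λ = KQ/⟨all paths of length L+1⟩ be a local truncated path algebra over an algebraically closed field, where Q has a single vertex and r ≥ 2 loops, and let d be a positive integer. (I) If d > L+1, then for any d-dimensional semisimple sequence S = (S_0,…,S_L) the following are equivalent: (1) the closure of Rep S is an irreducible component of Rep_d(Λ); (2) dim S_l ≤ r·dim S_{l−1} and dim S_{l−1} ≤ r·dim S_l for all 1 ≤ l ≤ L; (3) Rep S ≠ ∅ and (S_L, S_{L−1}, …, S_0) is the generic socle layering of the modules in Rep S; (4) S = S(M) for some module M such that the pair (S(M), S*(M)) is a minimal element of the image of Θ. Consequently the irreducible components of Rep_d(Λ) are precisely the closures of the Rep S for the sequences S satisfying (2). (II) If d ≤ L+1, then Rep_d(Λ) is irreducible and its modules are generically uniserial. -/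
open Finset

namespace Stmt14

open QuiverData

/-- `Rep_d(Λ)` for the local truncated path algebra `Λ` on `r` loops with Loewy length
`L+1`, as a topological space. -/
abbrev LocV (K : Type) [Field K] (r L d : ℕ) :=
  TruncV (loopQuiver r) (fun _ => d) K L

/-- The stratum `Rep S` of points whose module has radical layering `S`. -/
abbrev LocRepS (K : Type) [Field K] (r L d : ℕ) (S : Fin (L+1) → ℕ) :
    Set (LocV K r L d) :=
  {x | radLayering (loopQuiver r) (fun _ => d) K L x.1 = fun l _ => S l}

/-- Condition (2) of Statement 14: `dim S_l ≤ r · dim S_{l−1}` and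
`dim S_{l−1} ≤ r · dim S_l` for all `1 ≤ l ≤ L`. -/
def Cond2 (r L : ℕ) (S : Fin (L+1) → ℕ) : Prop :=
  ∀ l : Fin L, S l.succ ≤ r * S l.castSucc ∧ S l.castSucc ≤ r * S l.succ

/-- Condition (3) of Statement 14: `Rep S ≠ ∅` and the reversed sequence
`(S_L, …, S_0)` is the generic socle layering of the modules in `Rep S`. -/
def Cond3 (K : Type) [Field K] (r L d : ℕ) (S : Fin (L+1) → ℕ) : Prop :=
  (LocRepS K r L d S).Nonempty ∧
  GenSoc (loopQuiver r) (fun _ => d) K L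
    {x | x ∈ TruncRepVar (loopQuiver r) (fun _ => d) K L ∧
      radLayering (loopQuiver r) (fun _ => d) K L x = fun l _ => S l}
    (fun l _ => S l.rev)

/-- Condition (4) of Statement 14: `S = S(M)` for a module `M` such that the pair
`(S(M), S*(M))` is a minimal element of the image of `Θ = (radical layering, socle
layering)` in the componentwise dominance order. -/
def Cond4 (K : Type) [Field K] (r L d : ℕ) (S : Fin (L+1) → ℕ) : Prop :=
  ∃ x : LocV K r L d,
    radLayering (loopQuiver r) (fun _ => d) K L x.1 = (fun l _ => S l) ∧
    ∀ y : LocV K r L d,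
      dominates (radLayering (loopQuiver r) (fun _ => d) K L y.1)
        (radLayering (loopQuiver r) (fun _ => d) K L x.1) →
      dominates (socLayering (loopQuiver r) (fun _ => d) K L y.1)
        (socLayering (loopQuiver r) (fun _ => d) K L x.1) →
      (radLayering (loopQuiver r) (fun _ => d) K L y.1 =
          radLayering (loopQuiver r) (fun _ => d) K L x.1 ∧
        socLayering (loopQuiver r) (fun _ => d) K L y.1 =
          socLayering (loopQuiver r) (fun _ => d) K L x.1)

end Stmt14

namespace Loc14

section LinAlg

set_option linter.unusedSectionVars false

variable {K : Type} [Field K] {V : Type} [AddCommGroup V] [Module K V] {r : ℕ}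

/-- The radical series of a tuple of endomorphisms. -/
def rad (A : Fin r → V →ₗ[K] V) : ℕ → Submodule K V
  | 0 => ⊤
  | (l+1) => ⨆ a, (rad A l).map (A a)

theorem rad_anti (A : Fin r → V →ₗ[K] V) : ∀ l, rad A (l+1) ≤ rad A l
  | 0 => le_top
  | (l+1) => iSup_mono fun _ => Submodule.map_mono (rad_anti A l)

theorem rad_antitone (A : Fin r → V →ₗ[K] V) : Antitone (rad A) :=
  antitone_nat_of_succ_le (rad_anti A)

theorem rad_act (A : Fin r → V →ₗ[K] V) (l : ℕ) (a : Fin r) :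
    (rad A l).map (A a) ≤ rad A (l+1) := le_iSup (fun a => (rad A l).map (A a)) a

/-- A filtration of length `L+1` with semisimple layers. -/
structure IsFil (A : Fin r → V →ₗ[K] V) (L : ℕ) (F : ℕ → Submodule K V) : Prop where
  top : F 0 = ⊤
  bot : F (L+1) = ⊥
  anti : ∀ l, F (l+1) ≤ F l
  act : ∀ l a, (F l).map (A a) ≤ F (l+1)

/-- Layer dimensions. -/
noncomputable def lay (F : ℕ → Submodule K V) (l : ℕ) : ℕ :=
  Module.finrank K (F l) - Module.finrank K (F (l+1))

variable [FiniteDimensional K V]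

theorem lay_add {F : ℕ → Submodule K V} {l : ℕ} (h : F (l+1) ≤ F l) :
    Module.finrank K (F l) = lay F l + Module.finrank K (F (l+1)) := by
  have := Submodule.finrank_mono h
  unfold lay; omega

theorem exists_compl_in {P Q : Submodule K V} (h : P ≤ Q) :
    ∃ C : Submodule K V, C ≤ Q ∧ P ⊔ C = Q ∧
      Module.finrank K C = Module.finrank K Q - Module.finrank K P := by
  obtain ⟨C, hC⟩ := Submodule.exists_isCompl P
  have h1 : P ⊔ C ⊓ Q = Q := by
    rw [← sup_inf_assoc_of_le C h, hC.sup_eq_top, top_inf_eq]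
  have h2 : P ⊓ (C ⊓ Q) = ⊥ := by
    rw [← inf_assoc, hC.inf_eq_bot, bot_inf_eq]
  refine ⟨C ⊓ Q, inf_le_right, h1, ?_⟩
  have := Submodule.finrank_sup_add_finrank_inf_eq P (C ⊓ Q)
  rw [h1, h2, finrank_bot] at this
  omega

theorem finrank_iSup_map_le (A : Fin r → V →ₗ[K] V) (C : Submodule K V) :
    Module.finrank K (⨆ a, C.map (A a) : Submodule K V) ≤ r * Module.finrank K C := by
  have h : ∀ s : Finset (Fin r), Module.finrank K (s.sup fun a => C.map (A a) : Submodule K V)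
      ≤ s.card * Module.finrank K C := by
    intro s
    induction s using Finset.induction_on with
    | empty => simp
    | insert a s ha ih =>
      rw [Finset.sup_insert, Finset.card_insert_of_notMem ha]
      have h1 := Submodule.finrank_sup_add_finrank_inf_eq (C.map (A a))
        (s.sup fun a => C.map (A a))
      have h2 := Submodule.finrank_map_le (A a) C
      rw [add_mul, one_mul]
      omega
  have := h Finset.univ
  rwa [Finset.sup_univ_eq_iSup, Finset.card_univ, Fintype.card_fin] at this

theorem rad_real (A : Fin r → V →ₗ[K] V) (l : ℕ) :
    lay (rad A) (l+1) ≤ r * lay (rad A) l := by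
  obtain ⟨C, -, hC, hd⟩ := exists_compl_in (rad_anti A l)
  have h1 : rad A (l+1) ≤ rad A (l+2) ⊔ ⨆ a, C.map (A a) := by
    conv_lhs => rw [rad, ← hC]
    refine iSup_le fun a => ?_
    rw [Submodule.map_sup]
    exact sup_le_sup (rad_act A (l+1) a) (le_iSup (fun a => C.map (A a)) a)
  have h2 := Submodule.finrank_mono h1
  have h3 := Submodule.finrank_sup_add_finrank_inf_eq (rad A (l+2)) (⨆ a, C.map (A a))
  have h4 := finrank_iSup_map_le A C
  rw [hd] at h4
  unfold lay
  show _ - Module.finrank K (rad A (l+2)) ≤ _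
  omega

theorem isFil_rad {A : Fin r → V →ₗ[K] V} {L : ℕ} (h : rad A (L+1) = ⊥) :
    IsFil A L (rad A) :=
  ⟨rfl, h, rad_anti A, rad_act A⟩

/-- Realizability of the layer dimensions. -/
def RealFil (r : ℕ) (F : ℕ → Submodule K V) : Prop := ∀ l, lay F (l+1) ≤ r * lay F l

theorem finrank_sup_span {P : Submodule K V} {u : V} (hu : u ∉ P) :
    Module.finrank K (P ⊔ K ∙ u : Submodule K V) = Module.finrank K P + 1 := by
  have h := Submodule.finrank_sup_add_finrank_inf_eq P (K ∙ u)
  have hu0 : u ≠ 0 := fun h => hu (h ▸ P.zero_mem)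
  have h2 : P ⊓ (K ∙ u) = ⊥ := by
    rw [eq_bot_iff]
    rintro v ⟨hv, hv'⟩
    obtain ⟨c, rfl⟩ := Submodule.mem_span_singleton.1 hv'
    by_cases hc : c = 0
    · simp [hc]
    · exact absurd ((P.smul_mem_iff hc).1 hv) hu
  rw [h2, finrank_bot, finrank_span_singleton hu0] at h
  omega

/-- First improvement step: the last layer vanishes and some layer has dimension at least 2. -/
theorem improve1 {A : Fin r → V →ₗ[K] V} {L : ℕ} {F : ℕ → Submodule K V} (hr : 2 ≤ r)
    (hF : IsFil A L F) (hR : RealFil r F) (hL : lay F L = 0) (j : ℕ) (hj : 2 ≤ lay F j)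
    (hjmax : ∀ k, j < k → lay F k ≤ 1) :
    ∃ F', IsFil A L F' ∧ RealFil r F' ∧
      (∀ l, Module.finrank K (F l) ≤ Module.finrank K (F' l)) ∧
      Module.finrank K (F (j+1)) < Module.finrank K (F' (j+1)) ∧ j + 1 ≤ L := by
  classical
  have hFL : F L = ⊥ := by
    have h1 := lay_add (hF.anti L)
    rw [hL, hF.bot, finrank_bot] at h1
    exact Submodule.finrank_eq_zero.1 h1
  have hjL : j + 1 ≤ L := by
    by_contra h
    have : F j ≤ F L := antitone_nat_of_succ_le hF.anti (by omega)
    rw [hFL, le_bot_iff] at this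
    rw [lay, this, finrank_bot] at hj; omega
  have hlt : F (j+1) < F j := by
    refine lt_of_le_of_ne (hF.anti j) fun h => ?_
    rw [lay, h] at hj; omega
  obtain ⟨u, huj, hu⟩ := SetLike.exists_of_lt hlt
  have hus : (K ∙ u) ≤ F j := by simpa using huj
  set F' : ℕ → Submodule K V := fun l =>
    if l ≤ j then F l else if l = j+1 then F (j+1) ⊔ K ∙ u else F (l-1) with hF'
  have e1 : ∀ l, l ≤ j → F' l = F l := fun l hl => by simp [hF', hl]
  have e2 : F' (j+1) = F (j+1) ⊔ K ∙ u := by simp [hF']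
  have e3 : ∀ l, j + 1 ≤ l → F' (l+1) = F l := fun l hl => by
    have h1 : ¬ (l + 1 ≤ j) := by omega
    have h2 : l ≠ j := by omega
    simp [hF', h1, h2]
  have f2 : Module.finrank K (F' (j+1)) = Module.finrank K (F (j+1)) + 1 := by
    rw [e2, finrank_sup_span hu]
  have l1 : ∀ l, l < j → lay F' l = lay F l := fun l hl => by
    rw [lay, lay, e1 l hl.le, e1 (l+1) hl]
  have l2 : lay F' j = lay F j - 1 := by
    rw [lay, lay, e1 j le_rfl, f2]; omega
  have l3 : lay F' (j+1) = 1 := by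
    rw [lay, f2, e3 _ le_rfl]; omega
  have l4 : ∀ l, j + 1 ≤ l → lay F' (l+1) = lay F l := fun l hl => by
    rw [lay, lay, e3 l hl, e3 (l+1) (by omega)]
  refine ⟨F', ⟨?_, ?_, ?_, ?_⟩, ?_, ?_, ?_, hjL⟩
  · rw [e1 0 (Nat.zero_le _), hF.top]
  · rw [e3 L hjL, hFL]
  · intro l
    rcases lt_trichotomy l j with h | h | h
    · rw [e1 l h.le, e1 (l+1) h]; exact hF.anti l
    · subst h; rw [e1 _ le_rfl, e2]; exact sup_le (hF.anti _) hus
    · obtain ⟨m, rfl⟩ : ∃ m, l = m + 1 := ⟨l-1, by omega⟩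
      rcases eq_or_lt_of_le (show j ≤ m by omega) with h' | h'
      · subst h'; rw [e2, e3 _ le_rfl]; exact le_sup_left
      · rw [e3 _ h', e3 _ (by omega)]; exact hF.anti _
  · intro l a
    rcases lt_trichotomy l j with h | h | h
    · rw [e1 l h.le, e1 (l+1) h]; exact hF.act l a
    · subst h; rw [e1 _ le_rfl, e2]; exact (hF.act _ a).trans le_sup_left
    · obtain ⟨m, rfl⟩ : ∃ m, l = m + 1 := ⟨l-1, by omega⟩
      rcases eq_or_lt_of_le (show j ≤ m by omega) with h' | h'
      · subst h'; rw [e2, e3 _ le_rfl]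
        exact (Submodule.map_mono (sup_le (hF.anti _) hus)).trans (hF.act _ a)
      · rw [e3 _ h', e3 _ (by omega)]; exact hF.act _ a
  · intro l
    rcases lt_trichotomy (l+1) j with h | h | h
    · rw [l1 _ h, l1 _ (by omega)]; exact hR l
    · subst h; rw [l2, l1 _ (Nat.lt_succ_self _)]; exact (Nat.sub_le _ _).trans (hR l)
    · rcases eq_or_lt_of_le (show j ≤ l by omega) with h' | h'
      · subst h'; rw [l3, l2]; nlinarith [show 1 ≤ lay F j - 1 by omega]
      · obtain ⟨m, rfl⟩ : ∃ m, l = m + 1 := ⟨l-1, by omega⟩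
        rw [l4 _ h']
        rcases eq_or_lt_of_le (show j ≤ m by omega) with h'' | h''
        · subst h''; rw [l3]; have := hjmax (j+1) (by omega); omega
        · rw [l4 _ h'']; exact hR m
  · intro l
    rcases lt_trichotomy l (j+1) with h | h | h
    · rw [e1 l (by omega)]
    · subst h; omega
    · obtain ⟨m, rfl⟩ : ∃ m, l = m + 1 := ⟨l-1, by omega⟩
      rw [e3 _ (by omega)]; exact Submodule.finrank_mono (hF.anti m)
  · omega

/-- Second improvement step. -/
theorem improve2 {A : Fin r → V →ₗ[K] V} {L : ℕ} {F : ℕ → Submodule K V} (hr : 2 ≤ r)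
    (hF : IsFil A L F) (hR : RealFil r F) (j : ℕ) (hjL : j + 1 ≤ L)
    (hpos : 1 ≤ lay F (j+1)) (hj : r * lay F (j+1) < lay F j) :
    ∃ F', IsFil A L F' ∧ RealFil r F' ∧
      (∀ l, Module.finrank K (F l) ≤ Module.finrank K (F' l)) ∧
      Module.finrank K (F (j+1)) < Module.finrank K (F' (j+1)) := by
  classical
  -- find a suitable vector
  obtain ⟨u, huj, hu, hua⟩ : ∃ u ∈ F j, u ∉ F (j+1) ∧ ∀ a, A a u ∈ F (j+2) := by
    by_contra hcon
    push Not at hcon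
    let Q := (F (j+2)).submoduleOf (F (j+1))
    let f : F j →ₗ[K] (Fin r → (F (j+1) ⧸ Q)) := LinearMap.pi fun a =>
      Q.mkQ ∘ₗ ((A a).restrict (p := F j) (q := F (j+1))
        (fun x hx => hF.act j a ⟨x, hx, rfl⟩))
    have hk : Module.finrank K (LinearMap.ker f) ≤ Module.finrank K (F (j+1)) := by
      have : (LinearMap.ker f).map (F j).subtype ≤ F (j+1) := by
        rintro _ ⟨⟨v, hv⟩, hv', rfl⟩
        by_contra hn
        obtain ⟨a, ha⟩ := hcon v hv hn
        have hz := congrFun (LinearMap.mem_ker.1 hv') a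
        simp only [f, LinearMap.pi_apply, LinearMap.comp_apply, Pi.zero_apply,
          Submodule.mkQ_apply, Submodule.Quotient.mk_eq_zero] at hz
        exact ha hz
      have h2 := Submodule.finrank_mono this
      rwa [LinearEquiv.finrank_eq (Submodule.equivMapOfInjective (F j).subtype
        Subtype.val_injective (LinearMap.ker f)).symm] at h2
    have hrk := LinearMap.finrank_range_add_finrank_ker f
    have hle := Submodule.finrank_le (LinearMap.range f)
    have hQ : Module.finrank K (F (j+1) ⧸ Q) = lay F (j+1) := by
      have h1 := Submodule.finrank_quotient_add_finrank Q
      have h2 : Module.finrank K Q = Module.finrank K (F (j+2)) :=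
        LinearEquiv.finrank_eq (Submodule.submoduleOfEquivOfLe (hF.anti (j+1)))
      have h3 := lay_add (hF.anti (j+1))
      rw [h2] at h1
      have h4 : Module.finrank K (F (j + 1 + 1)) = Module.finrank K (F (j+2)) := rfl
      omega
    rw [Module.finrank_pi_fintype] at hle
    simp only [hQ, Finset.sum_const, Finset.card_univ, Fintype.card_fin, smul_eq_mul] at hle
    have h3 := lay_add (hF.anti j)
    omega
  have hus : (K ∙ u) ≤ F j := by simpa using huj
  set F' : ℕ → Submodule K V := Function.update F (j+1) (F (j+1) ⊔ K ∙ u) with hF'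
  have e1 : ∀ l, l ≠ j+1 → F' l = F l := fun l hl => Function.update_of_ne hl _ _
  have e2 : F' (j+1) = F (j+1) ⊔ K ∙ u := by simp [hF']
  have f2 : Module.finrank K (F' (j+1)) = Module.finrank K (F (j+1)) + 1 := by
    rw [e2, finrank_sup_span hu]
  have l1 : ∀ l, l ≠ j → l ≠ j+1 → lay F' l = lay F l := fun l hl hl' => by
    rw [lay, lay, e1 l hl', e1 (l+1) (by omega)]
  have l2 : lay F' j = lay F j - 1 := by
    rw [lay, lay, e1 j (by omega), f2]; omega
  have l3 : lay F' (j+1) = lay F (j+1) + 1 := by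
    have := Submodule.finrank_mono (hF.anti (j+1))
    rw [lay, lay, f2, e1 (j+1+1) (by omega)]
    omega
  refine ⟨F', ⟨?_, ?_, ?_, ?_⟩, ?_, ?_, ?_⟩
  · rw [e1 0 (by omega), hF.top]
  · rw [e1 (L+1) (by omega), hF.bot]
  · intro l
    by_cases h : l = j
    · subst h; rw [e2, e1 l (by omega)]; exact sup_le (hF.anti _) hus
    · by_cases h' : l = j+1
      · subst h'; rw [e2, e1 _ (by omega)]; exact (hF.anti _).trans le_sup_left
      · rw [e1 _ h', e1 _ (by omega)]; exact hF.anti _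
  · intro l a
    by_cases h : l = j
    · subst h; rw [e2, e1 l (by omega)]; exact (hF.act _ a).trans le_sup_left
    · by_cases h' : l = j+1
      · subst h'; rw [e2, e1 _ (by omega), Submodule.map_sup]
        refine sup_le (hF.act _ a) ?_
        rw [Submodule.map_span_le]
        rintro _ rfl
        exact hua a
      · rw [e1 _ h', e1 _ (by omega)]; exact hF.act _ a
  · intro l
    by_cases h : l = j
    · subst h; rw [l2, l3]
      have h5 : r * lay F (l+1) ≤ lay F l - 1 := by omega
      nlinarith
    · by_cases h' : l = j+1
      · subst h'; rw [l3, l1 _ (by omega) (by omega)]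
        exact (hR _).trans (Nat.mul_le_mul_left _ (Nat.le_succ _))
      · rw [l1 l h h']
        by_cases h'' : l + 1 = j
        · rw [h'', l2, ← h'']; exact (Nat.sub_le _ _).trans (hR l)
        · rw [l1 _ h'' (by omega)]; exact hR l
  · intro l
    by_cases h : l = j+1
    · subst h; omega
    · rw [e1 l h]
  · omega

/-- A filtration which cannot be improved. -/
theorem exists_terminal {A : Fin r → V →ₗ[K] V} {L : ℕ} (hr : 2 ≤ r)
    (h : rad A (L+1) = ⊥) :
    ∃ F, IsFil A L F ∧ RealFil r F ∧
      (lay F L = 0 → ∀ j, lay F j ≤ 1) ∧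
      (∀ j, j + 1 ≤ L → 1 ≤ lay F (j+1) → lay F j ≤ r * lay F (j+1)) := by
  let m : (ℕ → Submodule K V) → ℕ := fun F => ∑ l ∈ Finset.range (L+1), Module.finrank K (F l)
  have hb : ∀ F, m F ≤ (L+1) * Module.finrank K V := by
    intro F
    have := Finset.sum_le_card_nsmul (Finset.range (L+1)) (fun l => Module.finrank K (F l))
      (Module.finrank K V) (fun l _ => Submodule.finrank_le _)
    simpa using this
  -- choose a maximal one
  have key : ∃ F, (IsFil A L F ∧ RealFil r F) ∧ ∀ F', (IsFil A L F' ∧ RealFil r F') →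
      m F' ≤ m F := by
    let P : Set ℕ := {n | ∃ F, (IsFil A L F ∧ RealFil r F) ∧ m F = n}
    have hP : P.Nonempty := ⟨_, rad A, ⟨isFil_rad h, rad_real A⟩, rfl⟩
    have hPb : BddAbove P := ⟨(L+1) * Module.finrank K V, by rintro _ ⟨F, -, rfl⟩; exact hb F⟩
    obtain ⟨F, hF, hm⟩ := Nat.sSup_mem hP hPb
    exact ⟨F, hF, fun F' hF' => hm ▸ le_csSup hPb ⟨F', hF', rfl⟩⟩
  obtain ⟨F, ⟨hF, hR⟩, hmax⟩ := key
  have nope : ∀ F' j, IsFil A L F' → RealFil r F' →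
      (∀ l, Module.finrank K (F l) ≤ Module.finrank K (F' l)) →
      Module.finrank K (F (j+1)) < Module.finrank K (F' (j+1)) → j + 1 ≤ L → False := by
    intro F' j h1 h2 h3 h4 h5
    have := hmax F' ⟨h1, h2⟩
    have h6 : m F < m F' := Finset.sum_lt_sum (fun l _ => h3 l)
      ⟨j+1, Finset.mem_range.2 (by omega), h4⟩
    omega
  refine ⟨F, hF, hR, ?_, ?_⟩
  · intro h0
    by_contra hcon
    push Not at hcon
    have hfin : ∀ j, 2 ≤ lay F j → j ≤ L := by
      intro j hj
      by_contra hjL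
      have : F j ≤ F (L+1) := antitone_nat_of_succ_le hF.anti (by omega)
      rw [hF.bot, le_bot_iff] at this
      rw [lay, this, finrank_bot] at hj; omega
    obtain ⟨j0, hj0⟩ := hcon
    let j := Nat.findGreatest (fun j => 2 ≤ lay F j) L
    have hj : 2 ≤ lay F j := Nat.findGreatest_spec (P := fun j => 2 ≤ lay F j)
      (hfin j0 hj0) hj0
    obtain ⟨F', a1, a2, a3, a4, a5⟩ := improve1 hr hF hR h0 j hj (by
      intro k hk
      by_contra hk2
      exact Nat.findGreatest_is_greatest hk (hfin k (by omega)) (by omega : 2 ≤ lay F k))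
    exact nope F' j a1 a2 a3 a4 a5
  · intro j hjL hpos
    by_contra hcon
    obtain ⟨F', a1, a2, a3, a4⟩ := improve2 hr hF hR j hjL hpos (by omega)
    exact nope F' j a1 a2 a3 a4 hjL

end LinAlg

end Loc14

namespace Loc14

open scoped Topology

section Zar

variable {ι κ K : Type} [Field K]

/-- Polynomial functions on affine space. -/
def IsPoly (f : (ι → K) → K) : Prop := ∃ p : MvPolynomial ι K, ∀ x, f x = MvPolynomial.eval x p

theorem IsPoly.coord (i : ι) : IsPoly (fun x : ι → K => x i) := ⟨MvPolynomial.X i, by simp⟩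
theorem IsPoly.const (c : K) : IsPoly (fun _ : ι → K => c) := ⟨MvPolynomial.C c, by simp⟩
theorem IsPoly.add {f g : (ι → K) → K} (hf : IsPoly f) (hg : IsPoly g) :
    IsPoly (fun x => f x + g x) := by
  obtain ⟨p, hp⟩ := hf
  obtain ⟨q, hq⟩ := hg
  exact ⟨p + q, fun x => by simp [hp, hq]⟩
theorem IsPoly.mul {f g : (ι → K) → K} (hf : IsPoly f) (hg : IsPoly g) :
    IsPoly (fun x => f x * g x) := by
  obtain ⟨p, hp⟩ := hf
  obtain ⟨q, hq⟩ := hg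
  exact ⟨p * q, fun x => by simp [hp, hq]⟩
theorem IsPoly.sum {α : Type*} (s : Finset α) {f : α → (ι → K) → K} (hf : ∀ a, IsPoly (f a)) :
    IsPoly (fun x => ∑ a ∈ s, f a x) := by
  choose p hp using hf
  exact ⟨∑ a ∈ s, p a, fun x => by simp [hp, map_sum]⟩
theorem IsPoly.prod {α : Type*} (s : Finset α) {f : α → (ι → K) → K} (hf : ∀ a, IsPoly (f a)) :
    IsPoly (fun x => ∏ a ∈ s, f a x) := by
  choose p hp using hf
  exact ⟨∏ a ∈ s, p a, fun x => by simp [hp, map_prod]⟩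
theorem IsPoly.det {n : Type*} [Fintype n] [DecidableEq n] {M : (ι → K) → Matrix n n K}
    (hM : ∀ i j, IsPoly (fun x => M x i j)) : IsPoly (fun x => (M x).det) := by
  simp only [Matrix.det_apply']
  exact IsPoly.sum _ fun σ => (IsPoly.const _).mul (IsPoly.prod _ fun i => hM _ _)

theorem zar_isOpen_ne {f : (ι → K) → K} (hf : IsPoly f) :
    IsOpen[zariskiTopology ι K] {x | f x ≠ 0} := by
  obtain ⟨p, hp⟩ := hf
  exact TopologicalSpace.isOpen_generateFrom_of_mem ⟨p, by simp [hp]⟩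

theorem zar_continuous {Φ : (ι → K) → (κ → K)} (h : ∀ k, IsPoly (fun x => Φ x k)) :
    Continuous[zariskiTopology ι K, zariskiTopology κ K] Φ := by
  let _ := zariskiTopology ι K
  unfold zariskiTopology
  rw [continuous_generateFrom_iff]
  rintro _ ⟨p, rfl⟩
  choose q hq using h
  refine zar_isOpen_ne (f := fun x => MvPolynomial.eval (Φ x) p)
    ⟨MvPolynomial.bind₁ q p, fun x => ?_⟩
  show MvPolynomial.eval (Φ x) p = _
  rw [← MvPolynomial.coe_aeval_eq_eval, ← MvPolynomial.coe_aeval_eq_eval]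
  simp only [RingHom.coe_coe]
  rw [MvPolynomial.aeval_bind₁]
  congr 2
  funext k
  exact hq k x

theorem zar_irreducible [Infinite K] :
    @IsIrreducible (ι → K) (zariskiTopology ι K) Set.univ := by
  let _ := zariskiTopology ι K
  have hb : TopologicalSpace.IsTopologicalBasis
      ({U | ∃ p : MvPolynomial ι K, U = {x | MvPolynomial.eval x p ≠ 0}} : Set (Set (ι → K))) := by
    have h1 : {U | ∃ p : MvPolynomial ι K, U = {x | MvPolynomial.eval x p ≠ 0}} =
        insert (Set.univ : Set (ι → K))
          {U | ∃ p : MvPolynomial ι K, U = {x | MvPolynomial.eval x p ≠ 0}} := by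
      symm
      apply Set.insert_eq_of_mem
      exact ⟨1, by ext; simp⟩
    rw [h1]
    refine TopologicalSpace.isTopologicalBasis_of_subbasis_of_inter rfl ?_
    rintro _ ⟨p, rfl⟩ _ ⟨q, rfl⟩
    exact ⟨p * q, by ext; simp⟩
  refine ⟨⟨fun _ => 0, trivial⟩, ?_⟩
  rintro u v hu hv ⟨x, -, hx⟩ ⟨y, -, hy⟩
  obtain ⟨_, ⟨p, rfl⟩, hxp, hpu⟩ := hb.exists_subset_of_mem_open hx hu
  obtain ⟨_, ⟨q, rfl⟩, hyq, hqv⟩ := hb.exists_subset_of_mem_open hy hv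
  have hp0 : p ≠ 0 := by rintro rfl; simp at hxp
  have hq0 : q ≠ 0 := by rintro rfl; simp at hyq
  obtain ⟨z, hz⟩ : ∃ z, MvPolynomial.eval z (p * q) ≠ 0 := by
    by_contra hcon
    push Not at hcon
    exact mul_ne_zero hp0 hq0 (MvPolynomial.funext fun z => by rw [hcon z, map_zero])
  rw [map_mul] at hz
  exact ⟨z, trivial, hpu (left_ne_zero_of_mul hz), hqv (right_ne_zero_of_mul hz)⟩

end Zar

section Open

variable {ι K : Type} [Field K] {V : Type} [AddCommGroup V] [Module K V] {r : ℕ}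

/-- Word actions. -/
def wd (A : Fin r → V →ₗ[K] V) : List (Fin r) → V →ₗ[K] V
  | [] => LinearMap.id
  | (a :: w) => A a ∘ₗ wd A w

theorem rad_eq_span {n : Type} (b : Module.Basis n K V) (A : Fin r → V →ₗ[K] V) (l : ℕ) :
    rad A l = Submodule.span K {v | ∃ w : List (Fin r), w.length = l ∧ ∃ i, v = wd A w (b i)} := by
  induction l with
  | zero =>
    rw [rad, ← b.span_eq]
    congr 1
    ext v
    constructor
    · rintro ⟨i, rfl⟩
      exact ⟨[], rfl, i, rfl⟩
    · rintro ⟨w, hw, i, rfl⟩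
      rw [List.length_eq_zero_iff] at hw
      subst hw
      exact ⟨i, rfl⟩
  | succ l ih =>
    rw [rad, ih]
    simp only [Submodule.map_span]
    rw [← Submodule.span_iUnion]
    congr 1
    ext v
    simp only [Set.mem_iUnion, Set.mem_image, Set.mem_ofPred_eq]
    constructor
    · rintro ⟨a, _, ⟨w, hw, i, rfl⟩, rfl⟩
      exact ⟨a :: w, by simp [hw], i, rfl⟩
    · rintro ⟨w, hw, i, rfl⟩
      cases w with
      | nil => simp at hw
      | cons a w => exact ⟨a, _, ⟨w, by simpa using hw, i, rfl⟩, rfl⟩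

theorem wd_poly {n : Type} [Fintype n] (b : Module.Basis n K V)
    {A : (ι → K) → Fin r → V →ₗ[K] V}
    (hA : ∀ a v (φ : Module.Dual K V), IsPoly (fun y => φ (A y a v)))
    (w : List (Fin r)) : ∀ v (φ : Module.Dual K V), IsPoly (fun y => φ (wd (A y) w v)) := by
  induction w with
  | nil => intro v φ; exact IsPoly.const (φ v)
  | cons a w ih =>
    intro v φ
    have : (fun y => φ (wd (A y) (a :: w) v)) =
        fun y => ∑ i, (b.coord i) (wd (A y) w v) * φ (A y a (b i)) := by
      funext y
      have h := congrArg (fun z => φ (A y a z)) (b.sum_repr (wd (A y) w v)).symm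
      simp only [map_sum, map_smul, smul_eq_mul] at h
      exact h
    rw [this]
    exact IsPoly.sum _ fun i => (ih v _).mul (hA _ _ _)

theorem rad_isOpen [FiniteDimensional K V]
    {A : (ι → K) → Fin r → V →ₗ[K] V}
    (hA : ∀ a v (φ : Module.Dual K V), IsPoly (fun y => φ (A y a v))) (l c : ℕ) :
    IsOpen[zariskiTopology ι K] {y | c ≤ Module.finrank K (rad (A y) l)} := by
  let _ := zariskiTopology ι K
  let b := Module.finBasis K V
  rw [isOpen_iff_forall_mem_open]
  intro x hx
  obtain ⟨f, hf, -, hli⟩ := Submodule.exists_fun_fin_finrank_span_eq K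
    {v | ∃ w : List (Fin r), w.length = l ∧ ∃ i, v = wd (A x) w (b i)}
  rw [Set.mem_ofPred_eq, rad_eq_span b] at hx
  have hli' := hli.comp (Fin.castLE hx) (Fin.castLE_injective hx)
  choose w hw i hi using fun k => hf (Fin.castLE hx k)
  obtain ⟨P, hP⟩ := LinearMap.exists_leftInverse_of_injective
    (Fintype.linearCombination K (f ∘ Fin.castLE hx))
    (LinearMap.ker_eq_bot.2 (linearIndependent_iff_injective_fintypeLinearCombination.1 hli'))
  let M : (ι → K) → Matrix (Fin c) (Fin c) K := fun y =>
    Matrix.of fun p q => (LinearMap.proj p ∘ₗ P) (wd (A y) (w q) (b (i q)))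
  refine ⟨{y | (M y).det ≠ 0}, ?_, zar_isOpen_ne (IsPoly.det fun p q => ?_), ?_⟩
  · intro y hy
    have h1 := Matrix.linearIndependent_cols_of_det_ne_zero hy
    have h2 : LinearIndependent K (fun q => wd (A y) (w q) (b (i q))) := by
      refine LinearIndependent.of_comp P ?_
      exact h1
    have h3 := finrank_span_eq_card h2
    rw [Fintype.card_fin] at h3
    show c ≤ _
    conv_lhs => rw [← h3]
    apply Submodule.finrank_mono
    rw [rad_eq_span b]
    apply Submodule.span_mono
    rintro _ ⟨q, rfl⟩
    exact ⟨w q, hw q, i q, rfl⟩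
  · exact wd_poly b hA (w q) (b (i q)) (LinearMap.proj p ∘ₗ P)
  · show (M x).det ≠ 0
    have : M x = 1 := by
      ext p q
      have h4 := congrFun (LinearMap.congr_fun hP (Pi.single q 1)) p
      rw [LinearMap.comp_apply, Fintype.linearCombination_apply_single, one_smul,
        Function.comp_apply, hi q] at h4
      simp only [M, Matrix.of_apply, LinearMap.comp_apply, LinearMap.proj_apply, h4,
        LinearMap.id_apply]
      rw [Matrix.one_apply, Pi.single_apply]
    rw [this, Matrix.det_one]
    exact one_ne_zero

/-- The socle series. -/
def soc (A : Fin r → V →ₗ[K] V) : ℕ → Submodule K V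
  | 0 => ⨅ a, LinearMap.ker (A a)
  | (l+1) => ⨅ a, (soc A l).comap (A a)

theorem soc_mono (A : Fin r → V →ₗ[K] V) : ∀ l, soc A l ≤ soc A (l+1)
  | 0 => iInf_mono fun a => by
      intro v hv
      rw [LinearMap.mem_ker] at hv
      rw [Submodule.mem_comap, hv]
      exact Submodule.zero_mem _
  | (l+1) => iInf_mono fun _ => Submodule.comap_mono (soc_mono A l)

theorem rad_le_soc {A : Fin r → V →ₗ[K] V} {L : ℕ} (h : rad A (L+1) = ⊥) (l : ℕ) (hl : l ≤ L) :
    rad A (L - l) ≤ soc A l := by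
  induction l with
  | zero =>
    refine le_iInf fun a v hv => ?_
    have := rad_act A L a ⟨v, hv, rfl⟩
    rw [h] at this
    exact this
  | succ l ih =>
    refine le_iInf fun a v hv => ih (by omega) ?_
    have := rad_act A (L - (l+1)) a ⟨v, hv, rfl⟩
    rwa [show L - (l+1) + 1 = L - l by omega] at this

theorem soc_eq_coann (A : Fin r → V →ₗ[K] V) (l : ℕ) :
    soc A l = (rad (fun a => (A a).dualMap) (l+1)).dualCoannihilator := by
  have key : ∀ N : Submodule K (Module.Dual K V),
      (⨆ a, N.map (A a).dualMap).dualCoannihilator = ⨅ a, N.dualCoannihilator.comap (A a) := by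
    intro N
    ext v
    simp only [Submodule.mem_iInf, Submodule.mem_comap, Submodule.mem_dualCoannihilator]
    constructor
    · intro h a φ hφ
      exact h _ ((le_iSup (fun a => N.map (A a).dualMap) a) ⟨φ, hφ, rfl⟩)
    · intro h φ hφ
      have : (⨆ a, N.map (A a).dualMap) ≤ LinearMap.ker (Module.Dual.eval K V v) := by
        refine iSup_le fun a => ?_
        rintro _ ⟨ψ, hψ, rfl⟩
        exact h a ψ hψ
      exact this hφ
  induction l with
  | zero =>
    rw [rad, key, soc, rad]
    congr 1
    funext a
    ext v
    rw [Submodule.mem_comap, Submodule.mem_dualCoannihilator, LinearMap.mem_ker]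
    exact ⟨fun h φ _ => by rw [h, map_zero],
      fun h => (Module.forall_dual_apply_eq_zero_iff K _).1 fun φ => h φ trivial⟩
  | succ l ih => rw [rad, key, soc, ih]

theorem soc_isOpen [FiniteDimensional K V]
    {A : (ι → K) → Fin r → V →ₗ[K] V}
    (hA : ∀ a v (φ : Module.Dual K V), IsPoly (fun y => φ (A y a v))) (l c : ℕ) :
    IsOpen[zariskiTopology ι K] {y | Module.finrank K (soc (A y) l) ≤ c} := by
  have h := rad_isOpen (V := Module.Dual K V) (A := fun y a => (A y a).dualMap) (by
    intro a φ Φ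
    obtain ⟨v, rfl⟩ := (Module.evalEquiv K V).surjective Φ
    exact hA a v φ) (l+1) (Module.finrank K V - c)
  convert h using 2
  ext y
  have := Subspace.finrank_add_finrank_dualCoannihilator_eq
    (rad (fun a => (A y a).dualMap) (l+1))
  rw [soc_eq_coann]
  omega

end Open

end Loc14

namespace Loc14

section Tail

variable {L : ℕ}

/-- Tail sums of a semisimple sequence. -/
def T (S : Fin (L+1) → ℕ) (l : ℕ) : ℕ := ∑ j : Fin (L+1), if l ≤ (j : ℕ) then S j else 0

theorem T_zero (S : Fin (L+1) → ℕ) : T S 0 = ∑ l, S l := by simp [T]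

theorem T_top (S : Fin (L+1) → ℕ) {l : ℕ} (hl : L + 1 ≤ l) : T S l = 0 := by
  unfold T
  refine Finset.sum_eq_zero fun j _ => ?_
  rw [if_neg]; omega

theorem T_succ (S : Fin (L+1) → ℕ) (l : Fin (L+1)) : T S l = S l + T S (l+1) := by
  unfold T
  have : S l = ∑ j : Fin (L+1), if j = l then S j else 0 := by simp
  rw [this, ← Finset.sum_add_distrib]
  refine Finset.sum_congr rfl fun j _ => ?_
  by_cases h : j = l
  · subst h; simp
  · have h' : (j : ℕ) ≠ l := fun h' => h (Fin.ext h')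
    rw [if_neg h, zero_add]
    by_cases h2 : (l : ℕ) ≤ j
    · rw [if_pos h2, if_pos (by omega)]
    · rw [if_neg h2, if_neg (by omega)]

theorem T_inj {S S' : Fin (L+1) → ℕ} (h : ∀ l, l ≤ L + 1 → T S l = T S' l) : S = S' := by
  funext l
  have h1 := T_succ S l
  have h2 := T_succ S' l
  rw [h l (by omega), h (l+1) (by omega)] at h1
  omega

theorem T_eq {S : Fin (L+1) → ℕ} {g : ℕ → ℕ} (h0 : g (L+1) = 0)
    (hg : ∀ l : Fin (L+1), g l = S l + g (l+1)) (l : ℕ) (hl : l ≤ L + 1) : g l = T S l := by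
  obtain ⟨k, hk⟩ : ∃ k, l + k = L + 1 := ⟨L+1-l, by omega⟩
  induction k generalizing l with
  | zero =>
    have : l = L + 1 := by omega
    subst this
    rw [h0, T_top S le_rfl]
  | succ k ih =>
    have h1 := hg ⟨l, by omega⟩
    have h2 := T_succ S ⟨l, by omega⟩
    have h3 := ih (l+1) (by omega) (by omega)
    simp only at h1 h2
    omega

theorem T_card (S : Fin (L+1) → ℕ) (l : ℕ) :
    Fintype.card {k : Σ j : Fin (L+1), Fin (S j) // l ≤ (k.1 : ℕ)} = T S l := by
  classical
  rw [Fintype.card_subtype]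
  have : (Finset.univ.filter fun k : Σ j : Fin (L+1), Fin (S j) => l ≤ (k.1 : ℕ)) =
      (Finset.univ.filter fun j : Fin (L+1) => l ≤ (j : ℕ)).sigma fun _ => Finset.univ := by
    ext ⟨a, b⟩; simp
  rw [this, Finset.card_sigma, T, Finset.sum_filter]
  simp

theorem T_partial (S : Fin (L+1) → ℕ) (l : Fin (L+1)) :
    (∑ j ∈ Finset.univ.filter (fun j => j ≤ l), S j) + T S (l+1) = ∑ j, S j := by
  rw [Finset.sum_filter, T, ← Finset.sum_add_distrib]
  refine Finset.sum_congr rfl fun j _ => ?_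
  by_cases h : j ≤ l
  · rw [if_pos h, if_neg (by have : (j:ℕ) ≤ l := h; omega), add_zero]
  · rw [if_neg h, if_pos (by have : (l:ℕ) < j := not_le.1 h; omega), zero_add]

theorem T_partial_rev (S : Fin (L+1) → ℕ) (l : Fin (L+1)) :
    (∑ j ∈ Finset.univ.filter (fun j => j ≤ l), S j.rev) = T S (L - l) := by
  rw [Finset.sum_filter, T]
  rw [← Equiv.sum_comp Fin.revPerm]
  refine Finset.sum_congr rfl fun j _ => ?_
  simp only [Fin.revPerm_apply, Fin.rev_rev]
  have : j.rev ≤ l ↔ L - (l:ℕ) ≤ j := by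
    rw [Fin.le_def, Fin.val_rev]; omega
  simp only [this]

theorem T_mono_of_le (S : Fin (L+1) → ℕ) {l m : ℕ} (h : l ≤ m) : T S m ≤ T S l := by
  unfold T
  refine Finset.sum_le_sum fun j _ => ?_
  by_cases h2 : m ≤ (j : ℕ)
  · rw [if_pos h2, if_pos (by omega)]
  · rw [if_neg h2]; exact Nat.zero_le _

end Tail

section Adapted

variable {K : Type} [Field K] {V : Type} [AddCommGroup V] [Module K V] [FiniteDimensional K V]
  {r L : ℕ}

theorem adapted {F : ℕ → Submodule K V} (htop : F 0 = ⊤) (hbot : F (L+1) = ⊥)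
    (hanti : ∀ l, F (l+1) ≤ F l) (S : Fin (L+1) → ℕ)
    (hdim : ∀ l, l ≤ L+1 → Module.finrank K (F l) = T S l) :
    ∃ b : Module.Basis (Σ l : Fin (L+1), Fin (S l)) K V,
      (∀ k, b k ∈ F k.1) ∧
      ∀ l, l ≤ L + 1 → F l ≤ Submodule.span K (b '' {k | l ≤ (k.1 : ℕ)}) := by
  have h1 : ∀ l : Fin (L+1), ∃ c : Fin (S l) → V, (∀ k, c k ∈ F l) ∧
      F l ≤ F (l+1) ⊔ Submodule.span K (Set.range c) := by
    intro l
    obtain ⟨C, hC1, hC2, hC3⟩ := exists_compl_in (hanti l)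
    have hd : Module.finrank K C = S l := by
      rw [hC3, hdim l (by omega), hdim (l+1) (by omega), T_succ]; omega
    let bb := Module.finBasisOfFinrankEq K C hd
    refine ⟨fun k => bb k, fun k => hC1 (bb k).2, ?_⟩
    have : Submodule.span K (Set.range fun k => (bb k : V)) = C := by
      have h := congrArg (Submodule.map C.subtype) bb.span_eq
      rw [Submodule.map_span, Submodule.map_top, Submodule.range_subtype, ← Set.range_comp] at h
      exact h
    rw [this, hC2]
  choose c hc1 hc2 using h1
  let b0 : (Σ l : Fin (L+1), Fin (S l)) → V := fun k => c k.1 k.2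
  have h2 : ∀ l, l ≤ L + 1 → F l ≤ Submodule.span K (b0 '' {k | l ≤ (k.1 : ℕ)}) := by
    intro l hl
    obtain ⟨k, hk⟩ : ∃ k, l + k = L + 1 := ⟨L+1-l, by omega⟩
    induction k generalizing l with
    | zero =>
      have : l = L + 1 := by omega
      subst this
      rw [hbot]; exact bot_le
    | succ k ih =>
      refine (hc2 ⟨l, by omega⟩).trans (sup_le ?_ ?_)
      · refine (ih (l+1) (by omega) (by omega)).trans (Submodule.span_mono (Set.image_mono ?_))
        intro k hk
        exact (Nat.le_succ l).trans hk
      · refine Submodule.span_mono ?_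
        rintro _ ⟨i, rfl⟩
        exact ⟨⟨⟨l, by omega⟩, i⟩, by simp, rfl⟩
  have hcard : Fintype.card (Σ l : Fin (L+1), Fin (S l)) = Module.finrank K V := by
    rw [← finrank_top K V, ← htop, hdim 0 (by omega), T_zero]
    simp
  have hsp : ⊤ ≤ Submodule.span K (Set.range b0) := by
    rw [← htop]
    exact (h2 0 (by omega)).trans (Submodule.span_mono (Set.image_subset_range _ _))
  refine ⟨basisOfTopLeSpanOfCardEqFinrank b0 hsp hcard, ?_, ?_⟩
  · intro k; rw [coe_basisOfTopLeSpanOfCardEqFinrank]; exact hc1 _ _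
  · rw [coe_basisOfTopLeSpanOfCardEqFinrank]; exact h2

/-- Uniseriality from one-dimensional radical layers. -/
theorem uniserial_aux {A : Fin r → V →ₗ[K] V} {L : ℕ} (hL : rad A (L+1) = ⊥)
    (h1 : ∀ l, lay (rad A) l ≤ 1) (N : Submodule K V) (hN : ∀ a, N.map (A a) ≤ N) :
    ∃ l, N = rad A l := by
  by_cases hz : N = ⊥
  · exact ⟨L+1, by rw [hz, hL]⟩
  have hex : ∃ l, ¬ N ≤ rad A l := ⟨L+1, by rwa [hL, le_bot_iff]⟩
  classical
  obtain ⟨l, hl⟩ : ∃ l, Nat.find hex = l + 1 := by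
    refine ⟨Nat.find hex - 1, ?_⟩
    have : Nat.find hex ≠ 0 := by
      intro h0
      have := Nat.find_spec hex
      rw [h0] at this
      exact this le_top
    omega
  have hNl : N ≤ rad A l := by
    have := Nat.find_min hex (m := l) (by omega)
    exact not_not.1 this
  have hNl' : ¬ N ≤ rad A (l+1) := by
    have := Nat.find_spec hex
    rwa [hl] at this
  refine ⟨l, ?_⟩
  have hstep : rad A l ≤ N ⊔ rad A (l+1) := by
    have hle : N ⊔ rad A (l+1) ≤ rad A l := sup_le hNl (rad_anti A l)
    have hlt : rad A (l+1) < N ⊔ rad A (l+1) :=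
      lt_of_le_of_ne le_sup_right fun h => hNl' (h ▸ le_sup_left)
    have h2 := Submodule.finrank_lt_finrank_of_lt hlt
    have h3 := lay_add (rad_anti A l)
    have h4 := h1 l
    exact (Submodule.eq_of_le_of_finrank_le hle (by omega)).ge
  have hall : ∀ m, rad A l ≤ N ⊔ rad A (l + m) := by
    intro m
    induction m with
    | zero => exact le_sup_right
    | succ m ih =>
      refine hstep.trans (sup_le le_sup_left ?_)
      rw [rad]
      refine iSup_le fun a => ?_
      refine (Submodule.map_mono ih).trans ?_
      rw [Submodule.map_sup]
      exact sup_le_sup (hN a) (rad_act A (l+m) a)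
  refine le_antisymm hNl ?_
  have := hall (L+1)
  have hb : rad A (l + (L+1)) ≤ ⊥ := hL ▸ rad_antitone A (by omega)
  rw [le_bot_iff.1 hb, sup_bot_eq] at this
  exact this

end Adapted

section Model

open scoped Matrix

variable {K : Type} [Field K] {n : Type} [Fintype n] [DecidableEq n] {r L : ℕ}

/-- Vectors supported in levels at least `l`. -/
def supp (K : Type) [Field K] {n : Type} (lev : n → ℕ) (l : ℕ) : Submodule K (n → K) :=
  ⨅ i ∈ {k | lev k < l}, LinearMap.ker (LinearMap.proj i : (n → K) →ₗ[K] K)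

theorem mem_supp {lev : n → ℕ} {l : ℕ} {v : n → K} :
    v ∈ supp K lev l ↔ ∀ k, lev k < l → v k = 0 := by
  simp [supp]

theorem finrank_supp (lev : n → ℕ) (l : ℕ) :
    Module.finrank K (supp K lev l) = Fintype.card {k // l ≤ lev k} := by
  have e := LinearMap.iInfKerProjEquiv K (fun _ : n => K) (I := {k | l ≤ lev k})
    (J := {k | lev k < l}) (by
      rw [Set.disjoint_left]; intro k hk hk'
      simp only [Set.mem_ofPred_eq] at hk hk'
      omega) (by
      intro k _
      simp only [Set.mem_union, Set.mem_ofPred_eq]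
      exact le_or_gt l (lev k))
  exact e.finrank_eq.trans (Module.finrank_fintype_fun_eq_card K)

theorem rad_le_conj {lev : n → ℕ} (g : Matrix n n K) (N : Fin r → Matrix n n K)
    (hN : ∀ a i j, ¬ lev j < lev i → N a i j = 0) (l : ℕ) :
    rad (fun a => Matrix.toLin' (g * N a * g.adjugate)) (l+1) ≤
      (supp K lev (l+1)).map (Matrix.toLin' g) := by
  have hs : ∀ a l v, v ∈ supp K lev l → N a *ᵥ v ∈ supp K lev (l+1) := by
    intro a l v hv
    rw [mem_supp] at hv ⊢
    intro i hi
    rw [Matrix.mulVec, dotProduct]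
    refine Finset.sum_eq_zero fun j _ => ?_
    by_cases h : lev j < lev i
    · rw [hv j (by omega), mul_zero]
    · rw [hN a i j h, zero_mul]
  induction l with
  | zero =>
    refine iSup_le fun a => ?_
    rintro _ ⟨v, -, rfl⟩
    refine ⟨N a *ᵥ (g.adjugate *ᵥ v), hs a 0 _ (by rw [SetLike.mem_coe.symm, SetLike.mem_coe, mem_supp]; intro k hk; omega), ?_⟩
    simp [Matrix.toLin'_apply, Matrix.mulVec_mulVec, Matrix.mul_assoc]
  | succ l ih =>
    rw [rad]
    refine iSup_le fun a => ?_
    refine (Submodule.map_mono ih).trans ?_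
    rintro _ ⟨_, ⟨u, hu, rfl⟩, rfl⟩
    refine ⟨g.det • (N a *ᵥ u), Submodule.smul_mem _ _ (hs a _ _ hu), ?_⟩
    simp only [Matrix.toLin'_apply, Matrix.mulVec_mulVec, Matrix.mulVec_smul]
    rw [Matrix.mul_assoc (g * N a), Matrix.adjugate_mul, Matrix.mul_smul, Matrix.mul_one,
      Matrix.smul_mulVec]

/-- The relation defining the model module. -/
def rel (S : Fin (L+1) → ℕ) (a : ℕ) (x y : Σ l : Fin (L+1), Fin (S l)) : Prop :=
  (x.1 : ℕ) = y.1 + 1 ∧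
    ((S y.1 ≤ S x.1 ∧ (x.2 : ℕ) = y.2 + a * S y.1) ∨
      (S x.1 < S y.1 ∧ (y.2 : ℕ) = x.2 + a * S x.1))

theorem sig_ext {S : Fin (L+1) → ℕ} {x y : Σ l : Fin (L+1), Fin (S l)}
    (h1 : (x.1 : ℕ) = y.1) (h2 : (x.2 : ℕ) = y.2) : x = y := by
  obtain ⟨x1, x2⟩ := x
  obtain ⟨y1, y2⟩ := y
  obtain rfl : x1 = y1 := Fin.ext h1
  obtain rfl : x2 = y2 := Fin.ext h2
  rfl

theorem rel_rad {S : Fin (L+1) → ℕ} (hr : 2 ≤ r)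
    (hS : ∀ l : Fin L, S l.succ ≤ r * S l.castSucc)
    (x : Σ l : Fin (L+1), Fin (S l)) (hx : 1 ≤ (x.1 : ℕ)) :
    ∃ a : Fin r, ∃ y : Σ l : Fin (L+1), Fin (S l), (x.1 : ℕ) = y.1 + 1 ∧
      ∀ x', rel S a x' y ↔ x' = x := by
  obtain ⟨x1, q, hq⟩ := x
  obtain ⟨l, rfl⟩ : ∃ l : Fin L, x1 = l.succ := ⟨⟨(x1:ℕ) - 1, by simp at hx; omega⟩, by
    ext; simp at hx ⊢; omega⟩
  have hSl := hS l
  by_cases hpq : S l.castSucc ≤ S l.succ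
  · have hp : 0 < S l.castSucc := by
      rcases Nat.eq_zero_or_pos (S l.castSucc) with h | h
      · rw [h] at hSl; omega
      · exact h
    refine ⟨⟨q / S l.castSucc, ?_⟩, ⟨l.castSucc, ⟨q % S l.castSucc, Nat.mod_lt _ hp⟩⟩, ?_, ?_⟩
    · rw [Nat.div_lt_iff_lt_mul hp]; omega
    · simp
    · intro x'
      have hdm : q % S l.castSucc + q / S l.castSucc * S l.castSucc = q := by
        rw [mul_comm]; exact Nat.mod_add_div _ _
      constructor
      · rintro ⟨h1, h2⟩
        simp only [Fin.val_castSucc] at h1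
        obtain ⟨x1', x2'⟩ := x'
        obtain rfl : x1' = l.succ := by ext; simpa using h1
        simp only at h2
        refine sig_ext (by simp) ?_
        rcases h2 with h2 | h2
        · simp only; rw [h2.2, hdm]
        · omega
      · rintro rfl
        refine ⟨by simp, Or.inl ⟨hpq, ?_⟩⟩
        simp only
        rw [hdm]
  · have hpq' : S l.succ < S l.castSucc := by omega
    refine ⟨⟨0, by omega⟩, ⟨l.castSucc, ⟨q, by omega⟩⟩, by simp, ?_⟩
    intro x'
    constructor
    · rintro ⟨h1, h2⟩
      simp only [Fin.val_castSucc] at h1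
      obtain ⟨x1', x2'⟩ := x'
      obtain rfl : x1' = l.succ := by ext; simpa using h1
      simp only [zero_mul, add_zero] at h2
      refine sig_ext (by simp) ?_
      simp only
      omega
    · rintro rfl
      exact ⟨by simp, Or.inr ⟨hpq', by simp⟩⟩

theorem rel_soc {S : Fin (L+1) → ℕ} (hr : 2 ≤ r)
    (hS : ∀ l : Fin L, S l.castSucc ≤ r * S l.succ)
    (y : Σ l : Fin (L+1), Fin (S l)) (hy : (y.1 : ℕ) < L) :
    ∃ a : Fin r, ∃ x : Σ l : Fin (L+1), Fin (S l), (x.1 : ℕ) = y.1 + 1 ∧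
      ∀ y', rel S a x y' ↔ y' = y := by
  obtain ⟨y1, p, hp⟩ := y
  obtain ⟨l, rfl⟩ : ∃ l : Fin L, y1 = l.castSucc := ⟨⟨(y1:ℕ), hy⟩, rfl⟩
  have hSl := hS l
  by_cases hpq : S l.castSucc ≤ S l.succ
  · refine ⟨⟨0, by omega⟩, ⟨l.succ, ⟨p, by omega⟩⟩, by simp, ?_⟩
    intro y'
    constructor
    · rintro ⟨h1, h2⟩
      simp only [Fin.val_succ] at h1
      obtain ⟨y1', y2'⟩ := y'
      obtain rfl : y1' = l.castSucc := by ext; simp at h1 ⊢; omega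
      simp only [zero_mul, add_zero] at h2
      refine sig_ext (by simp) ?_
      simp only
      omega
    · rintro rfl
      exact ⟨by simp, Or.inl ⟨hpq, by simp⟩⟩
  · have hpq' : S l.succ < S l.castSucc := by omega
    have hq : 0 < S l.succ := by
      rcases Nat.eq_zero_or_pos (S l.succ) with h | h
      · rw [h] at hSl; omega
      · exact h
    refine ⟨⟨p / S l.succ, ?_⟩, ⟨l.succ, ⟨p % S l.succ, Nat.mod_lt _ hq⟩⟩, by simp, ?_⟩
    · rw [Nat.div_lt_iff_lt_mul hq]; omega
    · intro y'
      have hdm : p % S l.succ + p / S l.succ * S l.succ = p := by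
        rw [mul_comm]; exact Nat.mod_add_div _ _
      constructor
      · rintro ⟨h1, h2⟩
        simp only [Fin.val_succ] at h1
        obtain ⟨y1', y2'⟩ := y'
        obtain rfl : y1' = l.castSucc := by ext; simp at h1 ⊢; omega
        simp only at h2
        refine sig_ext (by simp) ?_
        rcases h2 with h2 | h2
        · omega
        · simp only; rw [h2.2, hdm]
      · rintro rfl
        refine ⟨by simp, Or.inr ⟨hpq', ?_⟩⟩
        simp only
        rw [hdm]

open Classical in
/-- Model matrices. -/
noncomputable def modelMat (K : Type) [Field K] {n : Type} (S : Fin (L+1) → ℕ)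
    (e : n ≃ Σ l : Fin (L+1), Fin (S l)) (a : ℕ) : Matrix n n K :=
  Matrix.of fun i j => if rel S a (e i) (e j) then 1 else 0

theorem model_low (S : Fin (L+1) → ℕ) (e : n ≃ Σ l : Fin (L+1), Fin (S l)) (a : ℕ) (i j : n)
    (h : ¬ ((e j).1 : ℕ) < (e i).1) : modelMat K S e a i j = 0 := by
  rw [modelMat, Matrix.of_apply, if_neg]
  rintro ⟨h1, -⟩
  omega

theorem model_rad {S : Fin (L+1) → ℕ} (e : n ≃ Σ l : Fin (L+1), Fin (S l)) (hr : 2 ≤ r)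
    (hS : ∀ l : Fin L, S l.succ ≤ r * S l.castSucc) (l : ℕ) :
    supp K (fun k => ((e k).1 : ℕ)) l ≤
      rad (fun a : Fin r => Matrix.toLin' (modelMat K S e a)) l := by
  have key : ∀ l k, l ≤ ((e k).1 : ℕ) → (Pi.single k 1 : n → K) ∈
      rad (fun a : Fin r => Matrix.toLin' (modelMat K S e a)) l := by
    intro l
    induction l with
    | zero => intro k _; trivial
    | succ l ih =>
      intro k hk
      obtain ⟨a, y, hy, h⟩ := rel_rad hr hS (e k) (by omega)
      have h1 := rad_act (fun a : Fin r => Matrix.toLin' (modelMat K S e a)) l a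
        ⟨_, ih (e.symm y) (by simp; omega), rfl⟩
      convert h1 using 1
      ext i
      simp only [Matrix.toLin'_apply, Matrix.mulVec_single_one, Matrix.col_apply, modelMat,
        Matrix.of_apply, Equiv.apply_symm_apply, h, e.injective.eq_iff, Pi.single_apply]
  intro v hv
  rw [mem_supp] at hv
  have : v = ∑ k, v k • (Pi.single k 1 : n → K) := by
    ext i; simp [Finset.sum_apply, Pi.single_apply]
  rw [this]
  refine Submodule.sum_mem _ fun k _ => ?_
  by_cases h : l ≤ ((e k).1 : ℕ)
  · exact Submodule.smul_mem _ _ (key l k h)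
  · rw [hv k (by simpa using h), zero_smul]; exact Submodule.zero_mem _

theorem model_soc {S : Fin (L+1) → ℕ} (e : n ≃ Σ l : Fin (L+1), Fin (S l)) (hr : 2 ≤ r)
    (hS : ∀ l : Fin L, S l.castSucc ≤ r * S l.succ) (l : ℕ) :
    soc (fun a : Fin r => Matrix.toLin' (modelMat K S e a)) l ≤
      supp K (fun k => ((e k).1 : ℕ)) (L - l) := by
  have row : ∀ (k : n), ((e k).1 : ℕ) < L → ∃ a : Fin r, ∃ m : n,
      ((e m).1 : ℕ) = (e k).1 + 1 ∧
      ∀ v : n → K, Matrix.toLin' (modelMat K S e a) v m = v k := by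
    intro k hk
    obtain ⟨a, x, hx, h⟩ := rel_soc hr hS (e k) hk
    refine ⟨a, e.symm x, by simpa using hx, fun v => ?_⟩
    simp [Matrix.toLin'_apply, Matrix.mulVec, dotProduct, modelMat, h, e.injective.eq_iff]
  induction l with
  | zero =>
    intro v hv
    rw [mem_supp]
    intro k hk
    obtain ⟨a, m, -, h⟩ := row k (by simpa using hk)
    have := (Submodule.mem_iInf _).1 hv a
    rw [LinearMap.mem_ker] at this
    rw [← h v, this, Pi.zero_apply]
  | succ l ih =>
    intro v hv
    rw [mem_supp]
    intro k hk
    obtain ⟨a, m, hm, h⟩ := row k (by omega)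
    have := ih ((Submodule.mem_iInf _).1 hv a)
    rw [mem_supp] at this
    rw [← h v]
    exact this m (by omega)

end Model

end Loc14

namespace Loc14

open QuiverData Stmt14

section Bridge

set_option linter.unusedSectionVars false

variable {K : Type} [Field K] {r L d : ℕ}

/-- Index set of the carrier. -/
abbrev Ix (r d : ℕ) := Σ _ : Fin (loopQuiver r).n, Fin d

/-- Representation space. -/
abbrev RS (K : Type) [Field K] (r d : ℕ) := RepSpace (loopQuiver r) (fun _ => d) K

/-- The tuple of endomorphisms of a point. -/
noncomputable def act (x : RS K r d) : Fin r → (Ix r d → K) →ₗ[K] (Ix r d → K) :=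
  fun a => arrowMap (loopQuiver r) (fun _ => d) K x a

theorem fin_eq (i j : Fin (loopQuiver r).n) : i = j := Subsingleton.elim (α := Fin 1) i j

theorem ix_card : Fintype.card (Ix r d) = d := by
  have : (loopQuiver r).n = 1 := rfl
  rw [Fintype.card_sigma]
  simp [this]

theorem ix_finrank : Module.finrank K (Ix r d → K) = d := by
  rw [Module.finrank_fintype_fun_eq_card, ix_card]

/-- The point with given matrices. -/
def ofMat (B : Fin r → Matrix (Ix r d) (Ix r d) K) : RS K r d :=
  fun c => B c.1 ⟨(0 : Fin 1), c.2.1⟩ ⟨(0 : Fin 1), c.2.2⟩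

/-- The matrices of a point. -/
def toMat (x : RS K r d) (a : Fin r) : Matrix (Ix r d) (Ix r d) K :=
  Matrix.of fun i j => x ⟨a, (i.2, j.2)⟩

theorem ofMat_toMat (x : RS K r d) : ofMat (toMat x) = x := rfl

theorem toMat_ofMat (B : Fin r → Matrix (Ix r d) (Ix r d) K) : toMat (ofMat B) = B := by
  funext a
  ext ⟨i, i'⟩ ⟨j, j'⟩
  obtain rfl := fin_eq i (0 : Fin 1)
  obtain rfl := fin_eq j (0 : Fin 1)
  rfl

theorem arrowMap_apply (Q : QuiverData) (d : Fin Q.n → ℕ) (x : RepSpace Q d K)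
    (a : Fin Q.numArrows) (m : Carrier Q d K) (k : Σ i : Fin Q.n, Fin (d i)) (h : k.1 = Q.tgt a) :
    arrowMap Q d K x a m k =
      ∑ w : Fin (d (Q.src a)), x ⟨a, (Fin.cast (congrArg d h) k.2, w)⟩ * m ⟨Q.src a, w⟩ :=
  dif_pos h

theorem act_eq (x : RS K r d) (a : Fin r) : act x a = Matrix.toLin' (toMat x a) := by
  refine LinearMap.ext fun v => ?_
  funext ⟨i, i'⟩
  obtain rfl := fin_eq i (0 : Fin 1)
  rw [Matrix.toLin'_apply, Matrix.mulVec, dotProduct, Fintype.sum_sigma]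
  have hu : ∀ f : Fin (loopQuiver r).n → K, ∑ i, f i = f (0 : Fin 1) := fun f =>
    Fintype.sum_unique (ι := Fin 1) f
  rw [hu]
  exact arrowMap_apply (loopQuiver r) (fun _ => d) x a v _ rfl

theorem act_ofMat (B : Fin r → Matrix (Ix r d) (Ix r d) K) :
    act (ofMat B) = fun a => Matrix.toLin' (B a) := by
  funext a
  rw [act_eq, toMat_ofMat]

theorem act_poly (a : Fin r) (v : Ix r d → K) (φ : Module.Dual K (Ix r d → K)) :
    IsPoly (fun x : RS K r d => φ (act x a v)) := by
  have h : ∀ u : Ix r d → K, φ u = ∑ k, u k * φ (Pi.single k 1) := by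
    intro u
    conv_lhs => rw [pi_eq_sum_univ u]
    rw [map_sum]
    refine Finset.sum_congr rfl fun k _ => ?_
    rw [map_smul, smul_eq_mul]
    congr 2
    funext j
    simp [Pi.single_apply, eq_comm]
  have h2 : (fun x : RS K r d => φ (act x a v)) =
      fun x => ∑ k, act x a v k * φ (Pi.single k 1) := funext fun x => h _
  rw [h2]
  refine IsPoly.sum _ fun k => IsPoly.mul ?_ (IsPoly.const _)
  simp only [act_eq, Matrix.toLin'_apply, Matrix.mulVec, dotProduct]
  exact IsPoly.sum _ fun j => IsPoly.mul (IsPoly.coord _) (IsPoly.const _)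

theorem wordMap_range (Q : QuiverData) (d : Fin Q.n → ℕ) (x : RepSpace Q d K)
    (a : Fin Q.numArrows) (w : List (Fin Q.numArrows)) :
    (LinearMap.range (wordMap Q d K x w)).map (arrowMap Q d K x a) =
      LinearMap.range (wordMap Q d K x (a :: w)) := by
  simp only [wordMap, List.map_cons, List.prod_cons]
  rw [Module.End.mul_eq_comp, LinearMap.range_comp]

theorem radPow_eq (x : RS K r d) (l : ℕ) :
    radPow (loopQuiver r) (fun _ => d) K x l = rad (act x) l := by
  induction l with
  | zero =>
    rw [rad, eq_top_iff, radPow]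
    refine le_trans ?_ (le_iSup _ ⟨[], rfl⟩)
    simp only [wordMap, List.map_nil, List.prod_nil]
    rw [Module.End.one_eq_id, LinearMap.range_id]
  | succ l ih =>
    rw [rad, ← ih]
    refine le_antisymm (iSup_le ?_) (iSup_le fun a => ?_)
    · rintro ⟨_ | ⟨a, w⟩, hw⟩
      · simp at hw
      · refine le_trans ?_ (le_iSup _ a)
        simp only [wordMap, List.map_cons, List.prod_cons]
        rw [Module.End.mul_eq_comp, LinearMap.range_comp]
        refine Submodule.map_mono ?_
        exact le_iSup (fun w : {w : List (Fin (loopQuiver r).numArrows) // w.length = l} =>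
          LinearMap.range (wordMap (loopQuiver r) (fun _ => d) K x w.1)) ⟨w, by simpa using hw⟩
    · rw [radPow, Submodule.map_iSup]
      refine iSup_le fun w => ?_
      refine (wordMap_range (loopQuiver r) (fun _ => d) x a w.1).le.trans ?_
      exact le_iSup (fun w : {w : List (Fin (loopQuiver r).numArrows) // w.length = l + 1} =>
          LinearMap.range (wordMap (loopQuiver r) (fun _ => d) K x w.1))
          ⟨_ :: w.1, congrArg (· + 1) w.2⟩

theorem socPow_eq (x : RS K r d) (l : ℕ) :
    socPow (loopQuiver r) (fun _ => d) K x l = soc (act x) l := by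
  induction l with
  | zero => rfl
  | succ l ih => rw [socPow, soc, ih]; rfl

theorem mem_trunc (x : RS K r d) :
    x ∈ TruncRepVar (loopQuiver r) (fun _ => d) K L ↔ rad (act x) (L+1) = ⊥ := by
  rw [← radPow_eq, radPow, iSup_eq_bot]
  constructor
  · rintro h ⟨w, hw⟩
    rw [h w hw, LinearMap.range_zero]
  · intro h w hw
    exact LinearMap.range_eq_bot.1 (h ⟨w, hw⟩)

theorem vdim_eq (N : Submodule K (Ix r d → K)) (i : Fin (loopQuiver r).n) :
    vdim (loopQuiver r) (fun _ => d) K N i = Module.finrank K N := by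
  have : proj (loopQuiver r) (fun _ => d) K i = LinearMap.id := by
    refine LinearMap.ext fun v => ?_
    funext k
    exact if_pos (fin_eq _ _)
  rw [vdim, this, Submodule.map_id]

theorem radLay_eq (x : RS K r d) (l : Fin (L+1)) (i) :
    radLayering (loopQuiver r) (fun _ => d) K L x l i = lay (rad (act x)) l := by
  rw [radLayering, vdim_eq, vdim_eq, radPow_eq, radPow_eq, lay]

theorem radLay_iff {x : RS K r d} (hx : rad (act x) (L+1) = ⊥) (S : Fin (L+1) → ℕ) :
    (radLayering (loopQuiver r) (fun _ => d) K L x = fun l _ => S l) ↔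
      ∀ l, l ≤ L+1 → Module.finrank K (rad (act x) l) = T S l := by
  constructor
  · intro h
    have h1 : ∀ l : Fin (L+1), lay (rad (act x)) l = S l := by
      intro l
      rw [← radLay_eq x l (0 : Fin 1), h]
    refine T_eq ?_ ?_
    · rw [hx, finrank_bot]
    · intro l
      rw [← h1, ← lay_add (rad_anti _ _)]
  · intro h
    funext l i
    rw [radLay_eq, lay, h l (by omega), h (l+1) (by omega), T_succ]
    omega

theorem rad_sum (x : RS K r d) (hx : rad (act x) (L+1) = ⊥) (l : Fin (L+1)) (i) :
    (∑ j ∈ Finset.univ.filter (fun j => j ≤ l),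
      radLayering (loopQuiver r) (fun _ => d) K L x j i) +
        Module.finrank K (rad (act x) (l+1)) = d := by
  have h := (radLay_iff (L := L) hx (fun l => lay (rad (act x)) l)).1
    (by funext l i; rw [radLay_eq])
  simp only [radLay_eq]
  rw [h (l+1) (by omega), T_partial (fun l : Fin (L+1) => lay (rad (act x)) l), ← T_zero, ← h 0 (by omega), rad,
    finrank_top, ix_finrank]

theorem rad_sum_total (x : RS K r d) (hx : rad (act x) (L+1) = ⊥) (S : Fin (L+1) → ℕ)
    (h : radLayering (loopQuiver r) (fun _ => d) K L x = fun l _ => S l) : ∑ l, S l = d := by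
  rw [← T_zero, ← (radLay_iff hx S).1 h 0 (by omega), rad, finrank_top, ix_finrank]

theorem soc_sum (x : RS K r d) (l : Fin (L+1)) (i) :
    (∑ j ∈ Finset.univ.filter (fun j => j ≤ l),
      socLayering (loopQuiver r) (fun _ => d) K L x j i) = Module.finrank K (soc (act x) l) := by
  obtain ⟨l, hl⟩ := l
  induction l with
  | zero =>
    have : (Finset.univ.filter fun j : Fin (L+1) => j ≤ ⟨0, hl⟩) = {⟨0, hl⟩} := by
      ext j; simp only [Fin.le_def, Finset.mem_filter, Finset.mem_univ, true_and, Finset.mem_singleton,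
        Fin.ext_iff]; omega
    rw [this, Finset.sum_singleton, socLayering, vdim_eq, socPow_eq]
    simp
  | succ l ih =>
    have : (Finset.univ.filter fun j : Fin (L+1) => j ≤ ⟨l+1, hl⟩) =
        insert ⟨l+1, hl⟩ (Finset.univ.filter fun j : Fin (L+1) => j ≤ ⟨l, by omega⟩) := by
      ext j; simp only [Fin.le_def, Finset.mem_filter, Finset.mem_univ, true_and, Finset.mem_insert, Fin.ext_iff]; omega
    rw [this, Finset.sum_insert (by simp [Fin.le_def]), ih (by omega), socLayering, vdim_eq, socPow_eq]
    have h2 := Submodule.finrank_mono (soc_mono (act x) l)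
    rw [if_neg (by simp), vdim_eq, socPow_eq]
    have h3 : l + 1 - 1 = l := rfl
    simp only
    rw [h3]
    omega

theorem rad_open (l c : ℕ) :
    IsOpen {x : LocV K r L d | c ≤ Module.finrank K (rad (act x.1) l)} := by
  have := rad_isOpen (K := K) (A := fun x : RS K r d => act x) act_poly l c
  exact IsOpen.preimage continuous_subtype_val this

theorem soc_open (l c : ℕ) :
    IsOpen {x : LocV K r L d | Module.finrank K (soc (act x.1) l) ≤ c} := by
  have := soc_isOpen (K := K) (A := fun x : RS K r d => act x) act_poly l c
  exact IsOpen.preimage continuous_subtype_val this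

end Bridge

end Loc14

namespace Loc14

open QuiverData Stmt14

section Param

set_option linter.unusedSectionVars false

variable {K : Type} [Field K] {r L d : ℕ} {S : Fin (L+1) → ℕ}

/-- Parameter index set. -/
abbrev PI (r d : ℕ) := (Ix r d × Ix r d) ⊕ (Fin r × Ix r d × Ix r d)

/-- The base-change matrix. -/
def gM (p : PI r d → K) : Matrix (Ix r d) (Ix r d) K := Matrix.of fun i j => p (Sum.inl (i, j))

/-- The masked matrices. -/
def nM (e : Ix r d ≃ Σ l : Fin (L+1), Fin (S l)) (p : PI r d → K) (a : Fin r) :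
    Matrix (Ix r d) (Ix r d) K :=
  Matrix.of fun i j => if ((e j).1 : ℕ) < (e i).1 then p (Sum.inr (a, i, j)) else 0

/-- The parametrization. -/
def phi0 (e : Ix r d ≃ Σ l : Fin (L+1), Fin (S l)) (p : PI r d → K) : RS K r d :=
  ofMat fun a => gM p * nM e p a * (gM p).adjugate

theorem phi0_poly (e : Ix r d ≃ Σ l : Fin (L+1), Fin (S l)) (c) :
    IsPoly (fun p : PI r d → K => phi0 e p c) := by
  have hg : ∀ i j, IsPoly (fun p : PI r d → K => gM p i j) := fun i j => IsPoly.coord _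
  have hn : ∀ a i j, IsPoly (fun p : PI r d → K => nM e p a i j) := by
    intro a i j
    by_cases h : ((e j).1 : ℕ) < (e i).1
    · simp only [nM, Matrix.of_apply, if_pos h]; exact IsPoly.coord _
    · simp only [nM, Matrix.of_apply, if_neg h]; exact IsPoly.const _
  have ha : ∀ i j, IsPoly (fun p : PI r d → K => (gM p).adjugate i j) := by
    intro i j
    simp only [Matrix.adjugate_apply]
    refine IsPoly.det fun k l => ?_
    by_cases h : k = j
    · subst h
      simp only [Matrix.updateRow_self]; exact IsPoly.const _
    · simp only [Matrix.updateRow_ne h]; exact hg _ _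
  simp only [phi0, ofMat, Matrix.mul_apply]
  exact IsPoly.sum _ fun k => IsPoly.mul (IsPoly.sum _ fun m => IsPoly.mul (hg _ _) (hn _ _ _)) (ha _ _)

theorem finrank_supp_T (e : Ix r d ≃ Σ l : Fin (L+1), Fin (S l)) (l : ℕ) :
    Module.finrank K (supp K (fun k => ((e k).1 : ℕ)) l) = T S l := by
  rw [finrank_supp, ← T_card]
  exact Fintype.card_congr (e.subtypeEquiv fun k => Iff.rfl)

theorem phi0_rad_le (e : Ix r d ≃ Σ l : Fin (L+1), Fin (S l)) (p : PI r d → K) (l : ℕ) :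
    Module.finrank K (rad (act (phi0 e p)) (l+1)) ≤ T S (l+1) := by
  rw [phi0, act_ofMat]
  refine (Submodule.finrank_mono (rad_le_conj (lev := fun k => ((e k).1 : ℕ)) (gM p) (nM e p) ?_ l)).trans ?_
  · intro a i j h
    exact if_neg h
  · refine (Submodule.finrank_map_le _ _).trans ?_
    rw [finrank_supp_T]

theorem phi0_rad_le' (e : Ix r d ≃ Σ l : Fin (L+1), Fin (S l)) (hS : ∑ l, S l = d)
    (p : PI r d → K) (l : ℕ) :
    Module.finrank K (rad (act (phi0 e p)) l) ≤ T S l := by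
  cases l with
  | zero => rw [T_zero, hS, rad, finrank_top, ix_finrank]
  | succ l => exact phi0_rad_le e p l

theorem phi0_trunc (e : Ix r d ≃ Σ l : Fin (L+1), Fin (S l)) (p : PI r d → K) :
    rad (act (phi0 e p)) (L+1) = ⊥ := by
  have := phi0_rad_le e p L
  rw [T_top S le_rfl] at this
  exact Submodule.finrank_eq_zero.1 (by omega)

theorem exists_model (e : Ix r d ≃ Σ l : Fin (L+1), Fin (S l)) :
    ∃ p : PI r d → K, act (phi0 e p) = fun a : Fin r => Matrix.toLin' (modelMat K S e a) := by
  refine ⟨Sum.elim (fun ij => if ij.1 = ij.2 then 1 else 0) fun aij => modelMat K S e aij.1 aij.2.1 aij.2.2, ?_⟩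
  rw [phi0, act_ofMat]
  funext a
  congr 1
  have h1 : ∀ q : (Fin r × Ix r d × Ix r d) → K, gM (Sum.elim (fun ij : Ix r d × Ix r d => if ij.1 = ij.2 then (1:K) else 0) q) = 1 := by
    intro q; ext i j; simp [gM, Matrix.one_apply]
  rw [h1, Matrix.adjugate_one, Matrix.one_mul, Matrix.mul_one]
  ext i j
  simp only [nM, Matrix.of_apply, Sum.elim_inr]
  split_ifs with h
  · rfl
  · exact (model_low S e a i j h).symm

theorem exists_param (e : Ix r d ≃ Σ l : Fin (L+1), Fin (S l)) (x : RS K r d)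
    {F : ℕ → Submodule K (Ix r d → K)} (hF : IsFil (act x) L F)
    (hdim : ∀ l, l ≤ L+1 → Module.finrank K (F l) = T S l) : ∃ p, phi0 e p = x := by
  obtain ⟨b0, hb1, hb2⟩ := adapted hF.top hF.bot hF.anti S hdim
  let b := b0.reindex e.symm
  let f := Pi.basisFun K (Ix r d)
  let G := f.toMatrix b
  let G' := b.toMatrix f
  let M : Fin r → Matrix (Ix r d) (Ix r d) K := fun a => LinearMap.toMatrix b b (act x a)
  have hGG : G * G' = 1 := f.toMatrix_mul_toMatrix_flip b
  have hA : ∀ a, G * M a * G' = toMat x a := by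
    intro a
    have := basis_toMatrix_mul_linearMap_toMatrix_mul_basis_toMatrix f b f b (act x a)
    rw [act_eq] at this
    refine Eq.trans ?_ (this.trans ?_)
    · rw [← act_eq]
    · exact LinearMap.toMatrix'_toLin' _
  have hdet : G.det ≠ 0 := by
    intro h
    have := congrArg Matrix.det hGG
    rw [Matrix.det_mul, h, zero_mul, Matrix.det_one] at this
    exact zero_ne_one this
  have hadj : G.adjugate = G.det • G' := by
    have : G.adjugate * G * G' = G.adjugate := by rw [Matrix.mul_assoc, hGG, Matrix.mul_one]
    rw [← this, Matrix.adjugate_mul, Matrix.smul_mul, Matrix.one_mul]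
  have hM : ∀ a i j, ¬ ((e j).1 : ℕ) < (e i).1 → M a i j = 0 := by
    intro a i j h
    have h1 : act x a (b j) ∈ F ((e j).1 + 1) := by
      refine hF.act _ a ⟨b j, ?_, rfl⟩
      simpa [b] using hb1 (e j)
    have h2 := hb2 _ (by omega) h1
    rw [Module.Basis.mem_span_image] at h2
    show LinearMap.toMatrix b b (act x a) i j = 0
    rw [LinearMap.toMatrix_apply]
    simp only [b, Module.Basis.repr_reindex_apply, Equiv.symm_symm]
    by_contra hne
    have h3 := h2 (Finsupp.mem_support_iff.2 hne)
    simp only [Set.mem_ofPred_eq] at h3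
    omega
  refine ⟨Sum.elim (fun ij => G ij.1 ij.2) fun aij => G.det⁻¹ * M aij.1 aij.2.1 aij.2.2, ?_⟩
  have h1 : ∀ q : (Fin r × Ix r d × Ix r d) → K, gM (Sum.elim (fun ij => G ij.1 ij.2) q) = G := by
    intro q; ext i j; simp [gM]
  rw [phi0, h1, ← ofMat_toMat x]
  congr 1
  funext a
  rw [hadj, ← hA]
  have : nM e (Sum.elim (fun ij => G ij.1 ij.2) fun aij => G.det⁻¹ * M aij.1 aij.2.1 aij.2.2) a =
      G.det⁻¹ • M a := by
    ext i j
    simp only [nM, Matrix.of_apply, Sum.elim_inr, Matrix.smul_apply, smul_eq_mul]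
    split_ifs with h
    · rfl
    · rw [hM a i j h, mul_zero]
  rw [this, Matrix.mul_smul, Matrix.mul_smul, Matrix.smul_mul, smul_smul, mul_inv_cancel₀ hdet,
    one_smul]

theorem exists_e (hS : ∑ l, S l = d) : Nonempty (Ix r d ≃ Σ l : Fin (L+1), Fin (S l)) := by
  rw [← Fintype.card_eq, ix_card]
  simp [hS]

theorem mem_LocRepS (x : LocV K r L d) :
    x ∈ LocRepS K r L d S ↔ ∀ l, l ≤ L+1 → Module.finrank K (rad (act x.1) l) = T S l :=
  radLay_iff ((mem_trunc x.1).1 x.2) S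

theorem model_mem (hr : 2 ≤ r)
    (hreal : ∀ l : Fin L, S l.succ ≤ r * S l.castSucc)
    (e : Ix r d ≃ Σ l : Fin (L+1), Fin (S l)) : ∃ p : PI r d → K,
    (∀ l, T S l ≤ Module.finrank K (rad (act (phi0 e p)) l)) ∧
    ((∀ l : Fin L, S l.castSucc ≤ r * S l.succ) → ∀ l,
      Module.finrank K (soc (act (phi0 e p)) l) ≤ T S (L - l)) := by
  obtain ⟨p, hp⟩ := exists_model (K := K) e
  refine ⟨p, fun l => ?_, fun h l => ?_⟩
  · rw [hp, ← finrank_supp_T (K := K) e]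
    exact Submodule.finrank_mono (model_rad e hr hreal l)
  · rw [hp, ← finrank_supp_T (K := K) e]
    exact Submodule.finrank_mono (model_soc e hr h l)

theorem stratum [Infinite K] (hr : 2 ≤ r) (hS : ∑ l, S l = d)
    (hreal : ∀ l : Fin L, S l.succ ≤ r * S l.castSucc) :
    IsIrreducible (LocRepS K r L d S) ∧
    (∀ (x : LocV K r L d) (F : ℕ → Submodule K (Ix r d → K)), IsFil (act x.1) L F →
      (∀ l, l ≤ L+1 → Module.finrank K (F l) = T S l) → x ∈ closure (LocRepS K r L d S)) := by
  obtain ⟨e⟩ := exists_e (r := r) hS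
  let top : TopologicalSpace (PI r d → K) := zariskiTopology (PI r d) K
  let phi : (PI r d → K) → LocV K r L d := fun p => ⟨phi0 e p, (mem_trunc _).2 (phi0_trunc e p)⟩
  have hcont : Continuous phi := Continuous.subtype_mk (zar_continuous (phi0_poly e)) _
  have hsurj : ∀ (x : LocV K r L d) (F : ℕ → Submodule K (Ix r d → K)), IsFil (act x.1) L F →
      (∀ l, l ≤ L+1 → Module.finrank K (F l) = T S l) → ∃ p, phi p = x := by
    intro x F hF hd
    obtain ⟨p, hp⟩ := exists_param e x.1 hF hd
    exact ⟨p, Subtype.ext hp⟩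
  have hpre : phi ⁻¹' (LocRepS K r L d S) = ⋂ l ∈ Finset.range (L+2),
      phi ⁻¹' {x | T S l ≤ Module.finrank K (rad (act x.1) l)} := by
    ext p
    rw [Set.mem_preimage, mem_LocRepS]
    simp only [Set.mem_iInter, Finset.mem_range, Set.mem_preimage, Set.mem_ofPred_eq]
    constructor
    · intro h l hl
      exact (h l (by omega)).ge
    · intro h l hl
      exact le_antisymm (phi0_rad_le' e hS p l) (h l (by omega))
  have hopen : IsOpen (phi ⁻¹' (LocRepS K r L d S)) := by
    rw [hpre]
    exact isOpen_biInter_finset fun l _ => (rad_open l _).preimage hcont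
  have hne : (phi ⁻¹' (LocRepS K r L d S)).Nonempty := by
    obtain ⟨p, hp, -⟩ := model_mem (K := K) hr hreal e
    refine ⟨p, ?_⟩
    rw [hpre]
    simp only [Set.mem_iInter]
    exact fun l _ => hp l
  have hirr : IsIrreducible (Set.univ : Set (PI r d → K)) := zar_irreducible
  have himg : phi '' (phi ⁻¹' (LocRepS K r L d S)) = LocRepS K r L d S := by
    refine Set.image_preimage_eq_of_subset ?_
    intro x hx
    obtain ⟨p, hp⟩ := hsurj x (rad (act x.1)) (isFil_rad ((mem_trunc x.1).1 x.2)) ((mem_LocRepS x).1 hx)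
    exact ⟨p, hp⟩
  constructor
  · have h1 : IsIrreducible (phi ⁻¹' (LocRepS K r L d S)) :=
      ⟨hne, hirr.2.open_subset hopen (Set.subset_univ _)⟩
    have := h1.image phi hcont.continuousOn
    rwa [himg] at this
  · intro x F hF hd
    obtain ⟨p, rfl⟩ := hsurj x F hF hd
    have h1 := subset_closure_inter_of_isPreirreducible_of_isOpen hirr.2 hopen
      (by rwa [Set.univ_inter]) (Set.mem_univ p)
    rw [Set.univ_inter] at h1
    have h2 := image_closure_subset_closure_image hcont ⟨p, h1, rfl⟩
    rwa [himg] at h2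

end Param

end Loc14

namespace Loc14

open QuiverData Stmt14

section Final

set_option linter.unusedSectionVars false

variable {K : Type} [Field K] {r L d : ℕ} {S : Fin (L+1) → ℕ}

theorem fil_dim {F : ℕ → Submodule K (Ix r d → K)} {A : Fin r → (Ix r d → K) →ₗ[K] (Ix r d → K)}
    (hF : IsFil A L F) (l : ℕ) (hl : l ≤ L + 1) :
    Module.finrank K (F l) = T (fun j : Fin (L+1) => lay F j) l := by
  refine T_eq (g := fun l => Module.finrank K (F l)) ?_ ?_ l hl
  · show Module.finrank K (F (L+1)) = 0
    rw [hF.bot, finrank_bot]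
  · intro l
    exact lay_add (hF.anti l)

theorem fil_sum {F : ℕ → Submodule K (Ix r d → K)} {A : Fin r → (Ix r d → K) →ₗ[K] (Ix r d → K)}
    (hF : IsFil A L F) : ∑ j : Fin (L+1), lay F j = d := by
  rw [← T_zero (fun j : Fin (L+1) => lay F j), ← fil_dim hF 0 (by omega), hF.top, finrank_top,
    ix_finrank]

theorem pos_down {V : Type} [AddCommGroup V] [Module K V] {F : ℕ → Submodule K V}
    (hR : RealFil r F) (h : 1 ≤ lay F L) (j : ℕ) (hj : j ≤ L) : 1 ≤ lay F j := by
  obtain ⟨k, hk⟩ : ∃ k, j + k = L := ⟨L - j, by omega⟩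
  induction k generalizing j with
  | zero => rwa [show j = L by omega]
  | succ k ih =>
    have h1 := ih (j+1) (by omega) (by omega)
    have h2 := hR j
    rcases Nat.eq_zero_or_pos (lay F j) with h3 | h3
    · rw [h3] at h2; omega
    · exact h3

theorem pos_lay {V : Type} [AddCommGroup V] [Module K V] [FiniteDimensional K V]
    {F : ℕ → Submodule K V} (hR : RealFil r F) (ha : ∀ l, F (l+1) ≤ F l) (hb : F (L+1) = ⊥)
    (l : ℕ) (h : 0 < Module.finrank K (F l)) : 1 ≤ lay F l := by
  by_contra h0
  have h1 : ∀ k, lay F (l + k) = 0 := by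
    intro k
    induction k with
    | zero => simpa using h0
    | succ k ih =>
      have := hR (l+k)
      rw [ih, mul_zero] at this
      exact Nat.le_zero.1 this
  have h2 : ∀ k, Module.finrank K (F (l + k)) = Module.finrank K (F l) := by
    intro k
    induction k with
    | zero => rfl
    | succ k ih =>
      have := lay_add (ha (l + k))
      rw [h1, ih] at this
      rw [← add_assoc]
      omega
  have h3 := h2 (L+1)
  have h4 : F (l + (L+1)) ≤ F (L+1) := antitone_nat_of_succ_le ha (by omega)
  rw [hb, le_bot_iff] at h4
  rw [h4, finrank_bot] at h3
  omega

theorem exists_S [Infinite K] (hr : 2 ≤ r) (hd : L + 1 < d) (x : LocV K r L d) :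
    ∃ S : Fin (L+1) → ℕ, ∑ l, S l = d ∧ Cond2 r L S ∧ x ∈ closure (LocRepS K r L d S) := by
  obtain ⟨F, hF, hR, h0, h2⟩ := exists_terminal hr ((mem_trunc x.1).1 x.2)
  have hpos : 1 ≤ lay F L := by
    by_contra hc
    have h1 := h0 (by omega)
    have hs := fil_sum hF
    have : ∑ j : Fin (L+1), lay F j ≤ ∑ j : Fin (L+1), 1 := Finset.sum_le_sum fun j _ => h1 j
    simp at this
    omega
  refine ⟨fun j => lay F j, fil_sum hF, ?_, ?_⟩
  · intro l
    refine ⟨hR l, h2 l (by omega) (pos_down hR hpos _ (by omega))⟩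
  · exact (stratum hr (fil_sum hF) (fun l => hR l)).2 x F hF (fil_dim hF)

theorem closure_nbhd {x : LocV K r L d} (hx : x ∈ closure (LocRepS K r L d S)) :
    ∃ y ∈ LocRepS K r L d S,
      (∀ l, l ≤ L + 1 → Module.finrank K (rad (act x.1) l) ≤ Module.finrank K (rad (act y.1) l)) ∧
      (∀ l, l ≤ L + 1 → Module.finrank K (soc (act y.1) l) ≤ Module.finrank K (soc (act x.1) l)) := by
  have ho : IsOpen (⋂ l ∈ Finset.range (L+2),
      ({y : LocV K r L d | Module.finrank K (rad (act x.1) l) ≤ Module.finrank K (rad (act y.1) l)} ∩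
        {y : LocV K r L d | Module.finrank K (soc (act y.1) l) ≤ Module.finrank K (soc (act x.1) l)})) :=
    isOpen_biInter_finset fun l _ => (rad_open l _).inter (soc_open l _)
  obtain ⟨y, hy, hyS⟩ := mem_closure_iff.1 hx _ ho (by simp)
  simp only [Set.mem_iInter, Finset.mem_range, Set.mem_inter_iff, Set.mem_ofPred_eq] at hy
  exact ⟨y, hyS, fun l hl => (hy l (by omega)).1, fun l hl => (hy l (by omega)).2⟩

/-- Points of `Rep S` with the smallest possible socle layering. -/
def Good (S : Fin (L+1) → ℕ) (x : LocV K r L d) : Prop :=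
  x ∈ LocRepS K r L d S ∧ ∀ l, l ≤ L → Module.finrank K (soc (act x.1) l) ≤ T S (L - l)

theorem rad_le_soc_dim (x : LocV K r L d) (l : ℕ) (hl : l ≤ L) :
    Module.finrank K (rad (act x.1) (L - l)) ≤ Module.finrank K (soc (act x.1) l) :=
  Submodule.finrank_mono (rad_le_soc ((mem_trunc x.1).1 x.2) l hl)

theorem squeeze {x y : LocV K r L d} (hx : Good S x)
    (h1 : ∀ l, l ≤ L + 1 → Module.finrank K (rad (act x.1) l) ≤ Module.finrank K (rad (act y.1) l))
    (h2 : ∀ l, l ≤ L → Module.finrank K (soc (act y.1) l) ≤ Module.finrank K (soc (act x.1) l)) :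
    Good S y := by
  have hs : ∀ l, l ≤ L → Module.finrank K (soc (act y.1) l) ≤ T S (L - l) :=
    fun l hl => (h2 l hl).trans (hx.2 l hl)
  refine ⟨(mem_LocRepS y).2 fun l hl => ?_, hs⟩
  have h3 := h1 l hl
  rw [(mem_LocRepS x).1 hx.1 l hl] at h3
  refine le_antisymm ?_ h3
  by_cases hlL : l ≤ L
  · have h4 := rad_le_soc_dim y (L - l) (by omega)
    have h5 := hs (L - l) (by omega)
    rw [show L - (L - l) = l by omega] at h4 h5
    omega
  · rw [show l = L + 1 by omega, (mem_trunc y.1).1 y.2, finrank_bot]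
    exact Nat.zero_le _

theorem S_unique {S' : Fin (L+1) → ℕ} {y : LocV K r L d} (h : y ∈ LocRepS K r L d S)
    (h' : y ∈ LocRepS K r L d S') : S = S' := by
  rw [mem_LocRepS] at h h'
  exact T_inj fun l hl => (h l hl).symm.trans (h' l hl)

theorem good_closure {S' : Fin (L+1) → ℕ} {x : LocV K r L d} (hx : Good S x)
    (h : x ∈ closure (LocRepS K r L d S')) : S = S' := by
  obtain ⟨y, hy, h1, h2⟩ := closure_nbhd h
  exact S_unique (squeeze hx h1 fun l hl => h2 l (by omega)).1 hy

theorem exists_good (hr : 2 ≤ r) (hS : ∑ l, S l = d) (h2 : Cond2 r L S) :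
    ∃ x : LocV K r L d, Good S x := by
  obtain ⟨e⟩ := exists_e (r := r) hS
  obtain ⟨p, hp, hp2⟩ := model_mem (K := K) hr (fun l => (h2 l).1) e
  refine ⟨⟨phi0 e p, (mem_trunc _).2 (phi0_trunc e p)⟩, ?_, ?_⟩
  · rw [mem_LocRepS]
    exact fun l _ => le_antisymm (phi0_rad_le' e hS p l) (hp l)
  · exact fun l _ => hp2 (fun l => (h2 l).2) l

theorem soc_eq_of_good {x : LocV K r L d} (hx : Good S x) :
    socLayering (loopQuiver r) (fun _ => d) K L x.1 = fun l _ => S l.rev := by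
  have h : ∀ l, l ≤ L → Module.finrank K (soc (act x.1) l) = T S (L - l) := by
    intro l hl
    refine le_antisymm (hx.2 l hl) ?_
    have := rad_le_soc_dim x l hl
    rwa [(mem_LocRepS x).1 hx.1 _ (by omega)] at this
  funext l i
  have h1 := T_succ S l.rev
  rw [socLayering, vdim_eq, socPow_eq, h l (by omega)]
  have h3 : ((l.rev : Fin (L+1)) : ℕ) = L - l := by rw [Fin.val_rev]; omega
  rw [h3] at h1
  by_cases h0 : (l : ℕ) = 0
  · rw [if_pos h0, h1, h0]
    rw [T_top S (l := L - 0 + 1) (by omega)]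
    simp
  · rw [if_neg h0, vdim_eq, socPow_eq, h (l - 1) (by omega), h1,
      show L - ((l : ℕ) - 1) = L - l + 1 by omega]
    omega

theorem cond3_iff : Cond3 K r L d S ↔ ∃ x : LocV K r L d, Good S x := by
  constructor
  · rintro ⟨-, -, x, ⟨hx1, hx2⟩, hx3⟩
    refine ⟨⟨x, hx1⟩, hx2, ?_⟩
    intro l hl
    have := soc_sum (L := L) x ⟨l, by omega⟩ (0 : Fin 1)
    rw [hx3] at this
    rw [T_partial_rev S] at this
    exact this.ge
  · rintro ⟨x, hx⟩
    refine ⟨⟨x, hx.1⟩, ?_, x.1, ⟨x.2, hx.1⟩, soc_eq_of_good hx⟩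
    rintro y ⟨hy1, hy2⟩ l i
    rw [soc_sum, T_partial_rev S]
    have := rad_le_soc_dim ⟨y, hy1⟩ l (by omega)
    rwa [(mem_LocRepS ⟨y, hy1⟩).1 hy2 _ (by omega)] at this

theorem dom_rad {x y : LocV K r L d}
    (h : dominates (radLayering (loopQuiver r) (fun _ => d) K L y.1)
        (radLayering (loopQuiver r) (fun _ => d) K L x.1)) (l : ℕ) (hl : l ≤ L + 1) :
    Module.finrank K (rad (act x.1) l) ≤ Module.finrank K (rad (act y.1) l) := by
  cases l with
  | zero => rw [rad, rad]
  | succ l =>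
    have h1 := h ⟨l, by omega⟩ (0 : Fin 1)
    have h2 := rad_sum x.1 ((mem_trunc x.1).1 x.2) ⟨l, by omega⟩ (0 : Fin 1)
    have h3 := rad_sum y.1 ((mem_trunc y.1).1 y.2) ⟨l, by omega⟩ (0 : Fin 1)
    simp only at h2 h3
    omega

theorem dom_rad' {x y : LocV K r L d}
    (h : ∀ l, l ≤ L + 1 → Module.finrank K (rad (act x.1) l) ≤ Module.finrank K (rad (act y.1) l)) :
    dominates (radLayering (loopQuiver r) (fun _ => d) K L y.1)
        (radLayering (loopQuiver r) (fun _ => d) K L x.1) := by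
  intro l i
  have h1 := h (l+1) (by omega)
  have h2 := rad_sum x.1 ((mem_trunc x.1).1 x.2) l i
  have h3 := rad_sum y.1 ((mem_trunc y.1).1 y.2) l i
  omega

theorem dom_soc {x y : LocV K r L d}
    (h : dominates (socLayering (loopQuiver r) (fun _ => d) K L y.1)
        (socLayering (loopQuiver r) (fun _ => d) K L x.1)) (l : ℕ) (hl : l ≤ L) :
    Module.finrank K (soc (act y.1) l) ≤ Module.finrank K (soc (act x.1) l) := by
  have h1 := h ⟨l, by omega⟩ (0 : Fin 1)
  exact (soc_sum y.1 ⟨l, by omega⟩ _).ge.trans (h1.trans (soc_sum x.1 ⟨l, by omega⟩ _).le)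

theorem dom_soc' {x y : LocV K r L d}
    (h : ∀ l, l ≤ L + 1 → Module.finrank K (soc (act y.1) l) ≤ Module.finrank K (soc (act x.1) l)) :
    dominates (socLayering (loopQuiver r) (fun _ => d) K L y.1)
        (socLayering (loopQuiver r) (fun _ => d) K L x.1) := by
  intro l i
  rw [soc_sum, soc_sum]
  exact h l (by omega)

theorem cond4_of_good {x : LocV K r L d} (hx : Good S x) : Cond4 K r L d S := by
  refine ⟨x, hx.1, fun y h1 h2 => ?_⟩
  have hy := squeeze hx (dom_rad h1) (dom_soc h2)
  exact ⟨(hy.1 : radLayering _ _ _ _ _ = _).trans (hx.1 : radLayering _ _ _ _ _ = _).symm,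
    (soc_eq_of_good hy).trans (soc_eq_of_good hx).symm⟩

theorem cond2_of_cond4 [Infinite K] (hr : 2 ≤ r) (hd : L + 1 < d) (h : Cond4 K r L d S) :
    Cond2 r L S := by
  obtain ⟨x, hx, hmin⟩ := h
  obtain ⟨S0, -, hc, hx0⟩ := exists_S hr hd x
  obtain ⟨y, hy, h1, h2⟩ := closure_nbhd hx0
  have h3 := (hmin y (dom_rad' h1) (dom_soc' h2)).1
  have h4 : y ∈ LocRepS K r L d S := h3.trans hx
  rw [S_unique h4 hy]
  exact hc

theorem cond2_of_good [Infinite K] (hr : 2 ≤ r) (hd : L + 1 < d) {x : LocV K r L d}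
    (hx : Good S x) : Cond2 r L S := by
  obtain ⟨S0, -, hc, hx0⟩ := exists_S hr hd x
  rw [good_closure hx hx0]
  exact hc

theorem irr_sub [Infinite K] (hr : 2 ≤ r) (hd : L + 1 < d) {t : Set (LocV K r L d)}
    (ht : IsIrreducible t) :
    ∃ S : Fin (L+1) → ℕ, ∑ l, S l = d ∧ Cond2 r L S ∧ t ⊆ closure (LocRepS K r L d S) := by
  classical
  let I : Finset (Fin (L+1) → ℕ) :=
    (Fintype.piFinset fun _ => Finset.range (d+1)).filter fun S => ∑ l, S l = d ∧ Cond2 r L S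
  obtain ⟨z, hz, hz2⟩ := isIrreducible_iff_sUnion_isClosed.1 ht
    (I.image fun S => closure (LocRepS K r L d S)) (by
      intro z hz
      obtain ⟨S, -, rfl⟩ := Finset.mem_image.1 hz
      exact isClosed_closure) (by
      intro x _
      obtain ⟨S, h1, h2, h3⟩ := exists_S hr hd x
      refine ⟨_, Finset.mem_coe.2 (Finset.mem_image.2 ⟨S, ?_, rfl⟩), h3⟩
      refine Finset.mem_filter.2 ⟨Fintype.mem_piFinset.2 fun l => ?_, h1, h2⟩
      rw [Finset.mem_range, Nat.lt_succ_iff, ← h1]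
      exact Finset.single_le_sum (f := S) (fun _ _ => Nat.zero_le _) (Finset.mem_univ l))
  obtain ⟨S, hS, rfl⟩ := Finset.mem_image.1 hz
  obtain ⟨-, h1, h2⟩ := Finset.mem_filter.1 hS
  exact ⟨S, h1, h2, hz2⟩

theorem comp_iff [Infinite K] (hr : 2 ≤ r) (hd : L + 1 < d) (C : Set (LocV K r L d)) :
    C ∈ irreducibleComponents (LocV K r L d) ↔
        ∃ S : Fin (L+1) → ℕ, (∑ l, S l) = d ∧ Cond2 r L S ∧
          C = closure (LocRepS K r L d S) := by
  have hirr : ∀ S : Fin (L+1) → ℕ, (∑ l, S l) = d → Cond2 r L S →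
      IsIrreducible (closure (LocRepS K r L d S)) := fun S h1 h2 =>
    (stratum hr h1 fun l => (h2 l).1).1.closure
  constructor
  · intro hC
    obtain ⟨S, h1, h2, h3⟩ := irr_sub hr hd hC.1
    exact ⟨S, h1, h2, h3.antisymm (hC.2 (hirr S h1 h2) h3)⟩
  · rintro ⟨S, h1, h2, rfl⟩
    refine ⟨hirr S h1 h2, fun t ht hle => ?_⟩
    obtain ⟨S', h1', h2', h3'⟩ := irr_sub hr hd ht
    obtain ⟨x, hx⟩ := exists_good (K := K) hr h1 h2
    rw [good_closure hx (h3' (hle (subset_closure hx.1)))]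
    exact h3'

theorem comp_closure_iff [Infinite K] (hr : 2 ≤ r) (hd : L + 1 < d) (hS : ∑ l, S l = d) :
    closure (LocRepS K r L d S) ∈ irreducibleComponents (LocV K r L d) ↔ Cond2 r L S := by
  rw [comp_iff hr hd]
  constructor
  · rintro ⟨S0, h1, h2, h3⟩
    obtain ⟨x, hx⟩ := exists_good (K := K) hr h1 h2
    have hx' : x ∈ closure (LocRepS K r L d S) := h3 ▸ subset_closure hx.1
    rw [← good_closure hx hx']
    exact h2
  · intro h
    exact ⟨S, hS, h, rfl⟩

/-- The uniserial sequence. -/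
def S1 (L d : ℕ) : Fin (L+1) → ℕ := fun l => if (l : ℕ) < d then 1 else 0

theorem T_S1 (hd : d ≤ L + 1) (l : ℕ) (hl : l ≤ L + 1) : d - l = T (S1 L d) l := by
  refine T_eq (g := fun l => d - l) ?_ ?_ l hl
  · show d - (L+1) = 0
    omega
  · intro l
    simp only [S1]
    split_ifs <;> omega

theorem part2_closure [Infinite K] (hr : 2 ≤ r) (hd : d ≤ L + 1) (x : LocV K r L d) :
    x ∈ closure (LocRepS K r L d (S1 L d)) := by
  obtain ⟨F, hF, hR, h0, h2⟩ := exists_terminal hr ((mem_trunc x.1).1 x.2)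
  have h1 : ∀ j, j ≤ L → lay F j ≤ 1 := by
    by_cases hz : lay F L = 0
    · exact fun j _ => h0 hz j
    · intro j hj
      by_contra hc
      have hs := fil_sum hF
      have : ∑ j : Fin (L+1), 1 < ∑ j : Fin (L+1), lay F j :=
        Finset.sum_lt_sum (fun j _ => pos_down hR (Nat.pos_of_ne_zero hz) j (Nat.lt_succ_iff.1 j.2))
          ⟨⟨j, by omega⟩, Finset.mem_univ _, by simpa using hc⟩
      simp at this
      omega
  have hdim : ∀ l, l ≤ L + 1 → Module.finrank K (F l) = d - l := by
    intro l hl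
    induction l with
    | zero => rw [hF.top, finrank_top, ix_finrank]; rfl
    | succ l ih =>
      have h3 := ih (by omega)
      have h4 := h1 l (by omega)
      have h5 := lay_add (hF.anti l)
      have h6 := pos_lay hR hF.anti hF.bot l
      omega
  have hsum : ∑ l, S1 L d l = d := by
    rw [← T_zero, ← T_S1 hd 0 (by omega)]; rfl
  refine (stratum hr hsum ?_).2 x F hF fun l hl => (hdim l hl).trans (T_S1 hd l hl)
  intro l
  simp only [S1, Fin.val_succ, Fin.val_castSucc]
  split_ifs <;> omega

theorem part2 [Infinite K] (hr : 2 ≤ r) (hd : d ≤ L + 1) :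
    IsIrreducible (Set.univ : Set (LocV K r L d)) ∧
      ∃ U : Set (LocV K r L d), IsOpen U ∧ Dense U ∧
        ∀ x ∈ U, UniserialRep (loopQuiver r) (fun _ => d) K x.1 := by
  have hcl : closure (LocRepS K r L d (S1 L d)) = Set.univ :=
    Set.eq_univ_of_forall (part2_closure hr hd)
  have hsum : ∑ l, S1 L d l = d := by
    rw [← T_zero, ← T_S1 hd 0 (by omega)]; rfl
  refine ⟨?_, ⋂ l ∈ Finset.range (L+2),
      {x : LocV K r L d | d - l ≤ Module.finrank K (rad (act x.1) l)}, ?_, ?_, ?_⟩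
  · rw [← hcl]
    refine (stratum hr hsum ?_).1.closure
    intro l
    simp only [S1, Fin.val_succ, Fin.val_castSucc]
    split_ifs <;> omega
  · exact isOpen_biInter_finset fun l _ => rad_open l _
  · have : Dense (LocRepS K r L d (S1 L d)) := dense_iff_closure_eq.2 hcl
    refine this.mono ?_
    intro x hx
    rw [mem_LocRepS] at hx
    simp only [Set.mem_iInter, Finset.mem_range, Set.mem_ofPred_eq]
    intro l hl
    rw [hx l (by omega), T_S1 hd l (by omega)]
  · intro x hx
    simp only [Set.mem_iInter, Finset.mem_range, Set.mem_ofPred_eq] at hx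
    have hbot := (mem_trunc x.1).1 x.2
    have hle : ∀ l, Module.finrank K (rad (act x.1) l) ≤ d - l := by
      intro l
      induction l with
      | zero => rw [rad, finrank_top, ix_finrank]; rfl
      | succ l ih =>
        have h5 := lay_add (rad_anti (act x.1) l)
        have h6 := pos_lay (rad_real (act x.1)) (rad_anti (act x.1)) hbot l
        omega
    have hlay : ∀ l, lay (rad (act x.1)) l ≤ 1 := by
      intro l
      have h1 := hle l
      have h5 := lay_add (rad_anti (act x.1) l)
      by_cases hl : l < L + 1
      · have h2 := hx (l+1) (by omega)
        omega
      · omega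
    intro N₁ N₂ h₁ h₂
    obtain ⟨l₁, rfl⟩ := uniserial_aux hbot hlay N₁ h₁.1
    obtain ⟨l₂, rfl⟩ := uniserial_aux hbot hlay N₂ h₂.1
    rcases le_total l₁ l₂ with h | h
    · exact Or.inr (rad_antitone _ h)
    · exact Or.inl (rad_antitone _ h)

end Final

end Loc14

open QuiverData Stmt14 in
/-- Let `Λ` be the local truncated path algebra on `r ≥ 2` loops with
`J^{L+1} = 0`, and `d` a positive integer. (I) If `d > L+1`, then for every
`d`-dimensional semisimple sequence `S`, conditions (1) (the closure of `Rep S` is an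
irreducible component of `Rep_d(Λ)`), (2), (3), (4) are equivalent, and the irreducible
components of `Rep_d(Λ)` are precisely the closures of the `Rep S` with `S` satisfying
(2). (II) If `d ≤ L+1`, then `Rep_d(Λ)` is irreducible and its modules are generically
uniserial. -/
theorem statement_14 (K : Type) [Field K] [IsAlgClosed K] (r L d : ℕ)
    (hr : 2 ≤ r) (hL : 0 < L) :
    (L + 1 < d →
      (∀ S : Fin (L+1) → ℕ, (∑ l, S l) = d →
        ((closure (LocRepS K r L d S) ∈ irreducibleComponents (LocV K r L d))
            ↔ Cond2 r L S) ∧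
        (Cond2 r L S ↔ Cond3 K r L d S) ∧
        (Cond3 K r L d S ↔ Cond4 K r L d S)) ∧
      (∀ C : Set (LocV K r L d), C ∈ irreducibleComponents (LocV K r L d) ↔
        ∃ S : Fin (L+1) → ℕ, (∑ l, S l) = d ∧ Cond2 r L S ∧
          C = closure (LocRepS K r L d S))) ∧
    (d ≤ L + 1 →
      IsIrreducible (Set.univ : Set (LocV K r L d)) ∧
      ∃ U : Set (LocV K r L d), IsOpen U ∧ Dense U ∧
        ∀ x ∈ U, UniserialRep (loopQuiver r) (fun _ => d) K x.1) := by
  have : Infinite K := IsAlgClosed.instInfinite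
  refine ⟨fun hd => ⟨fun S hS => ⟨Loc14.comp_closure_iff hr hd hS, ?_, ?_⟩,
    fun C => Loc14.comp_iff hr hd C⟩, fun hd => Loc14.part2 hr hd⟩
  · rw [Loc14.cond3_iff]
    exact ⟨Loc14.exists_good hr hS, fun ⟨x, hx⟩ => Loc14.cond2_of_good hr hd hx⟩
  · constructor
    · intro h
      obtain ⟨x, hx⟩ := Loc14.cond3_iff.1 h
      exact Loc14.cond4_of_good hx
    · intro h
      exact Loc14.cond3_iff.2 (Loc14.exists_good hr hS (Loc14.cond2_of_cond4 hr hd h))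
end
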